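/- arXiv:1201.5403 — 3 statements merged into one kernel-verified Lean document; each statement's English description precedes it below -/
import Mathlib

section
/- Let 0 < α < 1 and 1 < p < ∞ satisfy αp > 1. There exist δ > 0 and C > 0, depending only on α and p, with the following property: for every Lipschitz function A : ℝ → ℝ with compact support whose Lipschitz constant is at most δ, letting Ω = {z ∈ ℂ : Im z > A(Re z)} and F(w) = (1/π) ∫_ℝ A'(x)/((x + i·A(x) − w)²) dx, and for every function g : ℂ → ℂ that is complex-differentiable at every point w ∈ Ω with derivative g'(w) = F(w) (such as g = B(χ_Ω)), one has ∬_{ℝ×ℝ} |A'(x) − A'(y)|^p / |x − y|^{αp} dx dy ≤ C ∬_{Ω×Ω} |g(z) − g(w)|^p / |z − w|^{2 + αp} dm(z) dm(w). -/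
/-!
The Besov seminorm of `A'` is compared with the interior seminorm of `g` through the potentials
`J_n(w) = ∫ A(y) / (y - w) ^ n dy` of `A` on the upper half-plane (`pot A n`), and more precisely
through `f(x, t) = t ‖J_3(x + it)‖` (`potSize A`). Write `μ = t ^ (-αp) dx dt` (`halfMeasure`) and
`K` for the Lipschitz constant of `A`.

*Trace.* Where `A` is differentiable, `π A'` is the boundary value of `Im J_2`
(`tendsto_im_pot_two`), and `J_2' = 2 J_3`. The segments of slope `1` and `-1` issuing from the
boundary points `x` and `x + h` meet at height `h / 2`, so `A'(x) - A'(x + h)` is bounded by an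
integral of `f / l` along them. Minkowski's inequality and the invariances of `μ` then bound the
seminorm of `A'` by `∫ f ^ p dμ` (`lintegral_deriv_sub_le`, `seminorm_le_two_mul`); this uses
`αp > 1`.

*Comparison with `F`.* Fix `b = x₀ + it`. Taylor's formula for `J_1` at `b` gives an affine function
of `x` approximating `A`; let `r` be the remainder. Affine functions are annihilated by the third
potential, so `J_3(b) = ∫ r(x) / (x - b) ^ 3 dx`. On the other side, integrating by parts along the
graph turns `F`, at the point at height `t` above the graph over `x₀`, into the analogous integral
of `r` against the kernel of the graph (`integral_by_parts`). The two kernels differ by a factor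
`O(K)` (`norm_kernel_sub_le`), and `r` is itself an integral of `f` along segments
(`enorm_remainder_le`). Hence `f ≤ 4 t |F| + O(K) S f` for a positive operator `S` which commutes
with translations and dilations (`potSize_le`). It is bounded on `L^p(μ)`, so for small `K` the last
term is a contraction (`exists_smoothing_contraction`). As `f` is bounded, iterating the inequality
absorbs this term without knowing beforehand that `∫ f ^ p dμ` is finite
(`lintegral_rpow_le_of_le_add_smoothing`).

*Interior.* Since `g' = F`, Cauchy's formula on the circles about a point of the domain bounds
`|F|` by circular means of the increments of `g`. Integrating over the radii less than half the
height above the graph, and then over the domain, bounds `∫ (t |F|) ^ p dμ` by the interior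
seminorm (`disc_lower_bound`, `lintegral_derSize_le`); this uses `α < 1`.
-/

open MeasureTheory

namespace BesovTrace
open Set Filter Topology

/-! ### Weighted integrals on the half-plane and absorption of a contraction -/

/-- Minkowski's integral inequality: a weight `W` bounding the `L^p` norms of the slices `f · y`
up to the factor `N ^ (1 / p)` integrates to a bound for the norm of `∫ f · y dy`. -/
theorem lintegral_rpow_lintegral_le {X Y : Type*} [MeasurableSpace X] [MeasurableSpace Y]
    (μ : Measure X) (ν : Measure Y) [SFinite μ] [SFinite ν] {p : ℝ} (hp : 1 < p)
    (f : X → Y → ENNReal) (hf : Measurable (Function.uncurry f))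
    (W : Y → ENNReal) (hWm : Measurable W) (hW : ∀ᵐ y ∂ν, W y ≠ 0 ∧ W y ≠ ⊤)
    (N : ENNReal) (h : ∀ᵐ y ∂ν, ∫⁻ x, f x y ^ p ∂μ ≤ W y ^ p * N) :
    ∫⁻ x, (∫⁻ y, f x y ∂ν) ^ p ∂μ ≤ (∫⁻ y, W y ∂ν) ^ p * N := by
  have hp0 : 0 < p := by linarith
  have hfx : ∀ x, Measurable (f x) := fun x => hf.comp measurable_prodMk_left
  have key : ∀ x, (∫⁻ y, f x y ∂ν) ^ p ≤
      (∫⁻ y, W y ∂ν) ^ (p - 1) * ∫⁻ y, f x y ^ p * W y ^ (1 - p) ∂ν := by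
    intro x
    have h1 : ∫⁻ y, f x y ∂ν ≤ (∫⁻ y, f x y ^ p * W y ^ (1 - p) ∂ν) ^ (1 / p) *
        (∫⁻ y, W y ∂ν) ^ (1 - 1 / p) := by
      refine le_trans (le_of_eq ?_) (ENNReal.lintegral_mul_norm_pow_le (p := 1 / p)
        (q := 1 - 1 / p) ?_ hWm.aemeasurable (by positivity) ?_ (by ring))
      · refine lintegral_congr_ae ?_
        filter_upwards [hW] with y hy
        rw [ENNReal.mul_rpow_of_nonneg _ _ (by positivity), ← ENNReal.rpow_mul, ← ENNReal.rpow_mul,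
          mul_assoc, ← ENNReal.rpow_add _ _ hy.1 hy.2]
        have e1 : p * (1 / p) = 1 := by field_simp
        have e2 : (1 - p) * (1 / p) + (1 - 1 / p) = 0 := by field_simp; ring
        rw [e1, e2]; simp
      · exact (((hfx x).pow_const p).mul (hWm.pow_const _)).aemeasurable
      · rw [sub_nonneg, div_le_one hp0]; exact hp.le
    calc (∫⁻ y, f x y ∂ν) ^ p ≤ _ := ENNReal.rpow_le_rpow h1 hp0.le
      _ = _ := by
        rw [ENNReal.mul_rpow_of_nonneg _ _ hp0.le, ← ENNReal.rpow_mul, ← ENNReal.rpow_mul]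
        have e1 : 1 / p * p = 1 := by field_simp
        have e2 : (1 - 1 / p) * p = p - 1 := by field_simp
        rw [e1, e2, ENNReal.rpow_one, mul_comm]
  have hm : Measurable (Function.uncurry fun x y => f x y ^ p * W y ^ (1 - p)) :=
    (hf.pow_const p).mul ((hWm.comp measurable_snd).pow_const _)
  calc ∫⁻ x, (∫⁻ y, f x y ∂ν) ^ p ∂μ
      ≤ ∫⁻ x, (∫⁻ y, W y ∂ν) ^ (p - 1) * ∫⁻ y, f x y ^ p * W y ^ (1 - p) ∂ν ∂μ :=
        lintegral_mono key
    _ = (∫⁻ y, W y ∂ν) ^ (p - 1) * ∫⁻ y, ∫⁻ x, f x y ^ p * W y ^ (1 - p) ∂μ ∂ν := by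
        have hm' : Measurable fun x => ∫⁻ y, f x y ^ p * W y ^ (1 - p) ∂ν :=
          hm.lintegral_prod_right'
        rw [lintegral_const_mul _ hm', lintegral_lintegral_swap hm.aemeasurable]
    _ ≤ (∫⁻ y, W y ∂ν) ^ (p - 1) * ∫⁻ y, W y * N ∂ν := by
        refine mul_le_mul_right ?_ _
        refine lintegral_mono_ae ?_
        filter_upwards [hW, h] with y hy hy2
        have hfy : Measurable fun x => f x y ^ p := (hf.comp measurable_prodMk_right).pow_const p
        rw [lintegral_mul_const _ hfy]
        calc _ ≤ W y ^ p * N * W y ^ (1 - p) := by gcongr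
          _ = W y ^ p * W y ^ (1 - p) * N := by ring
          _ = _ := by rw [← ENNReal.rpow_add _ _ hy.1 hy.2]; simp
    _ = _ := by
        rw [lintegral_mul_const _ hWm, ← mul_assoc]
        congr 1
        nth_rewrite 2 [← ENNReal.rpow_one (∫⁻ y, W y ∂ν)]
        rw [← ENNReal.rpow_add_of_nonneg _ _ (by linarith) zero_le_one]
        simp

theorem lintegral_comp_pos_mul (f : ℝ → ENNReal) (hf : Measurable f) {a : ℝ} (ha : 0 < a) :
    ∫⁻ x, f (x * a) = ENNReal.ofReal a⁻¹ * ∫⁻ x, f x := by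
  have h := Real.map_volume_mul_right ha.ne'
  have h2 : ∫⁻ x, f x ∂(Measure.map (fun x => x * a) volume) = ∫⁻ x, f (x * a) :=
    lintegral_map hf (measurable_mul_const a)
  rw [← h2, h, lintegral_smul_measure, abs_of_pos (inv_pos.2 ha), smul_eq_mul]

/-- The measure `t ^ (-β) dx dt` on the upper half-plane, in the coordinates `(x, t)`. -/
noncomputable def halfMeasure (β : ℝ) : Measure (ℝ × ℝ) :=
  volume.prod ((volume.restrict (Ioi 0)).withDensity fun t => ENNReal.ofReal (t ^ (-β)))

instance (β : ℝ) : SFinite (halfMeasure β) := by unfold halfMeasure; infer_instance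

theorem measurable_ofReal_rpow (β : ℝ) : Measurable fun t : ℝ => ENNReal.ofReal (t ^ β) := by
  fun_prop

theorem lintegral_halfMeasure (β : ℝ) (f : ℝ × ℝ → ENNReal) (hf : Measurable f) :
    ∫⁻ q, f q ∂(halfMeasure β) =
      ∫⁻ t in Ioi 0, ENNReal.ofReal (t ^ (-β)) * ∫⁻ x, f (x, t) := by
  rw [halfMeasure, lintegral_prod_symm _ hf.aemeasurable,
    lintegral_withDensity_eq_lintegral_mul _ (measurable_ofReal_rpow _)]
  · rfl
  · exact (hf.comp measurable_swap).lintegral_prod_right'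

/-- `halfMeasure β` is invariant under shears along the boundary, and homogeneous under dilations in
the height. -/
theorem lintegral_halfMeasure_scale (β : ℝ) (f : ℝ × ℝ → ENNReal) (hf : Measurable f) (σ : ℝ)
    {a : ℝ} (ha : 0 < a) :
    ∫⁻ q, f (q.1 + q.2 * σ, q.2 * a) ∂(halfMeasure β) =
      ENNReal.ofReal (a ^ (β - 1)) * ∫⁻ q, f q ∂(halfMeasure β) := by
  have hm : Measurable fun t : ℝ => ∫⁻ x, f (x, t) :=
    (hf.comp measurable_swap).lintegral_prod_right'
  rw [lintegral_halfMeasure _ (fun q : ℝ × ℝ => f (q.1 + q.2 * σ, q.2 * a)) (by fun_prop),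
    lintegral_halfMeasure _ _ hf]
  simp only
  have h1 : ∀ t : ℝ, ∫⁻ x, f (x + t * σ, t * a) = ∫⁻ x, f (x, t * a) := fun t =>
    lintegral_add_right_eq_self (fun x => f (x, t * a)) (t * σ)
  simp_rw [h1]
  rw [← lintegral_indicator measurableSet_Ioi, ← lintegral_indicator measurableSet_Ioi]
  set G : ℝ → ENNReal := (Ioi 0).indicator fun t => ENNReal.ofReal (t ^ (-β)) * ∫⁻ x, f (x, t)
    with hG
  have hGm : Measurable G := ((measurable_ofReal_rpow _).mul hm).indicator measurableSet_Ioi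
  have h2 := lintegral_comp_pos_mul G hGm ha
  have h3 : ∀ t, (Ioi 0).indicator (fun t => ENNReal.ofReal (t ^ (-β)) * ∫⁻ x, f (x, t * a)) t
      = ENNReal.ofReal (a ^ β) * G (t * a) := by
    intro t
    by_cases ht : 0 < t
    · rw [hG, indicator_of_mem (show t ∈ Ioi 0 from ht),
        indicator_of_mem (show t * a ∈ Ioi 0 from mul_pos ht ha), ← mul_assoc,
        ← ENNReal.ofReal_mul (by positivity), Real.mul_rpow ht.le ha.le]
      congr 2
      rw [mul_comm (t ^ (-β)), ← mul_assoc, ← Real.rpow_add ha]; simp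
    · rw [hG, indicator_of_notMem (show t ∉ Ioi 0 from ht), indicator_of_notMem, mul_zero]
      intro h; exact ht (pos_of_mul_pos_left h ha.le)
  simp_rw [h3]
  have hGm' : Measurable fun t => G (t * a) := hGm.comp (measurable_mul_const a)
  rw [lintegral_const_mul _ hGm', h2, ← mul_assoc,
    ← ENNReal.ofReal_mul (by positivity), Real.rpow_sub_one ha.ne', div_eq_mul_inv]

/-- If `f ≤ Φ + K f` for a positive operator `K` which is a contraction both on `L^p` and on
constants, the term `K f` can be absorbed. Boundedness of `f` replaces the finiteness of its `L^p`
norm: it is propagated through the iterates `S (n + 1) = Φ + K (S n)`, which dominate `f` up to an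
error `M / 2 ^ n`. -/
theorem lintegral_rpow_le_of_le_add_smoothing {X : Type*} [MeasurableSpace X] (μ : Measure X)
    {p : ℝ} (hp : 1 < p) (K : (X → ENNReal) → X → ENNReal)
    (hKm : ∀ g, Measurable g → Measurable (K g))
    (hKmono : ∀ g g', g ≤ g' → K g ≤ K g')
    (hKadd : ∀ g c, Measurable g → ∀ x, K (fun x => g x + c) x ≤ K g x + c / 2)
    (hKp : ∀ g, Measurable g → 2 ^ (p - 1) * ∫⁻ x, K g x ^ p ∂μ ≤ (∫⁻ x, g x ^ p ∂μ) / 2)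
    (f Φ : X → ENNReal) (hΦ : Measurable Φ) (M : ENNReal)
    (hM : M ≠ ⊤) (hfM : ∀ x, f x ≤ M) (hle : ∀ x, f x ≤ Φ x + K f x) :
    ∫⁻ x, f x ^ p ∂μ ≤ 2 ^ p * ∫⁻ x, Φ x ^ p ∂μ := by
  let S : ℕ → X → ENNReal := fun n => Nat.rec (fun _ => 0) (fun _ g x => Φ x + K g x) n
  have hS : ∀ n x, S (n + 1) x = Φ x + K (S n) x := fun n x => rfl
  have hSm : ∀ n, Measurable (S n) := by
    intro n
    induction n with
    | zero => exact measurable_const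
    | succ n ih => exact hΦ.add (hKm _ ih)
  have hfS : ∀ n x, f x ≤ S n x + M / 2 ^ n := by
    intro n
    induction n with
    | zero => intro x; simpa [S] using hfM x
    | succ n ih =>
      intro x
      calc f x ≤ Φ x + K f x := hle x
        _ ≤ Φ x + K (fun x => S n x + M / 2 ^ n) x := by gcongr; exact hKmono _ _ ih x
        _ ≤ Φ x + (K (S n) x + M / 2 ^ n / 2) := by gcongr; exact hKadd _ _ (hSm n) x
        _ = _ := by
          rw [hS, add_assoc, pow_succ]
          congr 2
          rw [ENNReal.div_eq_inv_mul, ENNReal.div_eq_inv_mul, ENNReal.div_eq_inv_mul,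
            ENNReal.mul_inv (by simp) (by simp)]
          ring
  have hSp : ∀ n, ∫⁻ x, S n x ^ p ∂μ ≤ 2 ^ p * ∫⁻ x, Φ x ^ p ∂μ := by
    intro n
    induction n with
    | zero => simp [S, ENNReal.zero_rpow_of_pos (show 0 < p by linarith)]
    | succ n ih =>
      calc ∫⁻ x, S (n + 1) x ^ p ∂μ
          ≤ ∫⁻ x, (2 ^ (p - 1) * Φ x ^ p + 2 ^ (p - 1) * K (S n) x ^ p) ∂μ := by
            refine lintegral_mono fun x => ?_
            rw [hS, ← mul_add]
            exact ENNReal.rpow_add_le_mul_rpow_add_rpow _ _ hp.le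
        _ = 2 ^ (p - 1) * ∫⁻ x, Φ x ^ p ∂μ + 2 ^ (p - 1) * ∫⁻ x, K (S n) x ^ p ∂μ := by
            rw [lintegral_add_left ((hΦ.pow_const p).const_mul _),
              lintegral_const_mul _ (hΦ.pow_const p),
              lintegral_const_mul _ ((hKm _ (hSm n)).pow_const p)]
        _ ≤ 2 ^ (p - 1) * ∫⁻ x, Φ x ^ p ∂μ + (2 ^ p * ∫⁻ x, Φ x ^ p ∂μ) / 2 := by
            gcongr
            exact (hKp _ (hSm n)).trans (by gcongr)
        _ = _ := by
            have e : (2 : ENNReal) ^ p = 2 ^ (p - 1) * 2 := by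
              nth_rewrite 3 [← ENNReal.rpow_one 2]
              rw [← ENNReal.rpow_add _ _ (by simp) (by simp)]; simp
            rw [e, mul_right_comm, ENNReal.mul_div_cancel_right (by simp) (by simp)]
            ring
  -- Fatou's lemma along the iterates
  calc ∫⁻ x, f x ^ p ∂μ ≤ ∫⁻ x, liminf (fun n => S n x ^ p) atTop ∂μ := by
        refine lintegral_mono fun x => ?_
        have ht : Tendsto (fun n : ℕ => M / 2 ^ n) atTop (𝓝 0) := by
          have := ENNReal.Tendsto.const_mul (a := M) (ENNReal.tendsto_pow_atTop_nhds_zero_of_lt_one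
            (r := 2⁻¹) (by simp)) (Or.inr hM)
          simpa [ENNReal.div_eq_inv_mul, ENNReal.inv_pow, mul_comm] using this
        have ht2 : Tendsto (fun n : ℕ => (f x - M / 2 ^ n) ^ p) atTop (𝓝 (f x ^ p)) := by
          have h1 := ENNReal.Tendsto.sub (tendsto_const_nhds (x := f x)) ht (Or.inr (by simp))
          rw [tsub_zero] at h1
          exact (ENNReal.continuous_rpow_const.tendsto _).comp h1
        rw [← ht2.liminf_eq]
        refine liminf_le_liminf (Eventually.of_forall fun n => ?_)
        exact ENNReal.rpow_le_rpow (tsub_le_iff_right.2 (hfS n x)) (by linarith)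
    _ ≤ liminf (fun n => ∫⁻ x, S n x ^ p ∂μ) atTop :=
        lintegral_liminf_le fun n => (hSm n).pow_const p
    _ ≤ _ := by
        refine (liminf_le_liminf (Eventually.of_forall hSp)).trans ?_
        simp

/-! ### The positive integral operator -/

/-- Lebesgue measure on `ℝ × (0, 1)`. -/
noncomputable def stripMeasure : Measure (ℝ × ℝ) := volume.prod (volume.restrict (Ioo 0 1))

instance : SFinite stripMeasure := by unfold stripMeasure; infer_instance

/-- The kernel `(1 + |y|) ^ (η - 2) * l ^ (η - 1)`, at `v = (y, l)`. -/
noncomputable def stripKernel (η : ℝ) (v : ℝ × ℝ) : ENNReal :=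
  ENNReal.ofReal ((1 + |v.1|) ^ (η - 2)) * ENNReal.ofReal (v.2 ^ (η - 1))

/-- The sum of the values of `g` at the two points of the half-plane which the parameter `v`
selects relative to `q = (x, t)`. -/
noncomputable def pathValues (g : ℝ × ℝ → ENNReal) (q v : ℝ × ℝ) : ENNReal :=
  g (q.1, q.2 * (1 + v.2 * |v.1|)) + g (q.1 + q.2 * ((1 - v.2) * v.1), q.2 * ((1 + |v.1|) * v.2))

/-- A positive integral operator on functions on the half-plane, commuting with horizontal
translations and with dilations. -/
noncomputable def smoothing (h : ENNReal) (η : ℝ) (g : ℝ × ℝ → ENNReal) (q : ℝ × ℝ) : ENNReal :=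
  h * ∫⁻ v, stripKernel η v * pathValues g q v ∂stripMeasure

theorem measurable_stripKernel (η : ℝ) : Measurable (stripKernel η) := by
  unfold stripKernel; fun_prop

theorem measurable_pathValues {g : ℝ × ℝ → ENNReal} (hg : Measurable g) :
    Measurable (Function.uncurry (pathValues g)) := by
  unfold pathValues Function.uncurry
  refine Measurable.add (hg.comp ?_) (hg.comp ?_) <;> fun_prop

theorem measurable_kernel_mul (η : ℝ) {g : ℝ × ℝ → ENNReal} (hg : Measurable g) :
    Measurable (Function.uncurry fun q v => stripKernel η v * pathValues g q v) :=
  ((measurable_stripKernel η).comp measurable_snd).mul (measurable_pathValues hg)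

theorem measurable_smoothing (h : ENNReal) (η : ℝ) {g : ℝ × ℝ → ENNReal} (hg : Measurable g) :
    Measurable (smoothing h η g) :=
  (measurable_kernel_mul η hg).lintegral_prod_right'.const_mul h

theorem smoothing_mono (h : ENNReal) (η : ℝ) {g g' : ℝ × ℝ → ENNReal} (hg : g ≤ g') :
    smoothing h η g ≤ smoothing h η g' := by
  intro q
  unfold smoothing pathValues
  gcongr <;> exact hg _

theorem lintegral_stripKernel_lt_top {η s : ℝ} (hη : 0 < η) (hs : η + s < 1) :
    ∫⁻ v, stripKernel η v * ENNReal.ofReal ((1 + |v.1|) ^ s) ∂stripMeasure < ⊤ := by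
  have e : ∀ v : ℝ × ℝ, stripKernel η v * ENNReal.ofReal ((1 + |v.1|) ^ s) =
      ENNReal.ofReal ((1 + ‖v.1‖) ^ (-(2 - η - s))) * ENNReal.ofReal (v.2 ^ (η - 1)) := by
    intro v
    have : 0 < 1 + |v.1| := by positivity
    rw [stripKernel, mul_right_comm, ← ENNReal.ofReal_mul (by positivity), ← Real.rpow_add this,
      Real.norm_eq_abs]
    congr 3; ring
  simp_rw [e]
  rw [stripMeasure, lintegral_prod_mul (f := fun x : ℝ => ENNReal.ofReal ((1 + ‖x‖) ^ (-(2 - η - s))))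
    (g := fun l : ℝ => ENNReal.ofReal (l ^ (η - 1))) (by fun_prop) (by fun_prop)]
  refine ENNReal.mul_lt_top ?_ ?_
  · exact (integrable_one_add_norm (E := ℝ) (μ := volume) (r := 2 - η - s)
      (by simp; linarith)).lintegral_lt_top
  · have : IntegrableOn (fun l : ℝ => l ^ (η - 1)) (Ioo 0 1) :=
      (intervalIntegral.integrableOn_Ioo_rpow_iff zero_lt_one).2 (by linarith)
    exact this.lintegral_lt_top

/-- For a fixed parameter `v`, the operator `g ↦ pathValues g · v` is bounded on the weighted `L^p`
space, with norm independent of `v.2`. -/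
theorem lintegral_pathValues_rpow_le {p β : ℝ} (hp : 1 < p) (hβ : 1 < β)
    {g : ℝ × ℝ → ENNReal} (hg : Measurable g) {v : ℝ × ℝ} (hv : v.2 ∈ Ioo (0 : ℝ) 1) :
    ∫⁻ q, pathValues g q v ^ p ∂(halfMeasure β) ≤
      (2 * ENNReal.ofReal ((1 + |v.1|) ^ ((β - 1) / p))) ^ p * ∫⁻ q, g q ^ p ∂(halfMeasure β) := by
  have hp0 : 0 < p := by linarith
  obtain ⟨hv0, hv1⟩ := hv
  have hy := abs_nonneg v.1
  have hG : Measurable fun q => g q ^ p := hg.pow_const p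
  have h1 : ∫⁻ q : ℝ × ℝ, g (q.1, q.2 * (1 + v.2 * |v.1|)) ^ p ∂(halfMeasure β) ≤
      ENNReal.ofReal ((1 + |v.1|) ^ (β - 1)) * ∫⁻ q, g q ^ p ∂(halfMeasure β) := by
    have := lintegral_halfMeasure_scale β _ hG 0 (a := 1 + v.2 * |v.1|) (by positivity)
    simp only [mul_zero, add_zero] at this
    rw [this]
    gcongr
    nlinarith
  have h2 : ∫⁻ q : ℝ × ℝ, g (q.1 + q.2 * ((1 - v.2) * v.1), q.2 * ((1 + |v.1|) * v.2)) ^ p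
        ∂(halfMeasure β) ≤
      ENNReal.ofReal ((1 + |v.1|) ^ (β - 1)) * ∫⁻ q, g q ^ p ∂(halfMeasure β) := by
    rw [lintegral_halfMeasure_scale β _ hG ((1 - v.2) * v.1) (a := (1 + |v.1|) * v.2)
      (by positivity)]
    gcongr
    nlinarith
  have hm1 : Measurable fun q : ℝ × ℝ => g (q.1, q.2 * (1 + v.2 * |v.1|)) ^ p :=
    hG.comp (by fun_prop)
  have hm2 : Measurable fun q : ℝ × ℝ =>
      g (q.1 + q.2 * ((1 - v.2) * v.1), q.2 * ((1 + |v.1|) * v.2)) ^ p := hG.comp (by fun_prop)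
  have hm12 : Measurable fun q : ℝ × ℝ => g (q.1, q.2 * (1 + v.2 * |v.1|)) ^ p +
      g (q.1 + q.2 * ((1 - v.2) * v.1), q.2 * ((1 + |v.1|) * v.2)) ^ p := hm1.add hm2
  calc ∫⁻ q, pathValues g q v ^ p ∂(halfMeasure β)
      ≤ ∫⁻ q : ℝ × ℝ, 2 ^ (p - 1) * (g (q.1, q.2 * (1 + v.2 * |v.1|)) ^ p +
          g (q.1 + q.2 * ((1 - v.2) * v.1), q.2 * ((1 + |v.1|) * v.2)) ^ p) ∂(halfMeasure β) :=
        lintegral_mono fun q => ENNReal.rpow_add_le_mul_rpow_add_rpow _ _ hp.le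
    _ ≤ 2 ^ (p - 1) * (2 * (ENNReal.ofReal ((1 + |v.1|) ^ (β - 1)) *
          ∫⁻ q, g q ^ p ∂(halfMeasure β))) := by
        rw [lintegral_const_mul _ hm12, lintegral_add_left hm1, two_mul]
        gcongr
    _ = _ := by
        rw [ENNReal.mul_rpow_of_nonneg _ _ hp0.le, ENNReal.ofReal_rpow_of_nonneg (by positivity)
          hp0.le, ← Real.rpow_mul (by positivity), div_mul_cancel₀ _ hp0.ne']
        have e : (2 : ENNReal) ^ p = 2 ^ (p - 1) * 2 := by
          nth_rewrite 3 [← ENNReal.rpow_one 2]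
          rw [← ENNReal.rpow_add _ _ (by simp) (by simp)]; simp
        rw [e]; ring

/-- Since `(β - 1) / p < 1`, the exponent `η` can be chosen so that the kernel is integrable against
the norms in `lintegral_pathValues_rpow_le`; a small factor `h` then makes `smoothing` a contraction. -/
theorem exists_smoothing_contraction {p β : ℝ} (hp : 1 < p) (hβ : 1 < β) (hβp : β < p + 1) :
    ∃ η : ℝ, 0 < η ∧ η < 1 ∧ ∃ h : ℝ, 0 < h ∧
      (∀ g c, Measurable g → ∀ q, smoothing (ENNReal.ofReal h) η (fun q => g q + c) q ≤
        smoothing (ENNReal.ofReal h) η g q + c / 2) ∧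
      (∀ g, Measurable g →
        2 ^ (p - 1) * ∫⁻ q, smoothing (ENNReal.ofReal h) η g q ^ p ∂(halfMeasure β) ≤
          (∫⁻ q, g q ^ p ∂(halfMeasure β)) / 2) := by
  have hp0 : 0 < p := by linarith
  set s := (β - 1) / p with hs
  have hs0 : 0 < s := div_pos (by linarith) hp0
  have hs1 : s < 1 := by rw [hs, div_lt_one hp0]; linarith
  set η := (1 - s) / 2 with hη
  have hη0 : 0 < η := by rw [hη]; linarith
  set m := ∫⁻ v, stripKernel η v * ENNReal.ofReal ((1 + |v.1|) ^ (0 : ℝ)) ∂stripMeasure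
    with hm
  set B := ∫⁻ v, stripKernel η v * ENNReal.ofReal ((1 + |v.1|) ^ s) ∂stripMeasure with hB
  have hmt : m < ⊤ := lintegral_stripKernel_lt_top hη0 (by linarith)
  have hBt : B < ⊤ := lintegral_stripKernel_lt_top hη0 (by linarith)
  have hm0 := ENNReal.toReal_nonneg (a := m)
  have hB0 := ENNReal.toReal_nonneg (a := B)
  set h := 1 / (4 * (m.toReal + B.toReal + 1)) with hh
  have hh0 : 0 < h := by positivity
  have hhm : ENNReal.ofReal h * m * 2 ≤ 1 / 2 := by
    rw [← ENNReal.ofReal_toReal hmt.ne, ← ENNReal.ofReal_mul hh0.le,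
      show (1 / 2 : ENNReal) = ENNReal.ofReal (1 / 2) by
        rw [ENNReal.ofReal_div_of_pos (by norm_num)]; simp,
      show (2 : ENNReal) = ENNReal.ofReal 2 by simp, ← ENNReal.ofReal_mul (by positivity)]
    refine ENNReal.ofReal_le_ofReal ?_
    rw [hh, div_mul_eq_mul_div, div_mul_eq_mul_div, div_le_div_iff₀ (by positivity) (by norm_num)]
    linarith
  have hhB : ENNReal.ofReal h * (2 * B) ≤ 1 / 2 := by
    rw [← ENNReal.ofReal_toReal hBt.ne,
      show (1 / 2 : ENNReal) = ENNReal.ofReal (1 / 2) by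
        rw [ENNReal.ofReal_div_of_pos (by norm_num)]; simp,
      show (2 : ENNReal) = ENNReal.ofReal 2 by simp, ← ENNReal.ofReal_mul (by positivity),
      ← ENNReal.ofReal_mul (by positivity)]
    refine ENNReal.ofReal_le_ofReal ?_
    rw [hh, div_mul_eq_mul_div, div_le_div_iff₀ (by positivity) (by norm_num)]
    linarith
  refine ⟨η, hη0, by rw [hη]; linarith, h, hh0, ?_, ?_⟩
  · intro g c hg q
    have e : ∀ v, stripKernel η v * pathValues (fun q => g q + c) q v =
        stripKernel η v * pathValues g q v +
          stripKernel η v * ENNReal.ofReal ((1 + |v.1|) ^ (0 : ℝ)) * (2 * c) := by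
      intro v; simp only [pathValues, Real.rpow_zero, ENNReal.ofReal_one]; ring
    have hk : Measurable fun v : ℝ × ℝ =>
        stripKernel η v * ENNReal.ofReal ((1 + |v.1|) ^ (0 : ℝ)) :=
      (measurable_stripKernel η).mul (by fun_prop)
    unfold smoothing
    simp_rw [e]
    rw [lintegral_add_right _ (hk.mul_const _), lintegral_mul_const _ hk, mul_add]
    gcongr
    calc ENNReal.ofReal h * (m * (2 * c)) = ENNReal.ofReal h * m * 2 * c := by ring
      _ ≤ 1 / 2 * c := by gcongr
      _ = c / 2 := by rw [ENNReal.div_eq_inv_mul, ENNReal.div_eq_inv_mul, mul_one]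
  · intro g hg
    have hae : ∀ᵐ v ∂stripMeasure, v.2 ∈ Ioo (0 : ℝ) 1 := by
      rw [stripMeasure]
      exact Measure.quasiMeasurePreserving_snd.ae (ae_restrict_mem measurableSet_Ioo)
    have hk : Measurable fun v : ℝ × ℝ => stripKernel η v * ENNReal.ofReal ((1 + |v.1|) ^ s) :=
      (measurable_stripKernel η).mul (by fun_prop)
    have key := lintegral_rpow_lintegral_le (halfMeasure β) stripMeasure hp
      (fun q v => stripKernel η v * pathValues g q v) (measurable_kernel_mul η hg)
      (fun v => 2 * (stripKernel η v * ENNReal.ofReal ((1 + |v.1|) ^ s)))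
      (hk.const_mul 2)
      (by
        filter_upwards [hae] with v hv
        have h1 := hv.1
        have : 0 < (1 + |v.1|) ^ s := by positivity
        have : 0 < (1 + |v.1|) ^ (η - 2) := by positivity
        have : 0 < v.2 ^ (η - 1) := by positivity
        constructor
        · simp only [stripKernel, ne_eq, mul_eq_zero, ENNReal.ofReal_eq_zero, not_or, not_le]
          exact ⟨by simp, ⟨⟨by assumption, by assumption⟩, by assumption⟩⟩
        · unfold stripKernel
          finiteness)
      (∫⁻ q, g q ^ p ∂(halfMeasure β))
      (by
        filter_upwards [hae] with v hv
        have hpm : Measurable fun q => pathValues g q v ^ p :=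
          ((measurable_pathValues hg).comp measurable_prodMk_right).pow_const p
        simp_rw [ENNReal.mul_rpow_of_nonneg _ _ hp0.le]
        rw [lintegral_const_mul _ hpm]
        calc _ ≤ stripKernel η v ^ p * ((2 * ENNReal.ofReal ((1 + |v.1|) ^ s)) ^ p *
              ∫⁻ q, g q ^ p ∂(halfMeasure β)) := by
              gcongr; exact lintegral_pathValues_rpow_le hp hβ hg hv
          _ = _ := by
            rw [ENNReal.mul_rpow_of_nonneg _ _ hp0.le]; ring)
    rw [lintegral_const_mul _ hk, ← hB] at key
    have hm' : Measurable fun q => (∫⁻ v, stripKernel η v * pathValues g q v ∂stripMeasure) ^ p :=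
      (measurable_kernel_mul η hg).lintegral_prod_right'.pow_const p
    unfold smoothing
    simp_rw [ENNReal.mul_rpow_of_nonneg _ _ hp0.le]
    rw [lintegral_const_mul _ hm']
    calc _ ≤ 2 ^ (p - 1) * (ENNReal.ofReal h ^ p * ((2 * B) ^ p *
          ∫⁻ q, g q ^ p ∂(halfMeasure β))) := by gcongr
      _ = 2 ^ (p - 1) * ((ENNReal.ofReal h * (2 * B)) ^ p * ∫⁻ q, g q ^ p ∂(halfMeasure β)) := by
          rw [ENNReal.mul_rpow_of_nonneg (ENNReal.ofReal h) (2 * B) hp0.le]; ring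
      _ ≤ 2 ^ (p - 1) * ((1 / 2) ^ p * ∫⁻ q, g q ^ p ∂(halfMeasure β)) := by gcongr
      _ = _ := by
          rw [← mul_assoc, one_div, ENNReal.inv_rpow, ← ENNReal.rpow_neg,
            ← ENNReal.rpow_add _ _ (by simp) (by simp), ENNReal.div_eq_inv_mul]
          congr 1
          rw [show p - 1 + -p = -1 by ring, ENNReal.rpow_neg_one]

/-! ### Potentials of the graph function -/

/-- The potential `∫ A(y) / (y - w) ^ n dy`. -/
noncomputable def pot (A : ℝ → ℝ) (n : ℕ) (w : ℂ) : ℂ :=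
  ∫ y : ℝ, (A y : ℂ) / ((y : ℂ) - w) ^ n

theorem ofReal_sub_ne_zero {w : ℂ} (hw : w.im ≠ 0) (y : ℝ) : (y : ℂ) - w ≠ 0 := by
  intro h
  have := congrArg Complex.im h
  simp at this
  exact hw this

theorem continuous_div_pow {w : ℂ} (hw : w.im ≠ 0) {a : ℝ → ℂ} (ha : Continuous a) (n : ℕ) :
    Continuous fun y : ℝ => a y / ((y : ℂ) - w) ^ n :=
  ha.div (by fun_prop) fun y => pow_ne_zero _ (ofReal_sub_ne_zero hw y)

theorem integrable_pot {A : ℝ → ℝ} (hA : Continuous A) (hc : HasCompactSupport A) (n : ℕ) {w : ℂ}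
    (hw : w.im ≠ 0) : Integrable fun y : ℝ => (A y : ℂ) / ((y : ℂ) - w) ^ n := by
  refine (continuous_div_pow hw (by fun_prop) n).integrable_of_hasCompactSupport ?_
  refine hc.mono fun y hy => ?_
  simp only [Function.mem_support, ne_eq] at hy ⊢
  intro h; simp [h] at hy

theorem im_le_norm_ofReal_sub (w : ℂ) (y : ℝ) : w.im ≤ ‖(y : ℂ) - w‖ := by
  have := Complex.abs_im_le_norm ((y : ℂ) - w)
  simp at this
  exact (le_abs_self _).trans this

theorem hasDerivAt_pot {A : ℝ → ℝ} (hA : Continuous A) (hc : HasCompactSupport A) (n : ℕ) {w : ℂ}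
    (hw : 0 < w.im) : HasDerivAt (pot A n) (n * pot A (n + 1) w) w := by
  have hs : Metric.ball w (w.im / 2) ∈ 𝓝 w := Metric.ball_mem_nhds _ (by positivity)
  have him : ∀ w' ∈ Metric.ball w (w.im / 2), w.im / 2 < w'.im := by
    intro w' hw'
    rw [Metric.mem_ball, dist_eq_norm] at hw'
    have := (Complex.abs_im_le_norm (w' - w)).trans_lt hw'
    rw [Complex.sub_im, abs_lt] at this
    linarith
  have h2 : 0 < w.im / 2 := by positivity
  have key := hasDerivAt_integral_of_dominated_loc_of_deriv_le (μ := volume) (𝕜 := ℂ)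
    (F := fun w' (y : ℝ) => (A y : ℂ) / ((y : ℂ) - w') ^ n)
    (F' := fun w' (y : ℝ) => n * ((A y : ℂ) / ((y : ℂ) - w') ^ (n + 1)))
    (bound := fun y => n * (|A y| / (w.im / 2) ^ (n + 1))) (x₀ := w) hs
    (by
      filter_upwards [hs] with w' hw'
      exact (integrable_pot hA hc n (h2.trans (him _ hw')).ne').aestronglyMeasurable)
    (integrable_pot hA hc n hw.ne')
    ((integrable_pot hA hc (n + 1) hw.ne').aestronglyMeasurable.const_mul _)
    (by
      refine Eventually.of_forall fun y w' hw' => ?_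
      rw [norm_mul, norm_div, norm_pow, Complex.norm_real, Real.norm_eq_abs, Complex.norm_natCast]
      have := (him _ hw').le.trans (im_le_norm_ofReal_sub w' y)
      gcongr)
    (by
      refine ((Integrable.abs ?_).div_const _).const_mul _
      exact hA.integrable_of_hasCompactSupport hc)
    (by
      refine Eventually.of_forall fun y w' hw' => ?_
      have hne := ofReal_sub_ne_zero (h2.trans (him _ hw')).ne' y
      have h := (((hasDerivAt_id w').const_sub (y : ℂ)).pow n)
      have h' := ((hasDerivAt_const w' (A y : ℂ)).div h (pow_ne_zero _ hne))
      refine h'.congr_deriv ?_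
      rcases n with _ | n
      · simp
      · simp only [Nat.add_sub_cancel, id, Pi.pow_apply]
        push_cast
        field_simp
        ring)
  have h := key.2
  simp only [integral_const_mul] at h
  exact h

theorem norm_ofReal_sub_I_sq (l : ℝ) : ‖(l : ℂ) - Complex.I‖ ^ 2 = 1 + l ^ 2 := by
  rw [Complex.sq_norm, Complex.normSq_apply]
  simp; ring

/-- The substitution `y = σ + t l`, which normalises the pole to `I`. -/
theorem pot_scale {A : ℝ → ℝ} (n : ℕ) (σ : ℝ) {t : ℝ} (ht : 0 < t) :
    (t : ℂ) ^ n * pot A n (σ + t * Complex.I) =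
      t * ∫ l : ℝ, (A (σ + t * l) : ℂ) / ((l : ℂ) - Complex.I) ^ n := by
  have h1 := integral_add_left_eq_self (μ := (volume : Measure ℝ))
    (fun y : ℝ => (A y : ℂ) / ((y : ℂ) - (σ + t * Complex.I)) ^ n) σ
  have h2 := Measure.integral_comp_mul_left
    (fun y : ℝ => (A (σ + y) : ℂ) / (((σ + y : ℝ) : ℂ) - (σ + t * Complex.I)) ^ n) t
  rw [pot, ← h1]
  have htC : (t : ℂ) ≠ 0 := by exact_mod_cast ht.ne'
  have e : ∀ l : ℝ, (A (σ + t * l) : ℂ) / (((σ + t * l : ℝ) : ℂ) - (σ + t * Complex.I)) ^ n =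
      ((t : ℂ) ^ n)⁻¹ * ((A (σ + t * l) : ℂ) / ((l : ℂ) - Complex.I) ^ n) := by
    intro l
    have : (((σ + t * l : ℝ) : ℂ) - (σ + t * Complex.I)) = t * ((l : ℂ) - Complex.I) := by
      push_cast; ring
    rw [this, mul_pow, div_mul_eq_div_div, inv_mul_eq_div, div_right_comm]
  simp_rw [e] at h2
  rw [integral_const_mul, abs_of_pos (inv_pos.2 ht)] at h2
  have h3 : ∫ y : ℝ, (A (σ + y) : ℂ) / (((σ + y : ℝ) : ℂ) - (σ + t * Complex.I)) ^ n =
    t • (((t : ℂ) ^ n)⁻¹ * ∫ l : ℝ, (A (σ + t * l) : ℂ) / ((l : ℂ) - Complex.I) ^ n) := by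
    rw [h2, smul_smul, mul_inv_cancel₀ ht.ne', one_smul]
  rw [h3, Complex.real_smul]
  field_simp

theorem one_add_sq_le_norm_sq {b : ℂ} (hb : 0 < b.im) :
    ∃ C : ℝ, 0 < C ∧ ∀ y : ℝ, 1 + y ^ 2 ≤ C * ‖(y : ℂ) - b‖ ^ 2 := by
  refine ⟨2 + (1 + 2 * b.re ^ 2) / b.im ^ 2, by positivity, fun y => ?_⟩
  have e : ‖(y : ℂ) - b‖ ^ 2 = (y - b.re) ^ 2 + b.im ^ 2 := by
    rw [Complex.sq_norm, Complex.normSq_apply]; simp; ring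
  rw [e]
  have h1 : (1 + 2 * b.re ^ 2) / b.im ^ 2 * b.im ^ 2 = 1 + 2 * b.re ^ 2 := by field_simp
  have h2 : 0 ≤ (1 + 2 * b.re ^ 2) / b.im ^ 2 * (y - b.re) ^ 2 := by positivity
  nlinarith [sq_nonneg (y - 2 * b.re), sq_nonneg b.im]

theorem integrable_div_norm_sq {b : ℂ} (hb : 0 < b.im) :
    Integrable fun y : ℝ => 1 / ‖(y : ℂ) - b‖ ^ 2 := by
  obtain ⟨C, hC, h⟩ := one_add_sq_le_norm_sq hb
  refine (integrable_inv_one_add_sq.const_mul C).mono' ?_ (Eventually.of_forall fun y => ?_)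
  · refine Continuous.aestronglyMeasurable ?_
    refine continuous_const.div (by fun_prop) fun y => pow_ne_zero _ ?_
    exact norm_ne_zero_iff.2 (ofReal_sub_ne_zero hb.ne' y)
  · have h0 : 0 < 1 + y ^ 2 := by positivity
    have h1 := h y
    rw [Real.norm_eq_abs, abs_of_nonneg (by positivity), ← div_eq_mul_inv, div_le_div_iff₀ _ h0]
    · linarith
    · by_contra! h2
      have : ‖(y : ℂ) - b‖ ^ 2 = 0 := le_antisymm h2 (by positivity)
      rw [this] at h1; linarith

theorem tendsto_ofReal_sub_cobounded (b : ℂ) :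
    Tendsto (fun y : ℝ => (y : ℂ) - b) (Bornology.cobounded ℝ) (Bornology.cobounded ℂ) := by
  rw [← tendsto_norm_atTop_iff_cobounded]
  have h : Tendsto (fun y : ℝ => ‖y‖ - ‖b‖) (Bornology.cobounded ℝ) atTop :=
    tendsto_atTop_add_const_right _ _ tendsto_norm_cobounded_atTop
  refine tendsto_atTop_mono (fun y => ?_) h
  have := norm_sub_norm_le (y : ℂ) b
  simpa using this

theorem tendsto_inv_ofReal_sub (b : ℂ) :
    Tendsto (fun y : ℝ => ((y : ℂ) - b)⁻¹) (Bornology.cobounded ℝ) (𝓝 0) :=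
  tendsto_inv₀_cobounded.comp (tendsto_ofReal_sub_cobounded b)

theorem atTop_le_cobounded : (atTop : Filter ℝ) ≤ Bornology.cobounded ℝ := by
  rw [IsOrderBornology.cobounded_eq]; exact le_sup_right

theorem atBot_le_cobounded : (atBot : Filter ℝ) ≤ Bornology.cobounded ℝ := by
  rw [IsOrderBornology.cobounded_eq]; exact le_sup_left

theorem integrable_one_div_pow {b : ℂ} (hb : 0 < b.im) (n : ℕ) :
    Integrable fun y : ℝ => 1 / ((y : ℂ) - b) ^ (n + 2) := by
  refine ((integrable_div_norm_sq hb).mul_const (1 / b.im ^ n)).mono'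
    (continuous_div_pow hb.ne' continuous_const _).aestronglyMeasurable
    (Eventually.of_forall fun y => ?_)
  have h0 : 0 < ‖(y : ℂ) - b‖ := norm_pos_iff.2 (ofReal_sub_ne_zero hb.ne' y)
  have h1 := im_le_norm_ofReal_sub b y
  rw [norm_div, norm_one, norm_pow, pow_add, ← one_div_mul_one_div, mul_comm]
  gcongr

/-- The kernels of order at least two annihilate constants. -/
theorem integral_one_div_pow {b : ℂ} (hb : 0 < b.im) (n : ℕ) :
    ∫ y : ℝ, 1 / ((y : ℂ) - b) ^ (n + 2) = 0 := by
  have hd : ∀ y : ℝ, HasDerivAt (fun y : ℝ => -((((y : ℂ) - b)⁻¹) ^ (n + 1)) / (n + 1))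
      (1 / ((y : ℂ) - b) ^ (n + 2)) y := by
    intro y
    have hne := ofReal_sub_ne_zero hb.ne' y
    have h1 := ((Complex.ofRealCLM.hasDerivAt (x := y)).sub_const b)
    have h2 := (((h1.inv hne).pow (n + 1)).neg).div_const ((n : ℂ) + 1)
    refine h2.congr_deriv ?_
    have : (n : ℂ) + 1 ≠ 0 := by exact_mod_cast n.succ_ne_zero
    simp only [Complex.ofRealCLM_apply, Nat.add_sub_cancel, Complex.ofReal_one, Pi.inv_apply]
    push_cast
    field_simp
    rw [div_pow, one_pow, pow_add]
    field_simp
  have ht : Tendsto (fun y : ℝ => -((((y : ℂ) - b)⁻¹) ^ (n + 1)) / (n + 1))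
      (Bornology.cobounded ℝ) (𝓝 0) := by
    have := (((tendsto_inv_ofReal_sub b).pow (n + 1)).neg).div_const ((n : ℂ) + 1)
    simpa using this
  rw [integral_of_hasDerivAt_of_tendsto hd (integrable_one_div_pow hb n)
    (ht.mono_left atBot_le_cobounded) (ht.mono_left atTop_le_cobounded), sub_zero]

/-! ### Bounds for the potentials -/

/-- Since `A` is real, the imaginary part of a potential is the integral of `A` against the imaginary
part of the kernel. -/
theorem im_mul_pot {A : ℝ → ℝ} (hA : Continuous A) (hc : HasCompactSupport A) (n : ℕ) (σ : ℝ)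
    {t : ℝ} (ht : 0 < t) :
    t ^ n * (pot A n (σ + t * Complex.I)).im =
      t * ∫ l : ℝ, A (σ + t * l) * (1 / ((l : ℂ) - Complex.I) ^ n).im := by
  have h := congrArg Complex.im (pot_scale (A := A) n σ ht)
  have hcomp : HasCompactSupport fun l => A (σ + t * l) := by
    have h1 : HasCompactSupport fun y => A (σ + y) := by
      simpa [Function.comp_def] using hc.comp_homeomorph (Homeomorph.addLeft σ)
    have h2 := h1.comp_homeomorph (Homeomorph.mulLeft₀ t ht.ne')
    simpa [Function.comp_def] using h2
  have hi := integrable_pot (A := fun l => A (σ + t * l)) (by fun_prop) hcomp n (w := Complex.I)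
    (by simp)
  have h2 := Complex.imCLM.integral_comp_comm hi
  simp only [Complex.imCLM_apply] at h2
  rw [← Complex.ofReal_pow, Complex.im_ofReal_mul, Complex.im_ofReal_mul, ← h2] at h
  rw [h]
  congr 2
  ext l
  rw [← mul_one_div, Complex.im_ofReal_mul]

theorem im_one_div_pow_one (l : ℝ) : (1 / ((l : ℂ) - Complex.I) ^ 1).im = (1 + l ^ 2)⁻¹ := by
  rw [pow_one, one_div, Complex.inv_im, Complex.normSq_apply]
  simp
  rw [show l * l + 1 = 1 + l ^ 2 by ring]

theorem im_one_div_pow_two (l : ℝ) :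
    (1 / ((l : ℂ) - Complex.I) ^ 2).im = 2 * l / (1 + l ^ 2) ^ 2 := by
  have : (1 / ((l : ℂ) - Complex.I) ^ 2) = ((l : ℂ) + Complex.I) ^ 2 / ((1 + l ^ 2) ^ 2 : ℝ) := by
    rw [div_eq_div_iff (pow_ne_zero _ (ofReal_sub_ne_zero (by simp) l))]
    · push_cast
      linear_combination (1 + 2 * (l : ℂ) ^ 2 - Complex.I ^ 2) * Complex.I_sq
    · exact_mod_cast (by positivity : (0:ℝ) < (1 + l ^ 2) ^ 2).ne'
  rw [this, Complex.div_ofReal_im]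
  congr 1
  simp [pow_two]; ring

/-- The weight in the imaginary part of the second potential is dominated by the Poisson kernel. -/
theorem abs_two_mul_div_le (l : ℝ) : |2 * l / (1 + l ^ 2) ^ 2| ≤ (1 + l ^ 2)⁻¹ := by
  have h0 : 0 < 1 + l ^ 2 := by positivity
  rw [abs_div, abs_of_nonneg (by positivity : (0:ℝ) ≤ (1 + l ^ 2) ^ 2), inv_eq_one_div,
    div_le_div_iff₀ (by positivity) h0, one_mul, pow_two (1 + l ^ 2)]
  gcongr
  rw [abs_mul, abs_two]
  nlinarith [sq_abs l, sq_nonneg (|l| - 1)]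

theorem abs_mul_two_mul_div_le (e l : ℝ) :
    |(e + l) * (2 * l / (1 + l ^ 2) ^ 2)| ≤ 2 * (1 + |e|) * (1 + l ^ 2)⁻¹ := by
  have h0 : 0 < 1 + l ^ 2 := by positivity
  rw [abs_mul, abs_div, abs_of_nonneg (by positivity : (0:ℝ) ≤ (1 + l ^ 2) ^ 2), ← div_eq_mul_inv,
    mul_div, div_le_div_iff₀ (by positivity) h0, pow_two (1 + l ^ 2), ← mul_assoc]
  refine mul_le_mul_of_nonneg_right ?_ h0.le
  rw [abs_mul, abs_two]
  have h1 : |e + l| ≤ |e| + |l| := abs_add_le _ _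
  have h2 : |l| ≤ 1 + l ^ 2 := by nlinarith [sq_abs l, sq_nonneg (|l| - 1)]
  have h3 : |l| * |l| ≤ 1 + l ^ 2 := by nlinarith [sq_abs l]
  nlinarith [abs_nonneg l, abs_nonneg e, mul_le_mul_of_nonneg_right h1 (abs_nonneg l),
    mul_le_mul_of_nonneg_left h2 (abs_nonneg e)]

theorem measurable_weight : Measurable fun l : ℝ => 2 * l / (1 + l ^ 2) ^ 2 := by fun_prop

theorem integrable_weight : Integrable fun l : ℝ => 2 * l / (1 + l ^ 2) ^ 2 :=
  integrable_inv_one_add_sq.mono' measurable_weight.aestronglyMeasurable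
    (Eventually.of_forall abs_two_mul_div_le)

theorem integral_weight : ∫ l : ℝ, 2 * l / (1 + l ^ 2) ^ 2 = 0 := by
  have h := integral_neg_eq_self (fun l : ℝ => 2 * l / (1 + l ^ 2) ^ 2) volume
  have h2 : ∀ l : ℝ, 2 * -l / (1 + (-l) ^ 2) ^ 2 = -(2 * l / (1 + l ^ 2) ^ 2) := by
    intro l; rw [neg_sq]; ring
  simp_rw [h2, integral_neg] at h
  linarith

theorem integrable_add_mul_weight (e : ℝ) :
    Integrable fun l : ℝ => (e + l) * (2 * l / (1 + l ^ 2) ^ 2) :=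
  (integrable_inv_one_add_sq.const_mul (2 * (1 + |e|))).mono' (by fun_prop)
    (Eventually.of_forall (abs_mul_two_mul_div_le e))

theorem tendsto_div_one_add_sq :
    Tendsto (fun l : ℝ => l / (1 + l ^ 2)) (Bornology.cobounded ℝ) (𝓝 0) := by
  have h : Tendsto (fun l : ℝ => l⁻¹) (Bornology.cobounded ℝ) (𝓝 0) := tendsto_inv₀_cobounded
  refine squeeze_zero_norm (fun l => ?_) (by simpa using h.norm)
  rcases eq_or_ne l 0 with rfl | hl
  · simp
  have h1 : 0 < |l| := abs_pos.2 hl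
  rw [Real.norm_eq_abs, abs_div, abs_of_pos (by positivity : 0 < 1 + l ^ 2),
    inv_eq_one_div, div_le_div_iff₀ (by positivity) h1]
  nlinarith [sq_abs l]

theorem integral_add_mul_weight (e : ℝ) :
    ∫ l : ℝ, (e + l) * (2 * l / (1 + l ^ 2) ^ 2) = Real.pi := by
  have hd : ∀ l : ℝ, HasDerivAt (fun l => Real.arctan l - l / (1 + l ^ 2))
      ((0 + l) * (2 * l / (1 + l ^ 2) ^ 2)) l := by
    intro l
    have h0 : 1 + l ^ 2 ≠ 0 := by positivity
    have h1 : HasDerivAt (fun l : ℝ => 1 + l ^ 2) (2 * l) l := by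
      simpa using ((hasDerivAt_id l).pow 2).const_add 1
    refine ((Real.hasDerivAt_arctan l).sub ((hasDerivAt_id l).div h1 h0)).congr_deriv ?_
    simp only [id]
    field_simp
    ring
  have h0 : ∫ l : ℝ, (0 + l) * (2 * l / (1 + l ^ 2) ^ 2) = Real.pi := by
    rw [integral_of_hasDerivAt_of_tendsto hd (integrable_add_mul_weight 0)
      (m := -(Real.pi / 2) - 0) (n := Real.pi / 2 - 0)]
    · ring
    · exact (Real.tendsto_arctan_atBot.mono_right nhdsWithin_le_nhds).sub
        (tendsto_div_one_add_sq.mono_left atBot_le_cobounded)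
    · exact (Real.tendsto_arctan_atTop.mono_right nhdsWithin_le_nhds).sub
        (tendsto_div_one_add_sq.mono_left atTop_le_cobounded)
  have h1 := integrable_add_mul_weight 0
  simp only [zero_add] at h0 h1
  simp_rw [add_mul]
  rw [integral_add (integrable_weight.const_mul e) h1, integral_const_mul, integral_weight, h0]
  simp

/-- The second potential has imaginary part controlled by the Lipschitz constant. -/
theorem abs_im_pot_two_le {A : ℝ → ℝ} {K : NNReal} (hA : LipschitzWith K A)
    (hc : HasCompactSupport A) (σ : ℝ) {t : ℝ} (ht : 0 < t) :
    |(pot A 2 (σ + t * Complex.I)).im| ≤ 2 * Real.pi * K := by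
  have h := im_mul_pot hA.continuous hc 2 σ ht
  simp_rw [im_one_div_pow_two] at h
  have hbd : ∀ l : ℝ, |(A (σ + t * l) - A σ) * (2 * l / (1 + l ^ 2) ^ 2)| ≤
      2 * K * t * (1 + l ^ 2)⁻¹ := by
    intro l
    have h1 : |A (σ + t * l) - A σ| ≤ K * (t * |l|) := by
      have := hA.dist_le_mul (σ + t * l) σ
      rw [Real.dist_eq, Real.dist_eq] at this
      simpa [abs_mul, abs_of_pos ht] using this
    have h2 := abs_mul_two_mul_div_le 0 l
    rw [zero_add, abs_mul] at h2
    rw [abs_mul]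
    calc _ ≤ K * (t * |l|) * |2 * l / (1 + l ^ 2) ^ 2| := by gcongr
      _ = K * t * (|l| * |2 * l / (1 + l ^ 2) ^ 2|) := by ring
      _ ≤ K * t * (2 * (1 + |0|) * (1 + l ^ 2)⁻¹) := by gcongr
      _ = _ := by simp; ring
  have hi1 : Integrable fun l : ℝ => (A (σ + t * l) - A σ) * (2 * l / (1 + l ^ 2) ^ 2) :=
    (integrable_inv_one_add_sq.const_mul (2 * K * t)).mono'
      (by
        have := hA.continuous
        exact Measurable.aestronglyMeasurable
          (Measurable.mul (by fun_prop) measurable_weight)) (Eventually.of_forall hbd)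
  have e : ∫ l : ℝ, A (σ + t * l) * (2 * l / (1 + l ^ 2) ^ 2) =
      ∫ l : ℝ, (A (σ + t * l) - A σ) * (2 * l / (1 + l ^ 2) ^ 2) := by
    rw [← add_zero (∫ l : ℝ, (A (σ + t * l) - A σ) * _), ← mul_zero (A σ), ← integral_weight,
      ← integral_const_mul, ← integral_add hi1 (integrable_weight.const_mul _)]
    congr 1; ext l; ring
  have hle : |∫ l : ℝ, (A (σ + t * l) - A σ) * (2 * l / (1 + l ^ 2) ^ 2)| ≤
      2 * K * t * Real.pi := by
    rw [← integral_univ_inv_one_add_sq, ← integral_const_mul]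
    exact norm_integral_le_of_norm_le
      (f := fun l : ℝ => (A (σ + t * l) - A σ) * (2 * l / (1 + l ^ 2) ^ 2))
      (integrable_inv_one_add_sq.const_mul (2 * K * t : ℝ)) (Eventually.of_forall hbd)
  rw [e] at h
  have h3 : t * |(pot A 2 (σ + t * Complex.I)).im| ≤ t * (2 * Real.pi * K) := by
    have h4 : t * (t * (pot A 2 (σ + t * Complex.I)).im) =
      t * ∫ l : ℝ, (A (σ + t * l) - A σ) * (2 * l / (1 + l ^ 2) ^ 2) := by rw [← h]; ring
    have h5 := mul_left_cancel₀ ht.ne' h4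
    rw [← abs_of_pos ht, ← abs_mul, abs_of_pos ht, h5]
    linarith
  exact le_of_mul_le_mul_left h3 ht

theorem norm_pot_three_le {A : ℝ → ℝ} {K : NNReal} (hA : LipschitzWith K A)
    (σ : ℝ) {t : ℝ} (ht : 0 < t) :
    t * ‖pot A 3 (σ + t * Complex.I)‖ ≤ Real.pi * K := by
  have h := pot_scale (A := A) 3 σ ht
  have hA' := hA.continuous
  have hbd : ∀ l : ℝ, ‖((A (σ + t * l) - A σ : ℝ) : ℂ) / ((l : ℂ) - Complex.I) ^ 3‖ ≤
      K * t * (1 + l ^ 2)⁻¹ := by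
    intro l
    have h1 : |A (σ + t * l) - A σ| ≤ K * (t * |l|) := by
      have := hA.dist_le_mul (σ + t * l) σ
      rw [Real.dist_eq, Real.dist_eq] at this
      simpa [abs_mul, abs_of_pos ht] using this
    have h2 := norm_ofReal_sub_I_sq l
    have h0 : 0 < ‖(l : ℂ) - Complex.I‖ := norm_pos_iff.2 (ofReal_sub_ne_zero (by simp) l)
    have h3 : |l| ≤ ‖(l : ℂ) - Complex.I‖ := by
      rw [← sq_le_sq₀ (abs_nonneg _) h0.le, h2, sq_abs]; linarith
    rw [norm_div, norm_pow, Complex.norm_real, Real.norm_eq_abs, ← h2, ← div_eq_mul_inv,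
      div_le_div_iff₀ (by positivity) (by positivity)]
    calc _ ≤ K * (t * ‖(l : ℂ) - Complex.I‖) * ‖(l : ℂ) - Complex.I‖ ^ 2 := by
          gcongr; exact h1.trans (by gcongr)
      _ = _ := by ring
  have hi1 : Integrable fun l : ℝ => ((A (σ + t * l) - A σ : ℝ) : ℂ) / ((l : ℂ) - Complex.I) ^ 3 :=
    (integrable_inv_one_add_sq.const_mul (K * t : ℝ)).mono'
      (continuous_div_pow (by simp) (by fun_prop) 3).aestronglyMeasurable
      (Eventually.of_forall hbd)
  have hI : 0 < Complex.I.im := by simp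
  have e : ∫ l : ℝ, (A (σ + t * l) : ℂ) / ((l : ℂ) - Complex.I) ^ 3 =
      ∫ l : ℝ, ((A (σ + t * l) - A σ : ℝ) : ℂ) / ((l : ℂ) - Complex.I) ^ 3 := by
    rw [← add_zero (∫ l : ℝ, ((A (σ + t * l) - A σ : ℝ) : ℂ) / _), ← mul_zero (A σ : ℂ),
      ← integral_one_div_pow hI 1, ← integral_const_mul,
      ← integral_add hi1 ((integrable_one_div_pow hI 1).const_mul _)]
    congr 1; ext l; push_cast; ring
  have hle : ‖∫ l : ℝ, ((A (σ + t * l) - A σ : ℝ) : ℂ) / ((l : ℂ) - Complex.I) ^ 3‖ ≤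
      K * t * Real.pi := by
    rw [← integral_univ_inv_one_add_sq, ← integral_const_mul]
    exact norm_integral_le_of_norm_le (integrable_inv_one_add_sq.const_mul _)
      (Eventually.of_forall hbd)
  rw [e] at h
  have h5 := congrArg norm h
  rw [norm_mul, norm_mul, norm_pow, Complex.norm_real, Real.norm_eq_abs, abs_of_pos ht] at h5
  have h6 : t ^ 2 * (t * ‖pot A 3 (σ + t * Complex.I)‖) ≤ t ^ 2 * (Real.pi * K) := by
    calc _ = t ^ 3 * ‖pot A 3 (σ + t * Complex.I)‖ := by ring
      _ ≤ t * (K * t * Real.pi) := by rw [h5]; gcongr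
      _ = _ := by ring
  exact le_of_mul_le_mul_left h6 (by positivity)

/-! ### Boundary values along rays -/

/-- The point at height `τ` on the ray of direction `e + I` issuing from the boundary point `x`. -/
noncomputable def ray (x e τ : ℝ) : ℂ := (x + τ * e : ℝ) + τ * Complex.I

theorem tendsto_comp_ray {A : ℝ → ℝ} (hA : Continuous A) (x e l : ℝ) :
    Tendsto (fun τ : ℝ => A (x + τ * e + τ * l)) (𝓝[>] 0) (𝓝 (A x)) := by
  have : Continuous fun τ : ℝ => A (x + τ * e + τ * l) := by fun_prop
  have h := this.tendsto 0
  simp only [zero_mul, add_zero] at h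
  exact h.mono_left nhdsWithin_le_nhds

/-- `Im (pot A 1)` is `π` times the Poisson extension of `A`. -/
theorem tendsto_im_pot_one {A : ℝ → ℝ} (hA : Continuous A) (hc : HasCompactSupport A) (x e : ℝ) :
    Tendsto (fun τ : ℝ => (pot A 1 (ray x e τ)).im) (𝓝[>] 0) (𝓝 (Real.pi * A x)) := by
  obtain ⟨M, hM⟩ := hc.exists_bound_of_continuous hA
  have h : Tendsto (fun τ : ℝ => ∫ l : ℝ, A (x + τ * e + τ * l) * (1 + l ^ 2)⁻¹) (𝓝[>] 0)
      (𝓝 (∫ l : ℝ, A x * (1 + l ^ 2)⁻¹)) := by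
    refine tendsto_integral_filter_of_dominated_convergence (fun l => M * (1 + l ^ 2)⁻¹) ?_ ?_
      (integrable_inv_one_add_sq.const_mul _) ?_
    · exact Eventually.of_forall fun τ => by fun_prop
    · refine Eventually.of_forall fun τ => Eventually.of_forall fun l => ?_
      have : 0 < 1 + l ^ 2 := by positivity
      rw [norm_mul, Real.norm_eq_abs (_)⁻¹, abs_of_pos (inv_pos.2 this)]
      gcongr
      exact hM _
    · exact Eventually.of_forall fun l => (tendsto_comp_ray hA x e l).mul_const _
  rw [integral_const_mul, integral_univ_inv_one_add_sq, mul_comm] at h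
  refine h.congr' ?_
  filter_upwards [self_mem_nhdsWithin] with τ hτ
  have h2 := im_mul_pot hA hc 1 (x + τ * e) hτ
  simp_rw [im_one_div_pow_one] at h2
  rw [pow_one] at h2
  exact (mul_left_cancel₀ (ne_of_gt hτ) h2).symm

/-- The kernel `1 / (l - I) ^ 2` has integral zero, so the linear term of the Taylor polynomial of
`pot A 1` at a point of the ray, evaluated at `x`, disappears in the limit. -/
theorem tendsto_mul_pot_two {A : ℝ → ℝ} (hA : Continuous A) (hc : HasCompactSupport A) (x e : ℝ) :
    Tendsto (fun τ : ℝ => pot A 2 (ray x e τ) * (x - ray x e τ)) (𝓝[>] 0) (𝓝 0) := by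
  obtain ⟨M, hM⟩ := hc.exists_bound_of_continuous hA
  have hI : 0 < Complex.I.im := by simp
  have h : Tendsto (fun τ : ℝ => ∫ l : ℝ, (A (x + τ * e + τ * l) : ℂ) / ((l : ℂ) - Complex.I) ^ 2)
      (𝓝[>] 0) (𝓝 (∫ l : ℝ, (A x : ℂ) / ((l : ℂ) - Complex.I) ^ 2)) := by
    refine tendsto_integral_filter_of_dominated_convergence
      (fun l => M * (1 / ‖(l : ℂ) - Complex.I‖ ^ 2)) ?_ ?_
      ((integrable_div_norm_sq hI).const_mul _) ?_
    · exact Eventually.of_forall fun τ =>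
        (continuous_div_pow hI.ne' (by fun_prop) 2).aestronglyMeasurable
    · refine Eventually.of_forall fun τ => Eventually.of_forall fun l => ?_
      rw [norm_div, norm_pow, mul_one_div, Complex.norm_real]
      gcongr
      exact hM _
    · refine Eventually.of_forall fun l => ?_
      have := (Complex.continuous_ofReal.tendsto _).comp (tendsto_comp_ray hA x e l)
      exact this.div_const _
  have h0 : ∫ l : ℝ, (A x : ℂ) / ((l : ℂ) - Complex.I) ^ 2 = 0 := by
    simp_rw [← mul_one_div (A x : ℂ)]
    rw [integral_const_mul, integral_one_div_pow hI 0, mul_zero]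
  rw [h0] at h
  have h1 := h.const_mul (-(e + Complex.I))
  rw [mul_zero] at h1
  refine h1.congr' ?_
  filter_upwards [self_mem_nhdsWithin] with τ hτ
  have h2 := pot_scale (A := A) 2 (x + τ * e) hτ
  have hτC : (τ : ℂ) ≠ 0 := by exact_mod_cast (ne_of_gt hτ)
  have h3 : (τ : ℂ) * pot A 2 (ray x e τ) =
      ∫ l : ℝ, (A (x + τ * e + τ * l) : ℂ) / ((l : ℂ) - Complex.I) ^ 2 := by
    refine mul_left_cancel₀ hτC ?_
    rw [← h2, ray]; ring
  rw [← h3, ray]; push_cast; ring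

/-- At a point of differentiability, `π A'` is the boundary value of `Im (pot A 2)`
along every ray. -/
theorem tendsto_im_pot_two {A : ℝ → ℝ} {K : NNReal} (hA : LipschitzWith K A)
    (hc : HasCompactSupport A) (x e : ℝ) (hd : DifferentiableAt ℝ A x) :
    Tendsto (fun τ : ℝ => (pot A 2 (ray x e τ)).im) (𝓝[>] 0) (𝓝 (Real.pi * deriv A x)) := by
  have hA' := hA.continuous
  have h : Tendsto (fun τ : ℝ => ∫ l : ℝ, (A (x + τ * e + τ * l) - A x) / τ *
      (2 * l / (1 + l ^ 2) ^ 2)) (𝓝[>] 0)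
      (𝓝 (∫ l : ℝ, deriv A x * ((e + l) * (2 * l / (1 + l ^ 2) ^ 2)))) := by
    refine tendsto_integral_filter_of_dominated_convergence
      (fun l => K * (2 * (1 + |e|) * (1 + l ^ 2)⁻¹)) ?_ ?_
      ((integrable_inv_one_add_sq.const_mul _).const_mul _) ?_
    · exact Eventually.of_forall fun τ => Measurable.aestronglyMeasurable
        (Measurable.mul (by fun_prop) measurable_weight)
    · filter_upwards [self_mem_nhdsWithin] with τ hτ
      have hτ0 : 0 < τ := hτ
      refine Eventually.of_forall fun l => ?_
      have h1 : |A (x + τ * e + τ * l) - A x| ≤ K * (τ * |e + l|) := by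
        have := hA.dist_le_mul (x + τ * e + τ * l) x
        rw [Real.dist_eq, Real.dist_eq,
          show x + τ * e + τ * l - x = τ * (e + l) by ring, abs_mul, abs_of_pos hτ0] at this
        exact this
      have h2 := abs_mul_two_mul_div_le e l
      rw [abs_mul] at h2
      rw [Real.norm_eq_abs, abs_mul, abs_div, abs_of_pos hτ0]
      calc _ ≤ K * (τ * |e + l|) / τ * |2 * l / (1 + l ^ 2) ^ 2| := by gcongr
        _ = K * (|e + l| * |2 * l / (1 + l ^ 2) ^ 2|) := by field_simp
        _ ≤ _ := by gcongr
    · refine Eventually.of_forall fun l => ?_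
      rw [← mul_assoc]
      refine Tendsto.mul_const _ ?_
      have h1 : HasDerivAt (fun τ : ℝ => x + τ * e + τ * l) (e + l) 0 := by
        have := (((hasDerivAt_id (0 : ℝ)).mul_const (e + l)).const_add x)
        simp only [id, one_mul] at this
        refine this.congr_of_eventuallyEq (Eventually.of_forall fun τ => ?_)
        ring
      have h2 : HasDerivAt (fun τ : ℝ => A (x + τ * e + τ * l)) (deriv A x * (e + l)) 0 :=
        HasDerivAt.comp (h₂ := A) 0 (by simpa using hd.hasDerivAt) h1
      have h3 := h2.tendsto_slope_zero_right
      simpa [div_eq_inv_mul] using h3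
  rw [integral_const_mul, integral_add_mul_weight, mul_comm] at h
  refine h.congr' ?_
  filter_upwards [self_mem_nhdsWithin] with τ hτ
  have hτ0 : τ ≠ 0 := ne_of_gt hτ
  have h2 := im_mul_pot hA' hc 2 (x + τ * e) hτ
  simp_rw [im_one_div_pow_two] at h2
  have h3 : τ * (pot A 2 (ray x e τ)).im =
      ∫ l : ℝ, A (x + τ * e + τ * l) * (2 * l / (1 + l ^ 2) ^ 2) := by
    refine mul_left_cancel₀ hτ0 ?_
    rw [← h2, ray]; ring
  have hi : Integrable fun l : ℝ => A (x + τ * e + τ * l) * (2 * l / (1 + l ^ 2) ^ 2) := by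
    obtain ⟨M, hM⟩ := hc.exists_bound_of_continuous hA'
    exact integrable_weight.bdd_mul (c := M) (by fun_prop) (Eventually.of_forall fun l => hM _)
  have h4 : ∀ l : ℝ, (A (x + τ * e + τ * l) - A x) / τ * (2 * l / (1 + l ^ 2) ^ 2) =
      τ⁻¹ * (A (x + τ * e + τ * l) * (2 * l / (1 + l ^ 2) ^ 2)
        - A x * (2 * l / (1 + l ^ 2) ^ 2)) := by intro l; field_simp
  simp_rw [h4]
  rw [integral_const_mul, integral_sub hi (integrable_weight.const_mul _), integral_const_mul,
    integral_weight, ← h3]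
  field_simp
  ring

/-! ### Recovering the graph from the third potential -/

/-- The fundamental theorem of calculus on `(0, 1]` for a function with a limit at `0`; the integral
of the derivative need not be finite. -/
theorem enorm_sub_le_lintegral {v v' : ℝ → ℝ} {L : ℝ}
    (hd : ∀ l ∈ Ioc (0 : ℝ) 1, HasDerivAt v (v' l) l) (hL : Tendsto v (𝓝[>] 0) (𝓝 L)) :
    ‖v 1 - L‖ₑ ≤ ∫⁻ l in Ioo (0 : ℝ) 1, ‖v' l‖ₑ := by
  rcases eq_or_ne (∫⁻ l in Ioo (0 : ℝ) 1, ‖v' l‖ₑ) ⊤ with h | h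
  · rw [h]; exact le_top
  have hae : v' =ᵐ[volume.restrict (Ioo (0 : ℝ) 1)] deriv v := by
    filter_upwards [ae_restrict_mem measurableSet_Ioo] with l hl
    exact (hd l (Ioo_subset_Ioc_self hl)).deriv.symm
  have hm : AEStronglyMeasurable v' (volume.restrict (Ioo (0 : ℝ) 1)) :=
    (measurable_deriv v).aestronglyMeasurable.congr hae.symm
  have hi : IntegrableOn v' (Ioo (0 : ℝ) 1) := ⟨hm, h.lt_top⟩
  have h1 : IntervalIntegrable v' volume 0 1 :=
    (intervalIntegrable_iff_integrableOn_Ioo_of_le zero_le_one).2 hi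
  have key := intervalIntegral.integral_eq_sub_of_hasDerivAt_of_tendsto zero_lt_one
    (fun l hl => hd l (Ioo_subset_Ioc_self hl)) h1 hL
    ((hd 1 (by simp)).continuousAt.tendsto.mono_left nhdsWithin_le_nhds)
  rw [← key, intervalIntegral.integral_of_le zero_le_one, integral_Ioc_eq_integral_Ioo]
  exact enorm_integral_le_lintegral_enorm _

/-- The quantity `t ‖pot A 3 (x + it)‖`, extended by zero to `t ≤ 0`. -/
noncomputable def potSize (A : ℝ → ℝ) (q : ℝ × ℝ) : ENNReal :=
  ENNReal.ofReal q.2 * ‖pot A 3 ((q.1 : ℂ) + q.2 * Complex.I)‖ₑ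

theorem measurable_potSize {A : ℝ → ℝ} (hA : Continuous A) : Measurable (potSize A) := by
  have h : StronglyMeasurable (pot A 3) := by
    unfold pot
    refine StronglyMeasurable.integral_prod_right (f := fun (w : ℂ) (y : ℝ) =>
      (A y : ℂ) / ((y : ℂ) - w) ^ 3) (Measurable.stronglyMeasurable ?_)
    unfold Function.uncurry
    have := hA.measurable
    fun_prop
  have h2 := h.measurable
  unfold potSize
  fun_prop

/-- The variation of `Im G` along a segment, which may start at the boundary, when `G'` is a
multiple of `pot A 3`. -/
theorem leg_le {A : ℝ → ℝ} {G m : ℂ → ℂ}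
    (hG : ∀ ζ : ℂ, 0 < ζ.im → HasDerivAt G (pot A 3 ζ * m ζ) ζ) {ζ₀ d : ℂ} {L : ℝ} {κ : ℝ → ℝ}
    (him : ∀ l ∈ Ioc (0 : ℝ) 1, 0 < (ζ₀ + l * d).im)
    (hL : Tendsto (fun l : ℝ => (G (ζ₀ + l * d)).im) (𝓝[>] 0) (𝓝 L))
    (hκ : ∀ l ∈ Ioo (0 : ℝ) 1, ‖m (ζ₀ + l * d)‖ * ‖d‖ ≤ κ l * (ζ₀ + l * d).im) :
    ‖(G (ζ₀ + d)).im - L‖ₑ ≤ ∫⁻ l in Ioo (0 : ℝ) 1, ENNReal.ofReal (κ l) *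
      potSize A ((ζ₀ + l * d).re, (ζ₀ + l * d).im) := by
  have hd : ∀ l ∈ Ioc (0 : ℝ) 1, HasDerivAt (fun l : ℝ => (G (ζ₀ + l * d)).im)
      (pot A 3 (ζ₀ + l * d) * m (ζ₀ + l * d) * d).im l := by
    intro l hl
    have h1 : HasDerivAt (fun l : ℂ => ζ₀ + l * d) d l := by
      simpa using ((hasDerivAt_id (l : ℂ)).mul_const d).const_add ζ₀
    have h2 := (HasDerivAt.comp (l : ℂ) (hG _ (him l hl)) h1).comp_ofReal
    exact Complex.imCLM.hasFDerivAt.comp_hasDerivAt l h2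
  have := enorm_sub_le_lintegral hd hL
  simp only [Complex.ofReal_one, one_mul] at this
  refine this.trans (setLIntegral_mono' measurableSet_Ioo fun l hl => ?_)
  have hpos := him l (Ioo_subset_Ioc_self hl)
  have hk := hκ l hl
  have hk0 : 0 ≤ κ l := by
    by_contra! h
    have : 0 ≤ ‖m (ζ₀ + l * d)‖ * ‖d‖ := by positivity
    nlinarith
  rw [potSize, Complex.re_add_im, ← mul_assoc, ← ENNReal.ofReal_mul hk0, ← ofReal_norm,
    ← ofReal_norm, ← ENNReal.ofReal_mul (by positivity)]
  refine ENNReal.ofReal_le_ofReal ?_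
  calc _ ≤ ‖pot A 3 (ζ₀ + l * d) * m (ζ₀ + l * d) * d‖ := Complex.abs_im_le_norm _
    _ = (‖m (ζ₀ + l * d)‖ * ‖d‖) * ‖pot A 3 (ζ₀ + l * d)‖ := by
      rw [norm_mul, norm_mul]; ring
    _ ≤ _ := by gcongr

/-- The first-order Taylor polynomial of `pot A 1` at `ζ`, evaluated at `x`. -/
noncomputable def taylor (A : ℝ → ℝ) (x : ℝ) (ζ : ℂ) : ℂ :=
  pot A 1 ζ + pot A 2 ζ * (x - ζ)

theorem hasDerivAt_taylor {A : ℝ → ℝ} (hA : Continuous A) (hc : HasCompactSupport A) (x : ℝ)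
    (ζ : ℂ) (hζ : 0 < ζ.im) :
    HasDerivAt (taylor A x) (pot A 3 ζ * (2 * (x - ζ))) ζ := by
  have h1 := hasDerivAt_pot hA hc 1 hζ
  have h2 := hasDerivAt_pot hA hc 2 hζ
  refine (h1.add (h2.mul ((hasDerivAt_id ζ).const_sub (x : ℂ)))).congr_deriv ?_
  simp only [id]; push_cast; ring

theorem tendsto_im_taylor {A : ℝ → ℝ} (hA : Continuous A) (hc : HasCompactSupport A) (x e : ℝ) :
    Tendsto (fun τ : ℝ => (taylor A x (ray x e τ)).im) (𝓝[>] 0) (𝓝 (Real.pi * A x)) := by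
  have h1 := tendsto_im_pot_one hA hc x e
  have h2 := (Complex.continuous_im.tendsto _).comp (tendsto_mul_pot_two hA hc x e)
  simpa [taylor] using h1.add h2

/-- The part of `A` at `x` not accounted for by the Taylor polynomial at `b`. -/
noncomputable def remainder (A : ℝ → ℝ) (b : ℂ) (x : ℝ) : ℝ := A x - (taylor A x b).im / Real.pi

theorem ofReal_im_mul_I_le (y : ℝ) {r : ℝ} (hr : 0 ≤ r) : ‖(y : ℂ) + r * Complex.I‖ ≤ |y| + r := by
  refine (norm_add_le _ _).trans ?_
  simp [abs_of_nonneg hr]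

/-- The remainder is the variation of `Im (taylor A x ·)` along the path from `b = x₀ + it` up to
height `t (1 + |y|)` and from there straight to the boundary point `x = x₀ + ty`. On the
second leg the height is comparable with the distance to `x`; on the first, the inequality
`|y| / (1 + l |y|) ≤ (1 + |y|) ^ η l ^ (η - 1)` produces the weight. -/
theorem enorm_remainder_le {A : ℝ → ℝ} (hA : Continuous A) (hc : HasCompactSupport A) (x₀ : ℝ)
    {t : ℝ} (ht : 0 < t) (y : ℝ) {η : ℝ} (hη : 0 < η) (hη1 : η < 1) :
    ‖remainder A (x₀ + t * Complex.I) (x₀ + t * y)‖ₑ ≤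
      ENNReal.ofReal (8 * t * (1 + |y|) ^ (1 + η)) * ∫⁻ l in Ioo (0 : ℝ) 1,
        ENNReal.ofReal (l ^ (η - 1)) * pathValues (potSize A) (x₀, t) (y, l) := by
  set x := x₀ + t * y with hx
  set ρ := 1 + |y| with hρ
  have hy := abs_nonneg y
  have hρ1 : 1 ≤ ρ := by linarith
  have hρ0 : 0 < ρ := by linarith
  have hG := hasDerivAt_taylor hA hc x
  -- the vertical segment from `x₀ + it` to `x₀ + itρ`
  have h1 := leg_le hG (ζ₀ := x₀ + t * Complex.I) (d := (t * |y| : ℝ) * Complex.I)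
    (L := (taylor A x (x₀ + t * Complex.I)).im) (κ := fun l => 4 * t * ρ * (|y| / (1 + l * |y|)))
    (by
      intro l hl
      have := hl.1
      simp; positivity)
    (by
      have hc1 : ContinuousAt (fun l : ℝ => (taylor A x (x₀ + t * Complex.I +
          l * ((t * |y| : ℝ) * Complex.I))).im) 0 := by
        refine Complex.continuous_im.continuousAt.comp ?_
        refine ContinuousAt.comp (g := taylor A x) ?_ (by fun_prop)
        exact (hG _ (by simpa using ht)).continuousAt
      have := hc1.tendsto
      simp only [Complex.ofReal_zero, zero_mul, add_zero] at this
      exact this.mono_left nhdsWithin_le_nhds)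
    (by
      intro l hl
      have hl0 := hl.1
      have hl1 := hl.2
      have e1 : (x : ℂ) - (x₀ + t * Complex.I + l * ((t * |y| : ℝ) * Complex.I)) =
          -(((-(t * y) : ℝ) : ℂ) + ((t * (1 + l * |y|) : ℝ) : ℂ) * Complex.I) := by
        rw [hx]; push_cast; ring
      have e2 : (x₀ + t * Complex.I + l * ((t * |y| : ℝ) * Complex.I) : ℂ).im =
          t * (1 + l * |y|) := by simp; ring
      have e3 : ‖((t * |y| : ℝ) : ℂ) * Complex.I‖ = t * |y| := by
        rw [norm_mul, Complex.norm_I, mul_one, Complex.norm_real, Real.norm_eq_abs,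
          abs_of_nonneg (by positivity)]
      have h := ofReal_im_mul_I_le (-(t * y)) (r := t * (1 + l * |y|)) (by positivity)
      rw [abs_neg, abs_mul, abs_of_pos ht] at h
      have h' : t * |y| + t * (1 + l * |y|) ≤ 2 * t * ρ := by
        rw [hρ]; nlinarith [mul_le_of_le_one_left hy hl1.le]
      rw [e1, e2, e3, norm_mul, norm_neg, Complex.norm_ofNat]
      calc _ ≤ 2 * (2 * t * ρ) * (t * |y|) := by gcongr; exact h.trans h'
        _ = _ := by field_simp; ring)
  -- the segment from `x` to `x₀ + itρ`
  have h2 := leg_le hG (ζ₀ := x) (d := ((-(t * y) : ℝ) : ℂ) + ((t * ρ : ℝ) : ℂ) * Complex.I)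
    (L := Real.pi * A x) (κ := fun l => 8 * t * ρ)
    (by
      intro l hl
      have := hl.1
      simp; positivity)
    (by
      have hr := tendsto_im_taylor hA hc x (-y / ρ)
      have hs : Tendsto (fun l : ℝ => l * (t * ρ)) (𝓝[>] 0) (𝓝[>] 0) := by
        refine tendsto_nhdsWithin_iff.2 ⟨?_, ?_⟩
        · have : Continuous fun l : ℝ => l * (t * ρ) := by fun_prop
          have := this.tendsto 0
          rw [zero_mul] at this
          exact this.mono_left nhdsWithin_le_nhds
        · filter_upwards [self_mem_nhdsWithin] with l hl
          have : 0 < l := hl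
          exact mul_pos this (by positivity)
      refine (hr.comp hs).congr fun l => ?_
      have : ray x (-y / ρ) (l * (t * ρ)) =
          x + l * (((-(t * y) : ℝ) : ℂ) + ((t * ρ : ℝ) : ℂ) * Complex.I) := by
        have h3 : l * (t * ρ) * (-y / ρ) = l * (-(t * y)) := by field_simp
        rw [ray, h3]; push_cast; ring
      simp only [Function.comp, this])
    (by
      intro l hl
      have hl0 := hl.1
      have h := ofReal_im_mul_I_le (-(t * y)) (r := t * ρ) (by positivity)
      rw [abs_neg, abs_mul, abs_of_pos ht] at h
      have h' : t * |y| + t * ρ ≤ 2 * t * ρ := by rw [hρ]; nlinarith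
      have h'' := h.trans h'
      set d := ((-(t * y) : ℝ) : ℂ) + ((t * ρ : ℝ) : ℂ) * Complex.I with hd
      have e2 : ((x : ℂ) + l * d).im = l * (t * ρ) := by simp [hd]
      have e1 : (x : ℂ) - (x + l * d) = -(l * d) := by ring
      rw [e1, e2, norm_mul, norm_neg, norm_mul, Complex.norm_ofNat, Complex.norm_real,
        Real.norm_eq_abs, abs_of_pos hl0]
      calc _ = 2 * l * (‖d‖ * ‖d‖) := by ring
        _ ≤ 2 * l * ((2 * t * ρ) * (2 * t * ρ)) := by gcongr
        _ = _ := by ring)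
  have e0 : (x₀ : ℂ) + t * Complex.I + (t * |y| : ℝ) * Complex.I =
      x + (((-(t * y) : ℝ) : ℂ) + ((t * ρ : ℝ) : ℂ) * Complex.I) := by
    rw [hx, hρ]; push_cast; ring
  rw [e0] at h1
  set P := (taylor A x (x + (((-(t * y) : ℝ) : ℂ) + ((t * ρ : ℝ) : ℂ) * Complex.I))).im
  set Q := (taylor A x (x₀ + t * Complex.I)).im
  have hpi : 1 ≤ Real.pi := by linarith [Real.pi_gt_three]
  have h3 : ‖remainder A (x₀ + t * Complex.I) x‖ₑ ≤ ‖P - Q‖ₑ + ‖P - Real.pi * A x‖ₑ := by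
    have e : Real.pi * remainder A (x₀ + t * Complex.I) x = (P - Q) - (P - Real.pi * A x) := by
      have := Real.pi_pos
      rw [remainder]; field_simp; ring
    have h4 : ‖remainder A (x₀ + t * Complex.I) x‖ₑ ≤
        ‖Real.pi * remainder A (x₀ + t * Complex.I) x‖ₑ := by
      rw [← ofReal_norm, ← ofReal_norm, norm_mul, Real.norm_eq_abs Real.pi,
        abs_of_pos Real.pi_pos]
      exact ENNReal.ofReal_le_ofReal (le_mul_of_one_le_left (norm_nonneg _) hpi)
    rw [e] at h4
    exact h4.trans enorm_sub_le
  have hm := measurable_potSize hA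
  refine h3.trans ((add_le_add h1 h2).trans ?_)
  rw [← lintegral_add_right _ (by fun_prop), ← lintegral_const_mul _
    (by unfold pathValues; fun_prop)]
  refine setLIntegral_mono' measurableSet_Ioo fun l hl => ?_
  have hl0 := hl.1
  have hl1 := hl.2
  simp only [pathValues]
  have e4 : ((x₀ : ℂ) + t * Complex.I + l * ((t * |y| : ℝ) * Complex.I)).re = x₀ := by simp
  have e5 : ((x₀ : ℂ) + t * Complex.I + l * ((t * |y| : ℝ) * Complex.I)).im =
      t * (1 + l * |y|) := by simp; ring
  have e6 : ((x : ℂ) + l * (((-(t * y) : ℝ) : ℂ) + ((t * ρ : ℝ) : ℂ) * Complex.I)).re =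
      x₀ + t * ((1 - l) * y) := by simp [hx]; ring
  have e7 : ((x : ℂ) + l * (((-(t * y) : ℝ) : ℂ) + ((t * ρ : ℝ) : ℂ) * Complex.I)).im =
      t * (ρ * l) := by simp; ring
  rw [e4, e5, e6, e7]
  have hη' : 0 ≤ 1 - η := by linarith
  have hlη : 0 < l ^ (η - 1) := by positivity
  have hl1' : 1 ≤ l ^ (η - 1) :=
    Real.one_le_rpow_of_pos_of_le_one_of_nonpos hl0 hl1.le (by linarith)
  have hρη : 1 ≤ ρ ^ η := Real.one_le_rpow hρ1 hη.le
  have hρe : ρ ^ (1 + η) = ρ * ρ ^ η := by rw [Real.rpow_add hρ0, Real.rpow_one]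
  have k1 : 4 * t * ρ * (|y| / (1 + l * |y|)) ≤ 8 * t * ρ ^ (1 + η) * l ^ (η - 1) := by
    have h5 : |y| / (1 + l * |y|) ≤ ρ ^ η * l ^ (η - 1) := by
      set V := 1 + l * |y| with hV
      have hV1 : 1 ≤ V := by rw [hV]; have : 0 ≤ l * |y| := by positivity
                             linarith
      have hV0 : 0 < V := by linarith
      have hlV : l * |y| ≤ (l * ρ) ^ η * V := by
        rcases le_total 1 (l * ρ) with h6 | h6
        · have : 1 ≤ (l * ρ) ^ η := Real.one_le_rpow h6 hη.le
          nlinarith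
        · have : l * ρ ≤ (l * ρ) ^ η := by
            have := Real.rpow_le_rpow_of_exponent_ge (by positivity : 0 < l * ρ) h6 hη1.le
            rwa [Real.rpow_one] at this
          have : l * |y| ≤ l * ρ := by rw [hρ]; gcongr; linarith
          nlinarith [(by positivity : 0 ≤ (l * ρ) ^ η)]
      rw [div_le_iff₀ hV0]
      refine le_of_mul_le_mul_left (hlV.trans_eq ?_) hl0
      rw [Real.mul_rpow hl0.le hρ0.le, Real.rpow_sub_one hl0.ne']
      field_simp
    calc _ ≤ 4 * t * ρ * (ρ ^ η * l ^ (η - 1)) := by gcongr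
      _ ≤ 8 * t * ρ * (ρ ^ η * l ^ (η - 1)) := by gcongr; norm_num
      _ = _ := by rw [hρe]; ring
  have k2 : 8 * t * ρ ≤ 8 * t * ρ ^ (1 + η) * l ^ (η - 1) := by
    calc 8 * t * ρ = 8 * t * (ρ * 1) * 1 := by ring
      _ ≤ 8 * t * (ρ * ρ ^ η) * l ^ (η - 1) := by gcongr
      _ = _ := by rw [hρe]
  rw [← mul_assoc (ENNReal.ofReal _) (ENNReal.ofReal _), ← ENNReal.ofReal_mul (by positivity),
    mul_add (ENNReal.ofReal (8 * t * ρ ^ (1 + η) * l ^ (η - 1)))]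
  gcongr

/-! ### The slope at a point and comparison of kernels -/

theorem integral_eq_sub_of_locallyLipschitz {H : ℝ → ℝ} (hH : LocallyLipschitz H) (a b : ℝ) :
    ∫ x in a..b, deriv H x = H b - H a := by
  obtain ⟨K, hK⟩ := (hH.locallyLipschitzOn (s := uIcc a b)).exists_lipschitzOnWith_of_compact
    isCompact_uIcc
  exact hK.absolutelyContinuousOnInterval.integral_deriv_eq_sub

/-- The integral over the line of the a.e. derivative of a locally Lipschitz function which
vanishes at infinity. -/
theorem integral_eq_zero_of_locallyLipschitz_real {H H' : ℝ → ℝ} (hH : LocallyLipschitz H)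
    (hd : ∀ᵐ x, HasDerivAt H (H' x) x) (hi : Integrable H')
    (h0 : Tendsto H (Bornology.cobounded ℝ) (𝓝 0)) : ∫ x, H' x = 0 := by
  have hae : (fun x => deriv H x) =ᵐ[volume] H' := hd.mono fun x hx => hx.deriv
  have h1 := intervalIntegral_tendsto_integral (hi.congr hae.symm) tendsto_neg_atTop_atBot
    tendsto_id
  simp_rw [integral_eq_sub_of_locallyLipschitz hH] at h1
  have h2 : Tendsto (fun R : ℝ => H (id R) - H (-R)) atTop (𝓝 (0 - 0)) :=
    (h0.mono_left atTop_le_cobounded).sub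
      ((h0.mono_left atBot_le_cobounded).comp tendsto_neg_atTop_atBot)
  rw [← integral_congr_ae hae, tendsto_nhds_unique h1 h2, sub_zero]

theorem integral_eq_zero_of_locallyLipschitz {H H' : ℝ → ℂ} (hH : LocallyLipschitz H)
    (hd : ∀ᵐ x, HasDerivAt H (H' x) x) (hi : Integrable H')
    (h0 : Tendsto H (Bornology.cobounded ℝ) (𝓝 0)) : ∫ x, H' x = 0 := by
  have h : ∀ L : ℂ →L[ℝ] ℝ, L (∫ x, H' x) = 0 := by
    intro L
    rw [← L.integral_comp_comm hi]
    refine integral_eq_zero_of_locallyLipschitz_real (L.lipschitz.locallyLipschitz.comp hH)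
      ?_ (L.integrable_comp hi) ?_
    · filter_upwards [hd] with x hx
      exact L.hasFDerivAt.comp_hasDerivAt x hx
    · simpa using (L.continuous.tendsto 0).comp h0
  exact Complex.ext (h Complex.reCLM) (h Complex.imCLM)

/-- The vector from `w` to the point of the graph of `A` over `x`. -/
noncomputable def chord (A : ℝ → ℝ) (w : ℂ) (x : ℝ) : ℂ :=
  Complex.ofReal x + Complex.ofReal (A x) * Complex.I - w

section
variable {A : ℝ → ℝ} {K : NNReal} (hA : LipschitzWith K A) (hK : K ≤ 1 / 2) (x₀ t : ℝ)

theorem chord_eq (x : ℝ) : chord A (x₀ + (A x₀ + t) * Complex.I) x =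
    (x - (x₀ + t * Complex.I)) + (A x - A x₀ : ℝ) * Complex.I := by
  rw [chord]; push_cast; ring

include hA in
theorem abs_sub_le_norm (x : ℝ) : |A x - A x₀| ≤ K * ‖(x : ℂ) - (x₀ + t * Complex.I)‖ := by
  have h := hA.dist_le_mul x x₀
  rw [Real.dist_eq, Real.dist_eq] at h
  refine h.trans ?_
  gcongr
  have := Complex.abs_re_le_norm ((x : ℂ) - (x₀ + t * Complex.I))
  simpa using this

include hA hK in
theorem norm_le_chord (x : ℝ) : ‖(x : ℂ) - (x₀ + t * Complex.I)‖ / 2 ≤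
    ‖chord A (x₀ + (A x₀ + t) * Complex.I) x‖ := by
  have h := abs_sub_le_norm hA x₀ t x
  have hK' : (K : ℝ) ≤ 1 / 2 := by exact_mod_cast hK
  have h2 : ‖((A x - A x₀ : ℝ) : ℂ) * Complex.I‖ = |A x - A x₀| := by
    rw [norm_mul, Complex.norm_I, mul_one, Complex.norm_real, Real.norm_eq_abs]
  have h3 := norm_sub_norm_le ((x : ℂ) - (x₀ + t * Complex.I))
    (-(((A x - A x₀ : ℝ) : ℂ) * Complex.I))
  rw [norm_neg, h2, sub_neg_eq_add, ← chord_eq] at h3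
  have := mul_le_mul_of_nonneg_right hK' (norm_nonneg ((x : ℂ) - (x₀ + t * Complex.I)))
  linarith

include hA hK in
/-- The kernels on the graph and on the line differ by a small multiple of the latter. -/
theorem norm_kernel_sub_le (ht : 0 < t) (x : ℝ) :
    ‖(1 + deriv A x * Complex.I) / chord A (x₀ + (A x₀ + t) * Complex.I) x ^ 3 -
      1 / ((x : ℂ) - (x₀ + t * Complex.I)) ^ 3‖ ≤
      64 * K / ‖(x : ℂ) - (x₀ + t * Complex.I)‖ ^ 3 := by
  have h1 := norm_le_chord hA hK x₀ t x
  have h2 := abs_sub_le_norm hA x₀ t x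
  have hK' : (K : ℝ) ≤ 1 / 2 := by exact_mod_cast hK
  have hD : |deriv A x| ≤ K := norm_deriv_le_of_lipschitz hA
  have e := chord_eq (A := A) x₀ t x
  have hq0 : (x : ℂ) - (x₀ + t * Complex.I) ≠ 0 := ofReal_sub_ne_zero (by simpa using ht.ne') x
  set q := (x : ℂ) - (x₀ + t * Complex.I) with hq
  set q' := chord A (x₀ + (A x₀ + t) * Complex.I) x with hq'
  have hN : 0 < ‖q‖ := norm_pos_iff.2 hq0
  have hN' : 0 < ‖q'‖ := by linarith
  have hq'0 : q' ≠ 0 := norm_pos_iff.1 hN'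
  have hdiff : ‖q' - q‖ ≤ K * ‖q‖ := by
    rw [e, add_sub_cancel_left]
    simpa [← Complex.ofReal_sub] using h2
  have hup : ‖q'‖ ≤ 3 / 2 * ‖q‖ := by
    have h3 := norm_sub_norm_le q' q
    have := mul_le_mul_of_nonneg_right hK' hN.le
    linarith
  have e2 : (1 + deriv A x * Complex.I) / q' ^ 3 - 1 / q ^ 3 =
      (deriv A x * Complex.I) / q' ^ 3 -
        (q' - q) * (q ^ 2 + q * q' + q' ^ 2) / (q ^ 3 * q' ^ 3) := by
    field_simp; ring
  have b1 : ‖(deriv A x * Complex.I) / q' ^ 3‖ ≤ 8 * K / ‖q‖ ^ 3 := by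
    rw [norm_div, norm_mul, Complex.norm_I, mul_one, Complex.norm_real, Real.norm_eq_abs, norm_pow,
      div_le_div_iff₀ (by positivity) (by positivity)]
    have : (‖q‖ / 2) ^ 3 ≤ ‖q'‖ ^ 3 := by gcongr
    calc _ ≤ K * ‖q‖ ^ 3 := by gcongr
      _ = 8 * K * (‖q‖ / 2) ^ 3 := by ring
      _ ≤ _ := by gcongr
  have b2 : ‖(q' - q) * (q ^ 2 + q * q' + q' ^ 2) / (q ^ 3 * q' ^ 3)‖ ≤ 56 * K / ‖q‖ ^ 3 := by
    have b3 : ‖q ^ 2 + q * q' + q' ^ 2‖ ≤ 7 * ‖q‖ ^ 2 := by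
      calc _ ≤ ‖q‖ ^ 2 + ‖q‖ * ‖q'‖ + ‖q'‖ ^ 2 := by
            refine (norm_add₃_le).trans ?_
            simp
        _ ≤ ‖q‖ ^ 2 + ‖q‖ * (3 / 2 * ‖q‖) + (3 / 2 * ‖q‖) ^ 2 := by gcongr
        _ ≤ _ := by nlinarith [sq_nonneg ‖q‖]
    rw [norm_div, norm_mul, norm_mul, norm_pow, norm_pow,
      div_le_div_iff₀ (by positivity) (by positivity)]
    have : (‖q‖ / 2) ^ 3 ≤ ‖q'‖ ^ 3 := by gcongr
    calc _ ≤ K * ‖q‖ * (7 * ‖q‖ ^ 2) * ‖q‖ ^ 3 := by gcongr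
      _ = 56 * K * (‖q‖ ^ 3 * (‖q‖ / 2) ^ 3) := by ring
      _ ≤ _ := by gcongr
  rw [e2]
  refine (norm_sub_le _ _).trans ((add_le_add b1 b2).trans_eq ?_)
  ring

/-- The slope of the affine function `x ↦ Im (taylor A x b) / π`. -/
noncomputable def slope (A : ℝ → ℝ) (b : ℂ) : ℝ := (pot A 2 b).im / Real.pi

theorem remainder_eq (b : ℂ) (x : ℝ) : remainder A b x =
    A x - ((pot A 1 b - pot A 2 b * b).im / Real.pi + slope A b * x) := by
  rw [remainder, taylor, slope]
  congr 1
  have : pot A 1 b + pot A 2 b * (x - b) = (pot A 1 b - pot A 2 b * b) + x * pot A 2 b := by ring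
  rw [this, Complex.add_im, Complex.im_ofReal_mul]
  ring

theorem exists_remainder_le (hA : Continuous A) (hc : HasCompactSupport A) {b : ℂ} (hb : 0 < b.im) :
    ∃ C : ℝ, 0 ≤ C ∧ ∀ x : ℝ, |remainder A b x| ≤ C * ‖(x : ℂ) - b‖ := by
  obtain ⟨M, hM⟩ := hc.exists_bound_of_continuous hA
  have hM0 : 0 ≤ M := (norm_nonneg _).trans (hM 0)
  refine ⟨(M + ‖pot A 1 b‖) / b.im + ‖pot A 2 b‖, by positivity, fun x => ?_⟩
  have h1 : |(taylor A x b).im / Real.pi| ≤ ‖pot A 1 b‖ + ‖pot A 2 b‖ * ‖(x : ℂ) - b‖ := by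
    rw [abs_div, abs_of_pos Real.pi_pos]
    refine (div_le_self (abs_nonneg _) (by linarith [Real.pi_gt_three])).trans ?_
    refine (Complex.abs_im_le_norm _).trans ((norm_add_le _ _).trans_eq ?_)
    rw [norm_mul]
  have h2 := im_le_norm_ofReal_sub b x
  calc |remainder A b x| ≤ |A x| + |(taylor A x b).im / Real.pi| := abs_sub _ _
    _ ≤ M + (‖pot A 1 b‖ + ‖pot A 2 b‖ * ‖(x : ℂ) - b‖) := by gcongr; exact hM x
    _ = (M + ‖pot A 1 b‖) / b.im * b.im + ‖pot A 2 b‖ * ‖(x : ℂ) - b‖ := by field_simp; ring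
    _ ≤ (M + ‖pot A 1 b‖) / b.im * ‖(x : ℂ) - b‖ + ‖pot A 2 b‖ * ‖(x : ℂ) - b‖ := by gcongr
    _ = _ := by ring

theorem continuous_remainder (hA : Continuous A) (b : ℂ) : Continuous (remainder A b) := by
  have : remainder A b = fun x =>
    A x - ((pot A 1 b - pot A 2 b * b).im / Real.pi + slope A b * x) := funext (remainder_eq b)
  rw [this]; fun_prop

theorem integrable_remainder_div (hA : Continuous A) (hc : HasCompactSupport A) {b : ℂ}
    (hb : 0 < b.im) : Integrable fun x : ℝ => (remainder A b x : ℂ) / ((x : ℂ) - b) ^ 3 := by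
  obtain ⟨C, hC0, hC⟩ := exists_remainder_le hA hc hb
  refine ((integrable_div_norm_sq hb).const_mul C).mono'
    (continuous_div_pow hb.ne' (by have := continuous_remainder hA b; fun_prop)
      3).aestronglyMeasurable (Eventually.of_forall fun x => ?_)
  have hN : 0 < ‖(x : ℂ) - b‖ := norm_pos_iff.2 (ofReal_sub_ne_zero hb.ne' x)
  rw [norm_div, norm_pow, Complex.norm_real, Real.norm_eq_abs, mul_one_div,
    div_le_div_iff₀ (by positivity) (by positivity)]
  calc _ ≤ C * ‖(x : ℂ) - b‖ * ‖(x : ℂ) - b‖ ^ 2 := by gcongr; exact hC x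
    _ = _ := by ring

/-- The affine part of `A` does not contribute to the third potential. -/
theorem integral_remainder_div (hA : Continuous A) (hc : HasCompactSupport A) {b : ℂ}
    (hb : 0 < b.im) : ∫ x : ℝ, (remainder A b x : ℂ) / ((x : ℂ) - b) ^ 3 = pot A 3 b := by
  set κ : ℂ := ((pot A 1 b - pot A 2 b * b).im / Real.pi : ℝ) + slope A b * b
  have e : ∀ x : ℝ, (remainder A b x : ℂ) / ((x : ℂ) - b) ^ 3 = (A x : ℂ) / ((x : ℂ) - b) ^ 3 -
      (κ * (1 / ((x : ℂ) - b) ^ (1 + 2)) + slope A b * (1 / ((x : ℂ) - b) ^ (0 + 2))) := by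
    intro x
    have hne := ofReal_sub_ne_zero hb.ne' x
    rw [remainder_eq]
    simp only [κ]
    push_cast
    field_simp
    ring
  simp_rw [e]
  have i1 := (integrable_one_div_pow hb 1).const_mul κ
  have i2 := (integrable_one_div_pow hb 0).const_mul (slope A b : ℂ)
  have i12 : Integrable fun x : ℝ => κ * (1 / ((x : ℂ) - b) ^ (1 + 2)) +
      slope A b * (1 / ((x : ℂ) - b) ^ (0 + 2)) := i1.add i2
  rw [integral_sub (integrable_pot hA hc 3 hb.ne') i12, integral_add i1 i2,
    integral_const_mul, integral_const_mul, integral_one_div_pow hb, integral_one_div_pow hb]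
  simp [pot]

end

/-! ### Comparison with the derivative of the transform -/

/-- The derivative on the domain above the graph of `A` of the transform of its
characteristic function. -/
noncomputable def cauchyDer (A : ℝ → ℝ) (w : ℂ) : ℂ :=
  (Real.pi : ℂ)⁻¹ * ∫ x : ℝ, Complex.ofReal (deriv A x) /
    (Complex.ofReal x + Complex.ofReal (A x) * Complex.I - w) ^ 2

theorem locallyLipschitz_comp_pair {E F : Type*} [PseudoEMetricSpace E] [PseudoEMetricSpace F]
    {a : ℝ → ℝ} {k : ℝ → E} (ha : LocallyLipschitz a) (hk : LocallyLipschitz k) {f : ℝ × E → F}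
    (hf : LocallyLipschitz f) : LocallyLipschitz fun x => f (a x, k x) :=
  hf.comp (ha.prodMk hk)

theorem locallyLipschitz_polynomial (c : ℝ) :
    LocallyLipschitz fun q : ℝ × ℂ => (q.1 : ℂ) * q.2 ^ 2 - c * q.2 := by
  refine ContDiff.locallyLipschitz (𝕂 := ℝ) ?_
  have h : ContDiff ℝ 1 fun q : ℝ × ℂ => (q.1 : ℂ) :=
    Complex.ofRealCLM.contDiff.comp contDiff_fst
  exact (h.mul (contDiff_snd.pow 2)).sub (contDiff_const.mul contDiff_snd)

theorem locallyLipschitz_kernel {a : ℝ → ℝ} {k : ℝ → ℂ} (ha : LocallyLipschitz a)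
    (hk : LocallyLipschitz k) (c : ℝ) :
    LocallyLipschitz fun x => (a x : ℂ) * k x ^ 2 - c * k x :=
  locallyLipschitz_comp_pair ha hk (locallyLipschitz_polynomial c)

theorem locallyLipschitz_sub_affine {A : ℝ → ℝ} (hA : LocallyLipschitz A) (κ c : ℝ) :
    LocallyLipschitz fun x => A x - (κ + c * x) := by
  have h1 : LocallyLipschitz fun q : ℝ × ℝ => q.1 - (κ + c * q.2) := by
    refine ContDiff.locallyLipschitz (𝕂 := ℝ) ?_
    exact contDiff_fst.sub (contDiff_const.add (contDiff_const.mul contDiff_snd))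
  exact h1.comp (hA.prodMk LocallyLipschitz.id)

theorem hasDerivAt_kernel {r : ℝ → ℝ} {k : ℝ → ℂ} {r' x : ℝ} {k' : ℂ} (hr : HasDerivAt r r' x)
    (hk : HasDerivAt k k' x) (hne : k x ≠ 0) (c : ℝ) :
    HasDerivAt (fun x => (r x : ℂ) * (k x)⁻¹ ^ 2 - c * (k x)⁻¹)
      ((r' : ℂ) / k x ^ 2 - 2 * (r x * (k' / k x ^ 3)) + c * k' / k x ^ 2) x := by
  have h3 := hk.inv hne
  refine ((hr.ofReal_comp.mul (h3.pow 2)).sub (h3.const_mul (c : ℂ))).congr_deriv ?_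
  simp only [Pi.inv_apply, Pi.pow_apply]
  push_cast
  field_simp
  ring

theorem hasDerivAt_chord {A : ℝ → ℝ} {x : ℝ} (hd : DifferentiableAt ℝ A x) (w : ℂ) :
    HasDerivAt (chord A w) (1 + deriv A x * Complex.I) x := by
  have h : HasDerivAt (fun x : ℝ => (x : ℂ)) 1 x := Complex.ofRealCLM.hasDerivAt
  exact (h.add (hd.hasDerivAt.ofReal_comp.mul_const Complex.I)).sub_const w

theorem hasDerivAt_sub_affine {A : ℝ → ℝ} {x : ℝ} (hd : DifferentiableAt ℝ A x) (κ c : ℝ) :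
    HasDerivAt (fun x => A x - (κ + c * x)) (deriv A x - c) x := by
  refine (hd.hasDerivAt.fun_sub (((hasDerivAt_id x).const_mul c).const_add κ)).congr_deriv ?_
  ring

section
variable {A : ℝ → ℝ} {K : NNReal} (hA : LipschitzWith K A) (hK : K ≤ 1 / 2)
  (hc : HasCompactSupport A) (x₀ : ℝ) {t : ℝ} (ht : 0 < t)

theorem continuous_chord (hA : Continuous A) (w : ℂ) : Continuous (chord A w) := by
  unfold chord; fun_prop

include hA hK ht in
theorem norm_inv_chord_le (x : ℝ) : ‖(chord A (x₀ + (A x₀ + t) * Complex.I) x)⁻¹‖ ≤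
    2 / ‖(x : ℂ) - (x₀ + t * Complex.I)‖ := by
  have h := norm_le_chord hA hK x₀ t x
  have hN : 0 < ‖(x : ℂ) - (x₀ + t * Complex.I)‖ :=
    norm_pos_iff.2 (ofReal_sub_ne_zero (by simpa using ht.ne') x)
  rw [norm_inv, inv_eq_one_div, div_le_div_iff₀ (by linarith) hN]
  linarith

include hA hK ht in
theorem chord_ne_zero (x : ℝ) : chord A (x₀ + (A x₀ + t) * Complex.I) x ≠ 0 := by
  have h := norm_le_chord hA hK x₀ t x
  have hN : 0 < ‖(x : ℂ) - (x₀ + t * Complex.I)‖ :=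
    norm_pos_iff.2 (ofReal_sub_ne_zero (by simpa using ht.ne') x)
  exact norm_pos_iff.1 (by linarith)

include hA in
theorem norm_tangent_le (x : ℝ) : ‖1 + deriv A x * Complex.I‖ ≤ 1 + K := by
  refine (norm_add_le _ _).trans ?_
  rw [norm_one, norm_mul, Complex.norm_I, mul_one, Complex.norm_real]
  gcongr
  exact norm_deriv_le_of_lipschitz hA

include hA hK ht in
theorem locallyLipschitz_inv_chord :
    LocallyLipschitz fun x => (chord A (x₀ + (A x₀ + t) * Complex.I) x)⁻¹ := by
  have hne := chord_ne_zero hA hK x₀ ht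
  have hlow : ∀ x, t / 2 ≤ ‖chord A (x₀ + (A x₀ + t) * Complex.I) x‖ := by
    intro x
    refine le_trans ?_ (norm_le_chord hA hK x₀ t x)
    have := im_le_norm_ofReal_sub ((x₀ : ℂ) + t * Complex.I) x
    simp at this
    linarith
  refine LipschitzWith.locallyLipschitz (K := Real.toNNReal ((1 + K) / (t / 2) ^ 2))
    (LipschitzWith.of_dist_le_mul fun x y => ?_)
  rw [dist_eq_norm, Real.coe_toNNReal _ (by positivity), inv_sub_inv (hne x) (hne y), norm_div,
    norm_mul, div_mul_eq_mul_div]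
  have h1 : ‖chord A (x₀ + (A x₀ + t) * Complex.I) y - chord A (x₀ + (A x₀ + t) * Complex.I) x‖ ≤
      (1 + K) * dist x y := by
    have e : chord A (x₀ + (A x₀ + t) * Complex.I) y - chord A (x₀ + (A x₀ + t) * Complex.I) x =
        ((y - x : ℝ) : ℂ) + ((A y - A x : ℝ) : ℂ) * Complex.I := by
      rw [chord, chord]; push_cast; ring
    rw [e]
    refine (norm_add_le _ _).trans ?_
    rw [norm_mul, Complex.norm_I, mul_one, Complex.norm_real, Complex.norm_real, ← dist_eq_norm,
      ← dist_eq_norm, dist_comm x y]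
    have := hA.dist_le_mul y x
    linarith
  have h2 : (t / 2) ^ 2 ≤ ‖chord A (x₀ + (A x₀ + t) * Complex.I) x‖ *
      ‖chord A (x₀ + (A x₀ + t) * Complex.I) y‖ := by
    rw [pow_two]; gcongr <;> exact hlow _
  gcongr

include hA hK ht in
theorem integrable_deriv_div_chord : Integrable fun x : ℝ =>
    ((deriv A x : ℝ) : ℂ) / chord A (x₀ + (A x₀ + t) * Complex.I) x ^ 2 := by
  have hb : 0 < ((x₀ : ℂ) + t * Complex.I).im := by simpa using ht
  refine ((integrable_div_norm_sq hb).const_mul (K * 4)).mono' ?_ (Eventually.of_forall fun x => ?_)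
  · have h1 := measurable_deriv A
    have h2 := (continuous_chord hA.continuous (x₀ + (A x₀ + t) * Complex.I)).measurable
    exact Measurable.aestronglyMeasurable (by fun_prop)
  · have hD : ‖deriv A x‖ ≤ K := norm_deriv_le_of_lipschitz hA
    have h1 := norm_inv_chord_le hA hK x₀ ht x
    rw [div_eq_mul_inv, ← inv_pow, norm_mul, norm_pow, Complex.norm_real]
    calc _ ≤ K * (2 / ‖(x : ℂ) - (x₀ + t * Complex.I)‖) ^ 2 := by gcongr
      _ = _ := by rw [div_pow]; ring

include hA hK hc ht in
theorem integrable_remainder_div_chord : Integrable fun x : ℝ =>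
    (remainder A (x₀ + t * Complex.I) x : ℂ) *
      ((1 + deriv A x * Complex.I) / chord A (x₀ + (A x₀ + t) * Complex.I) x ^ 3) := by
  have hb : 0 < ((x₀ : ℂ) + t * Complex.I).im := by simpa using ht
  obtain ⟨C, hC0, hC⟩ := exists_remainder_le hA.continuous hc hb
  refine ((integrable_div_norm_sq hb).const_mul (C * ((1 + K) * 8))).mono' ?_
    (Eventually.of_forall fun x => ?_)
  · have h1 := measurable_deriv A
    have h2 := (continuous_chord hA.continuous (x₀ + (A x₀ + t) * Complex.I)).measurable
    have h3 := (continuous_remainder hA.continuous (x₀ + t * Complex.I)).measurable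
    exact Measurable.aestronglyMeasurable (by fun_prop)
  · have h1 := norm_inv_chord_le hA hK x₀ ht x
    have hN : 0 < ‖(x : ℂ) - (x₀ + t * Complex.I)‖ :=
      norm_pos_iff.2 (ofReal_sub_ne_zero hb.ne' x)
    rw [norm_mul, div_eq_mul_inv, ← inv_pow, norm_mul, norm_pow, Complex.norm_real,
      Real.norm_eq_abs]
    calc _ ≤ C * ‖(x : ℂ) - (x₀ + t * Complex.I)‖ *
          ((1 + K) * (2 / ‖(x : ℂ) - (x₀ + t * Complex.I)‖) ^ 3) := by
          gcongr
          · exact hC x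
          · exact norm_tangent_le hA x
      _ = _ := by field_simp; ring

include hA hK hc ht in
/-- Integration by parts along the graph. The factor on the left comes from the affine part of `A`,
since the derivative `1 + A' I` of the graph, divided by the square of the chord, integrates to
zero. -/
theorem integral_by_parts :
    (1 + slope A (x₀ + t * Complex.I) * Complex.I) *
        ∫ x : ℝ, ((deriv A x : ℝ) : ℂ) / chord A (x₀ + (A x₀ + t) * Complex.I) x ^ 2 =
      2 * ∫ x : ℝ, (remainder A (x₀ + t * Complex.I) x : ℂ) *
        ((1 + deriv A x * Complex.I) / chord A (x₀ + (A x₀ + t) * Complex.I) x ^ 3) := by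
  have hb : 0 < ((x₀ : ℂ) + t * Complex.I).im := by simpa using ht
  obtain ⟨C, hC0, hC⟩ := exists_remainder_le hA.continuous hc hb
  have hne := chord_ne_zero hA hK x₀ ht
  have hinv := norm_inv_chord_le hA hK x₀ ht
  have hLL := locallyLipschitz_inv_chord hA hK x₀ ht
  have i1 := integrable_deriv_div_chord hA hK x₀ ht
  have i2 := integrable_remainder_div_chord hA hK hc x₀ ht
  set b : ℂ := x₀ + t * Complex.I
  set w : ℂ := x₀ + (A x₀ + t) * Complex.I
  set c : ℝ := slope A b
  set κ : ℝ := (pot A 1 b - pot A 2 b * b).im / Real.pi with hκ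
  have hrem : ∀ x, remainder A b x = A x - (κ + c * x) := remainder_eq b
  have hremL : LocallyLipschitz fun x => remainder A b x := by
    have e : (fun x => remainder A b x) = fun x => A x - (κ + c * x) := funext hrem
    rw [e]
    exact locallyLipschitz_sub_affine hA.locallyLipschitz κ c
  have hH : LocallyLipschitz fun x => (remainder A b x : ℂ) * (chord A w x)⁻¹ ^ 2 -
      c * (chord A w x)⁻¹ := locallyLipschitz_kernel hremL hLL c
  have key := integral_eq_zero_of_locallyLipschitz hH
    (H' := fun x => (1 + c * Complex.I) * (((deriv A x : ℝ) : ℂ) / chord A w x ^ 2) -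
      2 * ((remainder A b x : ℂ) * ((1 + deriv A x * Complex.I) / chord A w x ^ 3)))
    (by
      filter_upwards [hA.ae_differentiableAt] with x hx
      have h1 : HasDerivAt (fun x => remainder A b x) (deriv A x - c) x := by
        rw [show (fun x => remainder A b x) = _ from funext hrem]
        exact hasDerivAt_sub_affine hx κ c
      refine (hasDerivAt_kernel h1 (hasDerivAt_chord hx w) (hne x) c).congr_deriv ?_
      push_cast
      ring)
    ((i1.const_mul _).sub (i2.const_mul _))
    (by
      have h1 : Tendsto (fun x : ℝ => (4 * C + 2 * |c|) * ‖((x : ℂ) - b)⁻¹‖)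
          (Bornology.cobounded ℝ) (𝓝 0) := by
        simpa using (tendsto_inv_ofReal_sub b).norm.const_mul (4 * C + 2 * |c|)
      refine squeeze_zero_norm (fun x => ?_) h1
      have hN : 0 < ‖(x : ℂ) - b‖ := norm_pos_iff.2 (ofReal_sub_ne_zero hb.ne' x)
      have h2 := hinv x
      refine (norm_sub_le _ _).trans ?_
      rw [norm_mul, norm_mul, norm_pow, Complex.norm_real, Complex.norm_real, Real.norm_eq_abs,
        Real.norm_eq_abs, norm_inv ((x : ℂ) - b)]
      calc _ ≤ C * ‖(x : ℂ) - b‖ * (2 / ‖(x : ℂ) - b‖) ^ 2 + |c| * (2 / ‖(x : ℂ) - b‖) := by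
            gcongr; exact hC x
        _ = _ := by field_simp; ring)
  rw [integral_sub (i1.const_mul _) (i2.const_mul _), integral_const_mul, integral_const_mul,
    sub_eq_zero] at key
  exact key

include hA hK hc ht in
/-- The slope of the affine part is at most `2 K`, so that the factor in
`integral_by_parts` is bounded. -/
theorem enorm_pot_three_le : ‖pot A 3 (x₀ + t * Complex.I)‖ₑ ≤
    4 * ‖cauchyDer A (x₀ + (A x₀ + t) * Complex.I)‖ₑ +
      ∫⁻ x : ℝ, ENNReal.ofReal (64 * K / ‖(x : ℂ) - (x₀ + t * Complex.I)‖ ^ 3) *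
        ‖remainder A (x₀ + t * Complex.I) x‖ₑ := by
  have hb : 0 < ((x₀ : ℂ) + t * Complex.I).im := by simpa using ht
  have hbp := integral_by_parts hA hK hc x₀ ht
  have hk := norm_kernel_sub_le hA hK x₀ t ht
  have i1 := integrable_remainder_div hA.continuous hc hb
  have i2 := integrable_remainder_div_chord hA hK hc x₀ ht
  have hs : |slope A (x₀ + t * Complex.I)| ≤ 1 := by
    have h := abs_im_pot_two_le hA hc x₀ ht
    have hK' : (K : ℝ) ≤ 1 / 2 := by exact_mod_cast hK
    rw [slope, abs_div, abs_of_pos Real.pi_pos, div_le_one Real.pi_pos]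
    nlinarith [Real.pi_pos]
  rw [← integral_remainder_div hA.continuous hc hb]
  set b : ℂ := x₀ + t * Complex.I
  set w : ℂ := x₀ + (A x₀ + t) * Complex.I
  have e1 : ∫ x : ℝ, ((deriv A x : ℝ) : ℂ) / chord A w x ^ 2 = Real.pi * cauchyDer A w := by
    have : (Real.pi : ℂ) ≠ 0 := by exact_mod_cast Real.pi_ne_zero
    rw [cauchyDer, ← mul_assoc, mul_inv_cancel₀ this, one_mul]
    rfl
  have e2 : ∫ x : ℝ, (remainder A b x : ℂ) / ((x : ℂ) - b) ^ 3 =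
      (∫ x : ℝ, (remainder A b x : ℂ) * ((1 + deriv A x * Complex.I) / chord A w x ^ 3)) -
      ∫ x : ℝ, (remainder A b x : ℂ) * ((1 + deriv A x * Complex.I) / chord A w x ^ 3 -
        1 / ((x : ℂ) - b) ^ 3) := by
    have i3 : Integrable fun x : ℝ => (remainder A b x : ℂ) *
        ((1 + deriv A x * Complex.I) / chord A w x ^ 3 - 1 / ((x : ℂ) - b) ^ 3) := by
      refine (i2.sub i1).congr (Eventually.of_forall fun x => ?_)
      simp only [Pi.sub_apply]; ring
    rw [← integral_sub i2 i3]
    congr 1; ext x; ring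
  have e3 : ∫ x : ℝ, (remainder A b x : ℂ) * ((1 + deriv A x * Complex.I) / chord A w x ^ 3) =
      ((1 + slope A b * Complex.I) * Real.pi / 2) * cauchyDer A w := by
    rw [e1] at hbp
    linear_combination -hbp / 2
  rw [e2]
  refine enorm_sub_le.trans (add_le_add ?_ ?_)
  · rw [e3, enorm_mul]
    gcongr
    rw [← ofReal_norm, show (4 : ENNReal) = ENNReal.ofReal 4 by simp]
    refine ENNReal.ofReal_le_ofReal ?_
    rw [norm_div, norm_mul, Complex.norm_real, Real.norm_eq_abs, abs_of_pos Real.pi_pos,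
      Complex.norm_ofNat]
    have : ‖1 + slope A b * Complex.I‖ ≤ 2 := by
      refine (norm_add_le _ _).trans ?_
      rw [norm_one, norm_mul, Complex.norm_I, mul_one, Complex.norm_real, Real.norm_eq_abs]
      linarith
    have := mul_le_mul_of_nonneg_right this Real.pi_pos.le
    linarith [Real.pi_lt_four]
  · refine (enorm_integral_le_lintegral_enorm _).trans (lintegral_mono fun x => ?_)
    rw [enorm_mul, mul_comm]
    gcongr
    · rw [← ofReal_norm]
      exact ENNReal.ofReal_le_ofReal (hk x)
    · rw [← ofReal_norm, ← ofReal_norm, Complex.norm_real]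

end

/-! ### The absorbed inequality -/

/-- The derivative of the transform at height `t` above the graph, normalised so as to be
comparable with `potSize`. -/
noncomputable def derSize (A : ℝ → ℝ) (q : ℝ × ℝ) : ENNReal :=
  ENNReal.ofReal (4 * q.2) * ‖cauchyDer A ((q.1 : ℂ) + (A q.1 + q.2) * Complex.I)‖ₑ

theorem measurable_cauchyDer {A : ℝ → ℝ} (hA : Continuous A) : Measurable (cauchyDer A) := by
  unfold cauchyDer
  refine (StronglyMeasurable.const_mul (StronglyMeasurable.integral_prod_right
    (f := fun (w : ℂ) (x : ℝ) => Complex.ofReal (deriv A x) /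
      (Complex.ofReal x + Complex.ofReal (A x) * Complex.I - w) ^ 2)
    (Measurable.stronglyMeasurable ?_)) _).measurable
  unfold Function.uncurry
  have h1 := hA.measurable
  have h2 := measurable_deriv A
  fun_prop

theorem measurable_derSize {A : ℝ → ℝ} (hA : Continuous A) : Measurable (derSize A) := by
  have h1 := hA.measurable
  have h2 : Measurable fun q : ℝ × ℝ => (q.1 : ℂ) + (A q.1 + q.2) * Complex.I := by fun_prop
  exact Measurable.mul (by fun_prop) ((measurable_cauchyDer hA).comp h2).enorm

/-- `smoothing` as an iterated integral. -/
theorem smoothing_eq {h : ENNReal} {η : ℝ} {g : ℝ × ℝ → ENNReal} (hg : Measurable g)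
    (q : ℝ × ℝ) : smoothing h η g q = h * ∫⁻ y : ℝ, ENNReal.ofReal ((1 + |y|) ^ (η - 2)) *
      ∫⁻ l in Ioo (0 : ℝ) 1, ENNReal.ofReal (l ^ (η - 1)) * pathValues g q (y, l) := by
  have hm : Measurable fun v => pathValues g q v := (measurable_pathValues hg).of_uncurry_left
  have hm' : Measurable fun v => stripKernel η v * pathValues g q v :=
    (measurable_stripKernel η).mul hm
  rw [smoothing, stripMeasure, lintegral_prod _ hm'.aemeasurable]
  congr 2
  ext y
  rw [← lintegral_const_mul]
  · simp only [stripKernel, mul_assoc]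
  · exact Measurable.mul (by fun_prop) (hm.comp measurable_prodMk_left)

theorem half_le_norm_sub_I {t : ℝ} (ht : 0 < t) (x₀ y : ℝ) :
    t * (1 + |y|) / 2 ≤ ‖((x₀ + t * y : ℝ) : ℂ) - (x₀ + t * Complex.I)‖ := by
  have e : ((x₀ + t * y : ℝ) : ℂ) - (x₀ + t * Complex.I) = t * ((y : ℂ) - Complex.I) := by
    push_cast; ring
  rw [e, norm_mul, Complex.norm_real, Real.norm_eq_abs, abs_of_pos ht, mul_div_assoc]
  have h := norm_ofReal_sub_I_sq y
  gcongr
  refine abs_le_of_sq_le_sq' ?_ (norm_nonneg _) |>.2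
  rw [h]
  nlinarith [sq_abs y, sq_nonneg (|y| - 1), abs_nonneg y]

/-- The size of the third potential is controlled by the derivative of the transform, up to a
contraction applied to itself. -/
theorem potSize_le {A : ℝ → ℝ} {K : NNReal} (hA : LipschitzWith K A) (hK : K ≤ 1 / 2)
    (hc : HasCompactSupport A) {η h : ℝ} (hη : 0 < η) (hη1 : η < 1) (hKh : 4096 * K ≤ h)
    (q : ℝ × ℝ) : potSize A q ≤ derSize A q + smoothing (ENNReal.ofReal h) η (potSize A) q := by
  obtain ⟨x₀, t⟩ := q
  rcases le_or_gt t 0 with ht | ht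
  · simp [potSize, ENNReal.ofReal_of_nonpos ht]
  have hA' := hA.continuous
  have hf := measurable_potSize hA'
  set G : ℝ → ENNReal := fun x => ENNReal.ofReal (64 * K / ‖(x : ℂ) - (x₀ + t * Complex.I)‖ ^ 3) *
    ‖remainder A (x₀ + t * Complex.I) x‖ₑ with hG
  have hGm : Measurable G := by
    have := (continuous_remainder hA' (x₀ + t * Complex.I)).measurable
    fun_prop
  have h1 := enorm_pot_three_le hA hK hc x₀ ht
  have h2 : ∫⁻ x, G x = ENNReal.ofReal t * ∫⁻ y, G (x₀ + t * y) := by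
    have h3 := lintegral_comp_pos_mul (fun x => G (x₀ + x)) (by fun_prop) ht
    rw [lintegral_add_left_eq_self] at h3
    simp_rw [mul_comm t]
    rw [h3, ← mul_assoc, ← ENNReal.ofReal_mul ht.le, mul_inv_cancel₀ ht.ne', ENNReal.ofReal_one,
      one_mul]
  have h4 : ∀ y, ENNReal.ofReal (t * t) * G (x₀ + t * y) ≤ ENNReal.ofReal h *
      (ENNReal.ofReal ((1 + |y|) ^ (η - 2)) * ∫⁻ l in Ioo (0 : ℝ) 1,
        ENNReal.ofReal (l ^ (η - 1)) * pathValues (potSize A) (x₀, t) (y, l)) := by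
    intro y
    have hρ : 0 < 1 + |y| := by positivity
    have h5 := half_le_norm_sub_I ht x₀ y
    rw [hG]
    refine (mul_le_mul_right (mul_le_mul_right
      (enorm_remainder_le hA' hc x₀ ht y hη hη1) _) _).trans ?_
    rw [← mul_assoc, ← mul_assoc, ← mul_assoc]
    refine mul_le_mul_left ?_ _
    rw [← ENNReal.ofReal_mul (by positivity), ← ENNReal.ofReal_mul (by positivity),
      ← ENNReal.ofReal_mul (le_trans (by positivity) hKh)]
    refine ENNReal.ofReal_le_ofReal ?_
    have e : (1 + |y|) ^ (1 + η) = (1 + |y|) ^ (η - 2) * (1 + |y|) ^ 3 := by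
      rw [← Real.rpow_natCast, ← Real.rpow_add hρ]
      congr 1; push_cast; ring
    rw [e]
    calc _ ≤ t * t * (64 * K / (t * (1 + |y|) / 2) ^ 3) *
          (8 * t * ((1 + |y|) ^ (η - 2) * (1 + |y|) ^ 3)) := by
          gcongr
      _ = 4096 * K * (1 + |y|) ^ (η - 2) := by field_simp; ring
      _ ≤ _ := by gcongr
  rw [smoothing_eq hf]
  calc potSize A (x₀, t) ≤ ENNReal.ofReal t * (4 * ‖cauchyDer A (x₀ + (A x₀ + t) * Complex.I)‖ₑ +
        ∫⁻ x, G x) := by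
        rw [potSize]; exact mul_le_mul_right h1 _
    _ = derSize A (x₀, t) + ∫⁻ y, ENNReal.ofReal (t * t) * G (x₀ + t * y) := by
        rw [h2, lintegral_const_mul _ (by fun_prop), derSize, mul_add, ENNReal.ofReal_mul ht.le,
          ENNReal.ofReal_mul (by norm_num), mul_assoc]
        simp only [ENNReal.ofReal_ofNat]
        ring
    _ ≤ _ := by
        gcongr
        rw [← lintegral_const_mul']
        · exact lintegral_mono h4
        · exact ENNReal.ofReal_ne_top

/-! ### Lower bound on a disc -/

/-- Cauchy's formula for the derivative at the centre of a circle. -/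
theorem circle_mean_le {f : ℂ → ℂ} {R r : ℝ} {D : ℂ} (hr : 0 < r) (hrR : r < R)
    (hf : DifferentiableOn ℂ f (Metric.ball 0 R)) (hD : HasDerivAt f D 0) :
    ENNReal.ofReal (2 * Real.pi * r) * ‖D‖ₑ ≤
      ∫⁻ θ in Ioo (-Real.pi) Real.pi, ‖f (circleMap 0 r θ)‖ₑ := by
  have h := (hf.mono (Metric.closedBall_subset_ball hrR)).deriv_eq_smul_circleIntegral hr
  rw [hD.deriv, circleIntegral] at h
  have hper : Function.Periodic (fun θ => deriv (circleMap 0 r) θ •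
      (1 / (circleMap 0 r θ - 0) ^ 2) • f (circleMap 0 r θ)) (2 * Real.pi) := by
    intro θ
    simp only [deriv_circleMap, periodic_circleMap 0 r θ]
  have h1 := hper.intervalIntegral_add_eq 0 (-Real.pi)
  rw [zero_add, show -Real.pi + 2 * Real.pi = Real.pi by ring] at h1
  rw [h1, intervalIntegral.integral_of_le (by linarith [Real.pi_pos]),
    integral_Ioc_eq_integral_Ioo] at h
  have h2 : ENNReal.ofReal (2 * Real.pi) * ‖D‖ₑ ≤ ∫⁻ θ in Ioo (-Real.pi) Real.pi,
      ENNReal.ofReal r⁻¹ * ‖f (circleMap 0 r θ)‖ₑ := by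
    calc _ = ‖(2 * Real.pi * Complex.I : ℂ) • D‖ₑ := by
          rw [smul_eq_mul, enorm_mul, ← ofReal_norm (2 * (Real.pi : ℂ) * Complex.I)]
          simp [abs_of_pos Real.pi_pos]
      _ ≤ _ := by
          rw [← h]
          refine (enorm_integral_le_lintegral_enorm _).trans (lintegral_mono fun θ => ?_)
          rw [smul_eq_mul, smul_eq_mul, ← mul_assoc, enorm_mul]
          refine mul_le_mul_left (le_of_eq ?_) _
          rw [← ofReal_norm]
          congr 1
          simp [abs_of_pos hr]
          field_simp
  rw [lintegral_const_mul' _ _ ENNReal.ofReal_ne_top] at h2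
  calc _ = ENNReal.ofReal r * (ENNReal.ofReal (2 * Real.pi) * ‖D‖ₑ) := by
        rw [← mul_assoc, ← ENNReal.ofReal_mul hr.le]; congr 2; ring
    _ ≤ _ := mul_le_mul_right h2 _
    _ = _ := by
        rw [← mul_assoc, ← ENNReal.ofReal_mul hr.le, mul_inv_cancel₀ hr.ne', ENNReal.ofReal_one,
          one_mul]

/-- Jensen's inequality for a measure which need not be normalised. -/
theorem lintegral_rpow_le_of_finite {X : Type*} [MeasurableSpace X] {μ : Measure X} {p : ℝ}
    (hp : 1 < p) {f : X → ENNReal} (hf : AEMeasurable f μ) :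
    (∫⁻ x, f x ∂μ) ^ p ≤ μ univ ^ (p - 1) * ∫⁻ x, f x ^ p ∂μ := by
  have h := ENNReal.lintegral_mul_le_Lp_mul_Lq μ (Real.HolderConjugate.conjExponent hp) hf
    (aemeasurable_const (b := (1 : ENNReal)))
  have hp0 : 0 < p := by linarith
  simp only [Pi.mul_apply, mul_one, ENNReal.one_rpow, lintegral_const, one_mul] at h
  calc _ ≤ _ := ENNReal.rpow_le_rpow h hp0.le
    _ = _ := by
      rw [ENNReal.mul_rpow_of_nonneg _ _ hp0.le, ← ENNReal.rpow_mul, ← ENNReal.rpow_mul, mul_comm,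
        one_div_mul_cancel hp0.ne', ENNReal.rpow_one]
      congr 2
      rw [Real.conjExponent]
      have : p - 1 ≠ 0 := by linarith
      field_simp

theorem circle_lower_bound {p β : ℝ} (hp : 1 < p) {f : ℂ → ℂ} {R r : ℝ} {D : ℂ} (hr : 0 < r)
    (hrR : r < R) (hf : DifferentiableOn ℂ f (Metric.ball 0 R)) (hD : HasDerivAt f D 0) :
    ENNReal.ofReal (2 * Real.pi * r ^ (p - β - 1)) * ‖D‖ₑ ^ p ≤
      ∫⁻ θ in Ioo (-Real.pi) Real.pi,
        ENNReal.ofReal (r ^ (-1 - β)) * ‖f (circleMap 0 r θ)‖ₑ ^ p := by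
  have hp0 : 0 < p := by linarith
  have hmem : ∀ θ, circleMap 0 r θ ∈ Metric.ball (0 : ℂ) R := by
    intro θ; simp [abs_of_pos hr, hrR]
  have hfc : Continuous fun θ => f (circleMap 0 r θ) :=
    hf.continuousOn.comp_continuous (continuous_circleMap 0 r) hmem
  rw [lintegral_const_mul' _ _ ENNReal.ofReal_ne_top]
  have h1 := circle_mean_le hr hrR hf hD
  have h2 := lintegral_rpow_le_of_finite (μ := volume.restrict (Ioo (-Real.pi) Real.pi)) hp
    hfc.enorm.measurable.aemeasurable
  have h3 := (ENNReal.rpow_le_rpow h1 hp0.le).trans h2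
  have hpi := Real.pi_pos
  rw [Measure.restrict_apply_univ, Real.volume_Ioo, sub_neg_eq_add, ← two_mul,
    ENNReal.mul_rpow_of_nonneg _ _ hp0.le, ENNReal.ofReal_rpow_of_nonneg (by positivity) hp0.le,
    ENNReal.ofReal_rpow_of_nonneg (by positivity) (by linarith)] at h3
  have h4 := mul_le_mul_right h3
    (ENNReal.ofReal (r ^ (-1 - β)) * ENNReal.ofReal ((2 * Real.pi) ^ (1 - p)))
  refine le_trans (le_of_eq ?_) (h4.trans (le_of_eq ?_))
  · rw [← mul_assoc, ← ENNReal.ofReal_mul (by positivity), ← ENNReal.ofReal_mul (by positivity),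
      Real.mul_rpow (by positivity) hr.le]
    congr 2
    calc _ = (2 * Real.pi) ^ ((1 - p) + p) * r ^ ((-1 - β) + p) := by
          congr 1
          · rw [sub_add_cancel, Real.rpow_one]
          · congr 1; ring
      _ = _ := by rw [Real.rpow_add (by positivity), Real.rpow_add hr]; ring
  · rw [mul_assoc, ← mul_assoc (ENNReal.ofReal ((2 * Real.pi) ^ (1 - p))),
      ← ENNReal.ofReal_mul (by positivity), ← Real.rpow_add (by positivity)]
    simp

theorem lintegral_polar {H : ℂ → ENNReal} (hH : Measurable H) :
    ∫⁻ r in Ioi (0 : ℝ), ∫⁻ θ in Ioo (-Real.pi) Real.pi,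
      ENNReal.ofReal r * H (circleMap 0 r θ) = ∫⁻ z, H z := by
  have e : ∀ q : ℝ × ℝ, Complex.polarCoord.symm q = circleMap 0 q.1 q.2 := by
    intro q
    rw [Complex.polarCoord_symm_apply, circleMap, zero_add, Complex.exp_mul_I]
    push_cast; rfl
  have hm : Measurable fun q : ℝ × ℝ => ENNReal.ofReal q.1 * H (circleMap 0 q.1 q.2) := by
    unfold circleMap; fun_prop
  rw [← Complex.lintegral_comp_polarCoord_symm, polarCoord_target, Measure.volume_eq_prod,
    ← Measure.prod_restrict]
  simp_rw [e, smul_eq_mul]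
  rw [lintegral_prod _ hm.aemeasurable]

theorem measurable_disc_integrand {p β : ℝ} {f : ℂ → ℂ} {R : ℝ}
    (hf : ContinuousOn f (Metric.ball 0 R)) :
    Measurable ((Metric.ball 0 R).indicator fun z =>
      ENNReal.ofReal (‖f z‖ ^ p / ‖z‖ ^ (2 + β))) := by
  classical
  have hfm : Measurable ((Metric.ball (0 : ℂ) R).indicator f) := by
    rw [← piecewise_eq_indicator]
    exact hf.measurable_piecewise continuousOn_const measurableSet_ball
  have e : ((Metric.ball 0 R).indicator fun z => ENNReal.ofReal (‖f z‖ ^ p / ‖z‖ ^ (2 + β))) =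
      (Metric.ball 0 R).indicator fun z => ENNReal.ofReal
        (‖(Metric.ball (0 : ℂ) R).indicator f z‖ ^ p / ‖z‖ ^ (2 + β)) := by
    refine indicator_congr fun z hz => ?_
    rw [indicator_of_mem hz]
  rw [e]
  exact Measurable.indicator (by fun_prop) measurableSet_ball

/-- The integral of the difference quotient over a disc controls the derivative at its centre. -/
theorem disc_lower_bound {p β : ℝ} (hp : 1 < p) (hβp : β < p) {f : ℂ → ℂ} {R : ℝ} {D : ℂ}
    (hR : 0 < R) (hf : DifferentiableOn ℂ f (Metric.ball 0 R)) (hD : HasDerivAt f D 0) :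
    ENNReal.ofReal (2 * Real.pi / (p - β) * R ^ (p - β)) * ‖D‖ₑ ^ p ≤
      ∫⁻ z in Metric.ball 0 R, ENNReal.ofReal (‖f z‖ ^ p / ‖z‖ ^ (2 + β)) := by
  have hp0 : 0 < p := by linarith
  have hpi := Real.pi_pos
  rw [← lintegral_indicator measurableSet_ball,
    ← lintegral_polar (measurable_disc_integrand hf.continuousOn)]
  have hin : ∀ r ∈ Ioo 0 R, ENNReal.ofReal (2 * Real.pi * r ^ (p - β - 1)) * ‖D‖ₑ ^ p ≤
      ∫⁻ θ in Ioo (-Real.pi) Real.pi, ENNReal.ofReal r * (Metric.ball 0 R).indicator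
        (fun z => ENNReal.ofReal (‖f z‖ ^ p / ‖z‖ ^ (2 + β))) (circleMap 0 r θ) := by
    rintro r ⟨hr, hrR⟩
    refine (circle_lower_bound (β := β) hp hr hrR hf hD).trans
      (lintegral_mono fun θ => le_of_eq ?_)
    have hmem : circleMap 0 r θ ∈ Metric.ball (0 : ℂ) R := by
      simp [abs_of_pos hr, hrR]
    rw [indicator_of_mem hmem, ← ENNReal.ofReal_mul hr.le, ← ofReal_norm,
      ENNReal.ofReal_rpow_of_nonneg (norm_nonneg _) hp0.le,
      ← ENNReal.ofReal_mul (by positivity)]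
    congr 1
    have : ‖circleMap 0 r θ‖ = r := by simp [abs_of_pos hr]
    rw [this, show -1 - β = 1 - (2 + β) by ring, Real.rpow_sub hr, Real.rpow_one]
    ring
  calc ENNReal.ofReal (2 * Real.pi / (p - β) * R ^ (p - β)) * ‖D‖ₑ ^ p
      = ∫⁻ r in Ioo 0 R, ENNReal.ofReal (2 * Real.pi * r ^ (p - β - 1)) * ‖D‖ₑ ^ p := by
        rw [lintegral_mul_const _ (by fun_prop), ← ofReal_integral_eq_lintegral_ofReal]
        · rw [integral_const_mul, ← integral_Ioc_eq_integral_Ioo,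
            ← intervalIntegral.integral_of_le hR.le, integral_rpow (Or.inl (by linarith))]
          rw [sub_add_cancel, Real.zero_rpow (by linarith)]
          congr 2; ring
        · exact ((intervalIntegral.integrableOn_Ioo_rpow_iff hR).2 (by linarith)).const_mul _
        · filter_upwards [ae_restrict_mem measurableSet_Ioo] with r hr
          have := hr.1
          positivity
    _ ≤ _ := setLIntegral_mono' measurableSet_Ioo hin
    _ ≤ _ := lintegral_mono_set Ioo_subset_Ioi_self

/-! ### From the interior seminorm to the derivative -/

theorem lintegral_halfMeasure' (β : ℝ) (f : ℝ × ℝ → ENNReal) (hf : Measurable f) :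
    ∫⁻ q, f q ∂(halfMeasure β) =
      ∫⁻ x, ∫⁻ t in Ioi 0, ENNReal.ofReal (t ^ (-β)) * f (x, t) := by
  rw [halfMeasure, lintegral_prod _ hf.aemeasurable]
  refine lintegral_congr fun x => ?_
  have h : Measurable fun t => f (x, t) := hf.comp measurable_prodMk_left
  rw [lintegral_withDensity_eq_lintegral_mul _ (measurable_ofReal_rpow _) h]
  rfl

/-- Integration over the domain above the graph in the coordinates given by the abscissa and the
height above the graph. -/
theorem lintegral_above_graph {A : ℝ → ℝ} (hA : Continuous A) {f : ℂ → ENNReal}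
    (hf : Measurable f) : ∫⁻ z in {w : ℂ | A w.re < w.im}, f z =
      ∫⁻ x : ℝ, ∫⁻ t in Ioi (0 : ℝ), f (x + (A x + t) * Complex.I) := by
  have hΩ : MeasurableSet {w : ℂ | A w.re < w.im} :=
    (isOpen_lt (hA.comp Complex.continuous_re) Complex.continuous_im).measurableSet
  have hm : Measurable ({w : ℂ | A w.re < w.im}.indicator f) := hf.indicator hΩ
  have hm' : Measurable fun q : ℝ × ℝ => {w : ℂ | A w.re < w.im}.indicator f
      (Complex.measurableEquivRealProd.symm q) :=
    hm.comp Complex.measurableEquivRealProd.symm.measurable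
  have hs := (Complex.volume_preserving_equiv_real_prod.symm).lintegral_comp hm
  rw [← lintegral_indicator hΩ, ← hs, Measure.volume_eq_prod,
    lintegral_prod _ hm'.aemeasurable]
  refine lintegral_congr fun x => ?_
  rw [← lintegral_indicator measurableSet_Ioi, ← lintegral_add_left_eq_self _ (A x)]
  refine lintegral_congr fun t => ?_
  have e : Complex.measurableEquivRealProd.symm (x, A x + t) = x + (A x + t) * Complex.I := by
    apply Complex.ext <;> simp [Complex.measurableEquivRealProd]
  rw [e]
  simp [indicator_apply]

/-- The disc about `z` whose radius is half the height above the graph lies in the domain. -/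
theorem pointwise_lower_bound {p β : ℝ} (hp : 1 < p) (hβp : β < p) {A : ℝ → ℝ} {K : NNReal}
    (hA : LipschitzWith K A) (hK : K ≤ 1 / 2) {g D : ℂ → ℂ}
    (hg : ∀ w ∈ {w : ℂ | A w.re < w.im}, HasDerivAt g (D w) w) {z : ℂ}
    (hz : z ∈ {w : ℂ | A w.re < w.im}) :
    ENNReal.ofReal (2 * Real.pi / (p - β) * ((z.im - A z.re) / 2) ^ (p - β)) * ‖D z‖ₑ ^ p ≤
      ∫⁻ w in {w : ℂ | A w.re < w.im},
        ENNReal.ofReal (‖g z - g w‖ ^ p / ‖z - w‖ ^ (2 + β)) := by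
  have hΩ : MeasurableSet {w : ℂ | A w.re < w.im} :=
    (isOpen_lt (hA.continuous.comp Complex.continuous_re) Complex.continuous_im).measurableSet
  have hz' : A z.re < z.im := hz
  have hR : 0 < (z.im - A z.re) / 2 := by linarith
  have hball : ∀ ζ ∈ Metric.ball (0 : ℂ) ((z.im - A z.re) / 2),
      z + ζ ∈ {w : ℂ | A w.re < w.im} := by
    intro ζ hζ
    rw [mem_ball_zero_iff] at hζ
    have h1 := hA.dist_le_mul (z + ζ).re z.re
    rw [Real.dist_eq, Real.dist_eq, Complex.add_re, add_sub_cancel_left] at h1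
    have h2 : (K : ℝ) ≤ 1 / 2 := by exact_mod_cast hK
    have h3 := Complex.abs_re_le_norm ζ
    have h4 := abs_le.1 (Complex.abs_im_le_norm ζ)
    have h5 := abs_le.1 h1
    have h6 : K * |ζ.re| ≤ 1 / 2 * ‖ζ‖ := by gcongr
    show A (z.re + ζ.re) < z.im + ζ.im
    linarith
  have hd : ∀ ζ ∈ Metric.ball (0 : ℂ) ((z.im - A z.re) / 2),
      HasDerivAt (fun ζ => g (z + ζ) - g z) (D (z + ζ)) ζ := fun ζ hζ =>
    ((hg _ (hball ζ hζ)).comp_const_add z ζ).sub_const _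
  have h0 := hd 0 (Metric.mem_ball_self hR)
  rw [add_zero] at h0
  refine (disc_lower_bound (β := β) hp hβp hR
    (fun ζ hζ => (hd ζ hζ).differentiableAt.differentiableWithinAt) h0).trans ?_
  rw [← lintegral_indicator measurableSet_ball, ← lintegral_indicator hΩ,
    ← lintegral_add_left_eq_self ({w : ℂ | A w.re < w.im}.indicator _) z]
  refine lintegral_mono fun ζ => ?_
  by_cases hζ : ζ ∈ Metric.ball (0 : ℂ) ((z.im - A z.re) / 2)
  · rw [indicator_of_mem hζ, indicator_of_mem (hball ζ hζ), norm_sub_rev, sub_add_cancel_left,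
      norm_neg]
  · rw [indicator_of_notMem hζ]
    exact zero_le

/-- The interior seminorm controls the weighted norm of the derivative. -/
theorem lintegral_derSize_le {p β : ℝ} (hp : 1 < p) (hβp : β < p) :
    ∃ C : ℝ, 0 < C ∧ ∀ (A : ℝ → ℝ) (K : NNReal), LipschitzWith K A → K ≤ 1 / 2 → ∀ g : ℂ → ℂ,
      (∀ w ∈ {w : ℂ | A w.re < w.im}, HasDerivAt g (cauchyDer A w) w) →
      ∫⁻ q, derSize A q ^ p ∂(halfMeasure β) ≤
        ENNReal.ofReal C * ∫⁻ z in {w : ℂ | A w.re < w.im}, ∫⁻ w in {w : ℂ | A w.re < w.im},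
          ENNReal.ofReal (‖g z - g w‖ ^ p / ‖z - w‖ ^ (2 + β)) := by
  have hpi := Real.pi_pos
  have hp0 : 0 < p := by linarith
  have hpβ : 0 < p - β := by linarith
  -- the inverse of the constant in `pointwise_lower_bound`, with the factor `4` of `derSize`
  refine ⟨4 ^ p * 2 ^ (p - β) * (p - β) / (2 * Real.pi), by positivity,
    fun A K hA hK g hg => ?_⟩
  have hD := measurable_cauchyDer hA.continuous
  have hAm := hA.continuous.measurable
  have hΩ : MeasurableSet {w : ℂ | A w.re < w.im} :=
    (isOpen_lt (hA.continuous.comp Complex.continuous_re) Complex.continuous_im).measurableSet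
  set Ψ : ℂ → ENNReal := fun z => ENNReal.ofReal
    (2 * Real.pi / (p - β) * ((z.im - A z.re) / 2) ^ (p - β)) * ‖cauchyDer A z‖ₑ ^ p with hΨ
  have hΨm : Measurable Ψ := by
    have := Complex.measurable_re
    have := Complex.measurable_im
    fun_prop
  calc ∫⁻ q, derSize A q ^ p ∂(halfMeasure β)
      = ENNReal.ofReal (4 ^ p * 2 ^ (p - β) * (p - β) / (2 * Real.pi)) *
        ∫⁻ z in {w : ℂ | A w.re < w.im}, Ψ z := by
        rw [lintegral_halfMeasure' _ _ ((measurable_derSize hA.continuous).pow_const p),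
          lintegral_above_graph hA.continuous hΨm,
          ← lintegral_const_mul' _ _ ENNReal.ofReal_ne_top]
        refine lintegral_congr fun x => ?_
        rw [← lintegral_const_mul' _ _ ENNReal.ofReal_ne_top]
        refine setLIntegral_congr_fun measurableSet_Ioi fun t ht => ?_
        have ht' : 0 < t := ht
        have e1 : ((x : ℂ) + (A x + t) * Complex.I).re = x := by simp
        have e2 : ((x : ℂ) + (A x + t) * Complex.I).im = A x + t := by simp
        simp only [hΨ, derSize, e1, e2, add_sub_cancel_left]
        rw [ENNReal.mul_rpow_of_nonneg _ _ hp0.le,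
          ENNReal.ofReal_rpow_of_nonneg (by positivity) hp0.le, ← mul_assoc, ← mul_assoc,
          ← ENNReal.ofReal_mul (by positivity), ← ENNReal.ofReal_mul (by positivity)]
        congr 2
        rw [Real.mul_rpow (by norm_num) ht'.le, Real.div_rpow ht'.le (by norm_num),
          Real.rpow_sub ht', Real.rpow_neg ht'.le]
        field_simp
    _ ≤ _ := by
        refine mul_le_mul_right ?_ _
        exact setLIntegral_mono' hΩ fun z hz => pointwise_lower_bound hp hβp hA hK hg hz

/-! ### The trace inequality -/

/-- The boundary value of `pot A 2` is compared with its value at a point of the upper half-plane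
along the diagonal segment (`e = 1` or `e = -1`) joining the two. -/
theorem diagonal_le {A : ℝ → ℝ} {K : NNReal} (hA : LipschitzWith K A) (hc : HasCompactSupport A)
    {x h e : ℝ} (hh : 0 < h) (he : |e| = 1) (hd : DifferentiableAt ℝ A x) :
    ‖(pot A 2 ((x + h / 2 * e : ℝ) + (h / 2 : ℝ) * Complex.I)).im - Real.pi * deriv A x‖ₑ ≤
      ∫⁻ l in Ioo (0 : ℝ) 1, ENNReal.ofReal (4 / l) * potSize A (x + h * (l / 2) * e, h * (l / 2)) := by
  set d : ℂ := (h / 2 * e : ℝ) + (h / 2 : ℝ) * Complex.I with hdd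
  have hre : ∀ l : ℝ, ((x : ℂ) + l * d).re = x + h * (l / 2) * e := by
    intro l; simp [hdd]; ring
  have him : ∀ l : ℝ, ((x : ℂ) + l * d).im = h * (l / 2) := by
    intro l; simp [hdd]; ring
  have hn : ‖d‖ ≤ h := by
    refine (norm_add_le _ _).trans ?_
    rw [norm_mul, Complex.norm_I, Complex.norm_real, Complex.norm_real, Real.norm_eq_abs,
      Real.norm_eq_abs, abs_mul, he, abs_of_pos (half_pos hh)]
    linarith
  have hlim : Tendsto (fun l : ℝ => (pot A 2 ((x : ℂ) + l * d)).im) (𝓝[>] 0)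
      (𝓝 (Real.pi * deriv A x)) := by
    have h1 := tendsto_im_pot_two hA hc x e hd
    have h2 : Tendsto (fun l : ℝ => l * (h / 2)) (𝓝[>] 0) (𝓝[>] 0) := by
      refine tendsto_nhdsWithin_iff.2 ⟨?_, ?_⟩
      · have : Continuous fun l : ℝ => l * (h / 2) := by fun_prop
        have := this.tendsto 0
        rw [zero_mul] at this
        exact this.mono_left nhdsWithin_le_nhds
      · filter_upwards [self_mem_nhdsWithin] with l hl
        exact mul_pos hl (half_pos hh)
    refine (h1.comp h2).congr fun l => ?_
    rw [Function.comp_apply, ray, hdd]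
    congr 2
    push_cast
    ring
  have key := leg_le (A := A) (G := pot A 2) (m := fun _ => 2) (ζ₀ := x) (d := d)
    (L := Real.pi * deriv A x) (κ := fun l => 4 / l)
    (fun ζ hζ => by
      refine (hasDerivAt_pot hA.continuous hc 2 hζ).congr_deriv ?_
      push_cast; ring)
    (fun l hl => by rw [him]; exact mul_pos hh (half_pos hl.1)) hlim
    (fun l hl => by
      have := hl.1
      rw [him, Complex.norm_ofNat]
      calc _ ≤ 2 * h := by gcongr
        _ = _ := by field_simp; norm_num)
  simp only [hre, him] at key
  convert key using 5
  rw [hdd]; push_cast; ring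

/-- The two diagonal segments issuing from `x` and `x + h` meet at height `h / 2`. -/
theorem deriv_sub_le {A : ℝ → ℝ} {K : NNReal} (hA : LipschitzWith K A) (hc : HasCompactSupport A)
    {x h : ℝ} (hh : 0 < h) (hd : DifferentiableAt ℝ A x) (hd' : DifferentiableAt ℝ A (x + h)) :
    ‖deriv A x - deriv A (x + h)‖ₑ ≤ ∫⁻ l in Ioo (0 : ℝ) 1, ENNReal.ofReal (4 / l) *
      (potSize A (x + h * (l / 2), h * (l / 2)) +
        potSize A (x + h * (1 - l / 2), h * (l / 2))) := by
  have hf := measurable_potSize hA.continuous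
  have h1 := diagonal_le hA hc hh (e := 1) (by simp) hd
  have h2 := diagonal_le hA hc hh (e := -1) (by simp) hd'
  rw [show x + h + h / 2 * -1 = x + h / 2 * 1 by ring] at h2
  simp_rw [show ∀ l : ℝ, x + h + h * (l / 2) * -1 = x + h * (1 - l / 2) by intro l; ring] at h2
  simp_rw [mul_one] at h1 h2
  simp_rw [mul_add]
  rw [lintegral_add_left (by fun_prop)]
  refine le_trans ?_ (add_le_add h1 h2)
  set P : ℝ := (pot A 2 ((x + h / 2 : ℝ) + (h / 2 : ℝ) * Complex.I)).im
  calc ‖deriv A x - deriv A (x + h)‖ₑ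
      ≤ ‖(P - Real.pi * deriv A (x + h)) - (P - Real.pi * deriv A x)‖ₑ := by
        rw [← ofReal_norm, ← ofReal_norm]
        refine ENNReal.ofReal_le_ofReal ?_
        rw [sub_sub_sub_cancel_left, ← mul_sub, norm_mul, Real.norm_eq_abs Real.pi,
          abs_of_pos Real.pi_pos]
        exact le_mul_of_one_le_left (norm_nonneg _) (by linarith [Real.pi_gt_three])
    _ ≤ _ := enorm_sub_le
    _ = _ := add_comm _ _

theorem add_rpow_le {p : ℝ} (hp : 1 ≤ p) (a b : ENNReal) :
    (a + b) ^ p ≤ 2 ^ (p - 1) * (a ^ p + b ^ p) := ENNReal.rpow_add_le_mul_rpow_add_rpow a b hp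

/-- The constant gathered along the two diagonal segments, at parameter `l`. -/
noncomputable def traceWeight (s l : ℝ) : ENNReal := ENNReal.ofReal (8 / l * (l / 2) ^ s)

/-- The weighted `L^p` bound for the integrand in `deriv_sub_le` at a fixed parameter `l`. -/
theorem lintegral_two_points_le {p β : ℝ} (hp : 1 < p) {f : ℝ × ℝ → ENNReal} (hf : Measurable f)
    {l : ℝ} (hl : 0 < l) :
    ∫⁻ q, (ENNReal.ofReal (4 / l) * (f (q.1 + q.2 * (l / 2), q.2 * (l / 2)) +
        f (q.1 + q.2 * (1 - l / 2), q.2 * (l / 2)))) ^ p ∂(halfMeasure β) ≤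
      traceWeight ((β - 1) / p) l ^ p * ∫⁻ q, f q ^ p ∂(halfMeasure β) := by
  have hp0 : 0 < p := by linarith
  have hG : Measurable fun q => f q ^ p := hf.pow_const p
  have e := fun σ => lintegral_halfMeasure_scale β _ hG σ (half_pos hl)
  calc _ ≤ ∫⁻ q, ENNReal.ofReal ((4 / l) ^ p) * (2 ^ (p - 1) *
        (f (q.1 + q.2 * (l / 2), q.2 * (l / 2)) ^ p +
          f (q.1 + q.2 * (1 - l / 2), q.2 * (l / 2)) ^ p)) ∂(halfMeasure β) := by
        refine lintegral_mono fun q => ?_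
        rw [ENNReal.mul_rpow_of_nonneg _ _ hp0.le,
          ENNReal.ofReal_rpow_of_nonneg (by positivity) hp0.le]
        exact mul_le_mul_right (add_rpow_le hp.le _ _) _
    _ = _ := by
        rw [lintegral_const_mul _ (by fun_prop), lintegral_const_mul _ (by fun_prop),
          lintegral_add_left (by fun_prop), e, e, traceWeight,
          ENNReal.ofReal_rpow_of_nonneg (by positivity) hp0.le,
          show (2 : ENNReal) = ENNReal.ofReal 2 by simp, ENNReal.ofReal_rpow_of_pos two_pos,
          ← two_mul, show (2 : ENNReal) = ENNReal.ofReal 2 by simp, ← mul_assoc, ← mul_assoc,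
          ← mul_assoc, ← ENNReal.ofReal_mul (by positivity), ← ENNReal.ofReal_mul (by positivity),
          ← ENNReal.ofReal_mul (by positivity)]
        congr 2
        rw [Real.mul_rpow (by positivity) (by positivity), ← Real.rpow_mul (by positivity),
          div_mul_cancel₀ _ hp0.ne', show 8 / l = 4 / l * 2 by ring,
          Real.mul_rpow (by positivity) (by positivity), Real.rpow_sub two_pos, Real.rpow_one]
        ring

theorem lintegral_traceWeight_lt_top {s : ℝ} (hs : 0 < s) :
    ∫⁻ l in Ioo (0 : ℝ) 1, traceWeight s l < ⊤ := by
  have h : IntegrableOn (fun l : ℝ => l ^ (s - 1)) (Ioo 0 1) :=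
    (intervalIntegral.integrableOn_Ioo_rpow_iff zero_lt_one).2 (by linarith)
  refine lt_of_eq_of_lt ?_ (h.const_mul (8 * (1 / 2) ^ s)).lintegral_lt_top
  refine setLIntegral_congr_fun measurableSet_Ioo fun l hl => ?_
  have := hl.1
  rw [traceWeight, div_eq_mul_one_div l, Real.mul_rpow this.le (by norm_num), Real.rpow_sub this,
    Real.rpow_one]
  congr 1
  field_simp

/-- Integrating the bounds of `lintegral_two_points_le` by Minkowski's inequality. -/
theorem lintegral_deriv_sub_le {p β : ℝ} (hp : 1 < p) {A : ℝ → ℝ} {K : NNReal}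
    (hA : LipschitzWith K A) (hc : HasCompactSupport A) :
    ∫⁻ q : ℝ × ℝ, ‖deriv A q.1 - deriv A (q.1 + q.2)‖ₑ ^ p ∂(halfMeasure β) ≤
      (∫⁻ l in Ioo (0 : ℝ) 1, traceWeight ((β - 1) / p) l) ^ p *
        ∫⁻ q, potSize A q ^ p ∂(halfMeasure β) := by
  have hp0 : 0 < p := by linarith
  have hf := measurable_potSize hA.continuous
  have hu := measurable_deriv A
  set F : ℝ × ℝ → ℝ → ENNReal := fun q l => ENNReal.ofReal (4 / l) *
    (potSize A (q.1 + q.2 * (l / 2), q.2 * (l / 2)) +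
      potSize A (q.1 + q.2 * (1 - l / 2), q.2 * (l / 2))) with hF
  have hFm : Measurable (Function.uncurry F) := by
    unfold Function.uncurry; fun_prop
  refine le_trans ?_ (lintegral_rpow_lintegral_le (halfMeasure β) (volume.restrict (Ioo (0 : ℝ) 1))
    hp F hFm (traceWeight ((β - 1) / p)) (by unfold traceWeight; fun_prop) ?_ _ ?_)
  · have hm : Measurable fun q => (∫⁻ l in Ioo (0 : ℝ) 1, F q l) ^ p :=
      hFm.lintegral_prod_right'.pow_const p
    rw [lintegral_halfMeasure _ _ (by fun_prop), lintegral_halfMeasure _ _ hm]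
    refine setLIntegral_mono' measurableSet_Ioi fun t ht => mul_le_mul_right ?_ _
    have h1 : ∀ᵐ x, DifferentiableAt ℝ A x := hA.ae_differentiableAt
    have h2 := (measurePreserving_add_right volume t).quasiMeasurePreserving.ae h1
    refine lintegral_mono_ae ?_
    filter_upwards [h1, h2] with x hx hx'
    exact ENNReal.rpow_le_rpow (deriv_sub_le hA hc ht hx hx') hp0.le
  · filter_upwards [ae_restrict_mem measurableSet_Ioo] with l hl
    have := hl.1
    refine ⟨?_, ENNReal.ofReal_ne_top⟩
    rw [traceWeight]
    exact (ENNReal.ofReal_pos.2 (by positivity)).ne'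
  · filter_upwards [ae_restrict_mem measurableSet_Ioo] with l hl
    exact lintegral_two_points_le hp hf hl.1

/-- By symmetry the seminorm is carried by the pairs `x < y = x + h`. -/
theorem seminorm_le_two_mul {p β : ℝ} (hp : 0 < p) {u : ℝ → ℝ} (hu : Measurable u) :
    ∫⁻ x : ℝ, ∫⁻ y : ℝ, ENNReal.ofReal (|u x - u y| ^ p / |x - y| ^ β) ≤
      2 * ∫⁻ q : ℝ × ℝ, ‖u q.1 - u (q.1 + q.2)‖ₑ ^ p ∂(halfMeasure β) := by
  set Θ : ℝ → ℝ → ENNReal := fun x y =>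
    (Ioi (0 : ℝ)).indicator (fun h => ENNReal.ofReal (h ^ (-β))) (y - x) * ‖u x - u y‖ₑ ^ p with hΘ
  have hm : Measurable (Function.uncurry Θ) := by
    have h1 : Measurable ((Ioi (0 : ℝ)).indicator fun h => ENNReal.ofReal (h ^ (-β))) :=
      (measurable_ofReal_rpow _).indicator measurableSet_Ioi
    unfold Function.uncurry; fun_prop
  have hpos : ∀ x y, x < y → ENNReal.ofReal (|u x - u y| ^ p / |x - y| ^ β) = Θ x y := by
    intro x y hxy
    have h0 : 0 < y - x := sub_pos.2 hxy
    simp only [hΘ]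
    rw [indicator_of_mem (mem_Ioi.2 h0), ← ofReal_norm,
      ENNReal.ofReal_rpow_of_nonneg (norm_nonneg _) hp.le, ← ENNReal.ofReal_mul (by positivity),
      Real.rpow_neg h0.le, abs_sub_comm x y, abs_of_pos h0, Real.norm_eq_abs]
    congr 1
    ring
  have hle : ∀ x y, ENNReal.ofReal (|u x - u y| ^ p / |x - y| ^ β) ≤ Θ x y + Θ y x := by
    intro x y
    rcases lt_trichotomy x y with hxy | hxy | hxy
    · rw [hpos x y hxy]; exact le_self_add
    · subst hxy
      simp [Real.zero_rpow hp.ne']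
    · rw [abs_sub_comm (u x), abs_sub_comm x, hpos y x hxy]; exact le_add_self
  calc _ ≤ ∫⁻ x : ℝ, ∫⁻ y : ℝ, (Θ x y + Θ y x) :=
        lintegral_mono fun x => lintegral_mono fun y => hle x y
    _ = (∫⁻ x : ℝ, ∫⁻ y : ℝ, Θ x y) + ∫⁻ x : ℝ, ∫⁻ y : ℝ, Θ y x := by
        simp_rw [fun x => lintegral_add_left (μ := volume) (hm.of_uncurry_left (x := x))
          (fun y => Θ y x)]
        exact lintegral_add_left hm.lintegral_prod_right' _
    _ = 2 * ∫⁻ x : ℝ, ∫⁻ y : ℝ, Θ x y := by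
        rw [lintegral_lintegral_swap (f := fun x y => Θ y x) (hm.comp measurable_swap).aemeasurable,
          two_mul]
    _ = _ := by
        rw [lintegral_halfMeasure' _ _ (by fun_prop)]
        congr 1
        refine lintegral_congr fun x => ?_
        rw [← lintegral_indicator measurableSet_Ioi, ← lintegral_add_left_eq_self _ x]
        refine lintegral_congr fun h => ?_
        simp only [hΘ, add_sub_cancel_left]
        by_cases hh : h ∈ Ioi (0 : ℝ)
        · rw [indicator_of_mem hh, indicator_of_mem hh]
        · rw [indicator_of_notMem hh, indicator_of_notMem hh, zero_mul]

/-! ### Conclusion -/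

theorem potSize_le_const {A : ℝ → ℝ} {K : NNReal} (hA : LipschitzWith K A) (q : ℝ × ℝ) :
    potSize A q ≤ ENNReal.ofReal (Real.pi * K) := by
  rcases le_or_gt q.2 0 with ht | ht
  · simp [potSize, ENNReal.ofReal_of_nonpos ht]
  · rw [potSize, ← ofReal_norm, ← ENNReal.ofReal_mul ht.le]
    exact ENNReal.ofReal_le_ofReal (norm_pot_three_le hA q.1 ht)

/-- For small Lipschitz constants the third potential is controlled by the derivative of the
transform, in the weighted norm. -/
theorem exists_lintegral_potSize_le {p β : ℝ} (hp : 1 < p) (hβ : 1 < β) (hβp : β < p + 1) :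
    ∃ δ : ℝ, 0 < δ ∧ δ ≤ 1 / 2 ∧ ∀ (A : ℝ → ℝ), LipschitzWith (Real.toNNReal δ) A →
      HasCompactSupport A → ∫⁻ q, potSize A q ^ p ∂(halfMeasure β) ≤
        2 ^ p * ∫⁻ q, derSize A q ^ p ∂(halfMeasure β) := by
  obtain ⟨η, hη, hη1, h, hh, hadd, hcon⟩ := exists_smoothing_contraction hp hβ hβp
  -- `1 / 2` makes the graph kernel comparable with the flat one; `4096` is the constant of
  -- `potSize_le`
  refine ⟨min (1 / 2) (h / 4096), by positivity, min_le_left _ _, fun A hA hc => ?_⟩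
  have hδ : ((Real.toNNReal (min (1 / 2) (h / 4096)) : NNReal) : ℝ) = min (1 / 2) (h / 4096) :=
    Real.coe_toNNReal _ (by positivity)
  refine lintegral_rpow_le_of_le_add_smoothing (halfMeasure β) hp
    (smoothing (ENNReal.ofReal h) η) (fun g hg => measurable_smoothing _ _ hg)
    (fun g g' hg => smoothing_mono _ _ hg) hadd hcon (potSize A) (derSize A)
    (measurable_derSize hA.continuous) _ ENNReal.ofReal_ne_top (potSize_le_const hA)
    (potSize_le hA ?_ hc hη hη1 ?_)
  · rw [← NNReal.coe_le_coe, hδ]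
    push_cast
    exact min_le_left _ _
  · rw [hδ]
    have := min_le_right (1 / 2) (h / 4096)
    linarith

end BesovTrace

theorem statement2 (α p : ℝ) (hα : 0 < α) (hα1 : α < 1) (hp1 : 1 < p) (hαp : 1 < α * p) :
    ∃ δ : ℝ, 0 < δ ∧ ∃ C : ℝ, 0 < C ∧
      ∀ A : ℝ → ℝ, LipschitzWith (Real.toNNReal δ) A → HasCompactSupport A →
        ∀ g : ℂ → ℂ,
          (∀ w ∈ {w : ℂ | A w.re < w.im},
              HasDerivAt g
                ((Real.pi : ℂ)⁻¹ *
                  ∫ x : ℝ, Complex.ofReal (deriv A x) /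
                    (Complex.ofReal x + Complex.ofReal (A x) * Complex.I - w) ^ 2) w) →
          (∫⁻ x : ℝ, ∫⁻ y : ℝ,
              ENNReal.ofReal (|deriv A x - deriv A y| ^ p / |x - y| ^ (α * p))) ≤
            ENNReal.ofReal C *
              ∫⁻ z in {w : ℂ | A w.re < w.im},
                ∫⁻ w in {w : ℂ | A w.re < w.im},
                  ENNReal.ofReal (‖g z - g w‖ ^ p / ‖z - w‖ ^ (2 + α * p)) := by
  have hp0 : 0 < p := by linarith
  have hβp : α * p < p := by nlinarith
  obtain ⟨δ, hδ, hδ2, hmain⟩ :=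
    BesovTrace.exists_lintegral_potSize_le hp1 hαp (by linarith : α * p < p + 1)
  obtain ⟨C, hC, hder⟩ := BesovTrace.lintegral_derSize_le hp1 hβp
  set W : ENNReal := ∫⁻ l in Set.Ioo (0 : ℝ) 1, BesovTrace.traceWeight ((α * p - 1) / p) l with hW
  have hWt : W < ⊤ := BesovTrace.lintegral_traceWeight_lt_top (div_pos (by linarith) hp0)
  set T : ENNReal := 2 * (W ^ p * (2 ^ p * ENNReal.ofReal C)) with hT
  have hTt : T ≠ ⊤ := by
    refine ENNReal.mul_ne_top (by simp) (ENNReal.mul_ne_top ?_ (ENNReal.mul_ne_top ?_ (by simp)))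
    · exact ENNReal.rpow_ne_top_of_nonneg hp0.le hWt.ne
    · exact ENNReal.rpow_ne_top_of_nonneg hp0.le (by simp)
  -- `T` could vanish, while the constant must be positive
  refine ⟨δ, hδ, T.toReal + 1, by positivity, fun A hA hc g hg => ?_⟩
  have hK : Real.toNNReal δ ≤ 1 / 2 := by
    rw [← NNReal.coe_le_coe, Real.coe_toNNReal _ hδ.le]
    push_cast
    exact hδ2
  have h1 := BesovTrace.seminorm_le_two_mul (β := α * p) hp0 (measurable_deriv A)
  have h2 := BesovTrace.lintegral_deriv_sub_le (β := α * p) hp1 hA hc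
  have h3 := hmain A hA hc
  have h4 := hder A _ hA hK g hg
  refine h1.trans ((mul_le_mul_right (h2.trans (mul_le_mul_right (h3.trans
    (mul_le_mul_right h4 _)) _)) _).trans ?_)
  rw [← mul_assoc (2 ^ p), ← mul_assoc (_ ^ p), ← mul_assoc 2]
  refine mul_le_mul_left ?_ _
  calc T = ENNReal.ofReal T.toReal := (ENNReal.ofReal_toReal hTt).symm
    _ ≤ _ := ENNReal.ofReal_le_ofReal (by linarith)
end

section
/- Let a ∈ ℂ and let u ∈ ℂ with |u| = 1, and let Π = {w ∈ ℂ : Im(ū·(w − a)) > 0} be the open half plane with boundary the line L = {w : Im(ū·(w − a)) = 0}. Then for every z ∈ ℂ with Im(ū·(z − a)) ≠ 0 and every ε with 0 < ε < dist(z, L), the function w ↦ 1/(z − w)³ is Lebesgue-integrable on {w ∈ Π : |z − w| > ε} and ∫_{w ∈ Π, |z−w| > ε} 1/(z − w)³ dm(w) = 0. -/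
/-!
After the rigid motion `v = ū (w - z)` the integrand is a unimodular multiple of `v⁻³`, and the domain
becomes `{Im v > -h, |v| > ε}` with `h = Im (ū (z - a))` and `ε < dist(z, L) ≤ |h|`.

On `|v| > ε` the function `v⁻³` is dominated by a multiple of `(1 + |v|)⁻³`, which is integrable in
real dimension two. Two families of sets carry integral zero:

* horizontal sets `{Im v ∈ S}` on which `|v| > ε`: by Fubini, since on each line `Im v = y ≠ 0` the
  function `v⁻³` has the primitive `-v⁻²/2`, which vanishes at both ends
  (`setIntegral_im_mem`, `integral_line`);
* the exterior `{|v| > ε}`, since `v⁻³` is odd (`setIntegral_exterior`).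

If `h < 0`, the domain is the half plane `{Im v > -h}`, of the first kind. If `h > 0`, it is the
exterior minus the half plane `{Im v ≤ -h}`.
-/

open MeasureTheory

lemma integrableOn_exterior {ε : ℝ} (hε : 0 < ε) :
    IntegrableOn (fun v : ℂ => (v ^ 3)⁻¹) {v : ℂ | ε < ‖v‖} := by
  have hd : Integrable (fun v : ℂ => (1 / ε + 1) ^ 3 * (1 + ‖v‖) ^ (-(3 : ℝ))) := by
    refine (integrable_one_add_norm (E := ℂ) (μ := volume) (r := 3) ?_).const_mul _
    rw [Complex.finrank_real_complex]; norm_num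
  refine Integrable.mono' hd.integrableOn (by fun_prop) ?_
  refine (ae_restrict_iff' (measurableSet_lt measurable_const measurable_norm)).2 (.of_forall ?_)
  intro v hv
  have hv' : ε < ‖v‖ := hv
  have hpos : 0 < ‖v‖ := hε.trans hv'
  have e : (1 + ‖v‖) ^ (-(3 : ℝ)) = ((1 + ‖v‖) ^ 3)⁻¹ := by
    rw [Real.rpow_neg (by positivity)]; norm_cast
  rw [e, norm_inv, norm_pow, ← div_eq_mul_inv, le_div_iff₀ (by positivity),
    inv_mul_le_iff₀ (by positivity), ← mul_pow]
  gcongr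
  have : 1 ≤ ‖v‖ / ε := (one_le_div hε).2 hv'.le
  calc 1 + ‖v‖ ≤ ‖v‖ / ε + ‖v‖ := by gcongr
    _ = ‖v‖ * (1 / ε + 1) := by ring

/-- The integral of `v⁻³` over a horizontal line avoiding the origin is zero, because the primitive
`-v⁻²/2` tends to zero at both ends. -/
lemma integral_line {y : ℝ} (hy : y ≠ 0) : ∫ x : ℝ, (((⟨x, y⟩ : ℂ)) ^ 3)⁻¹ = 0 := by
  -- A non-integrable function would have integral zero by convention, so only this case matters.
  by_cases hi : Integrable (fun x : ℝ => (((⟨x, y⟩ : ℂ)) ^ 3)⁻¹)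
  swap
  · exact integral_undef hi
  have hne : ∀ x : ℝ, (⟨x, y⟩ : ℂ) ≠ 0 := fun x h => hy (congrArg Complex.im h)
  have hder : ∀ x : ℝ, HasDerivAt (fun x : ℝ => -(((⟨x, y⟩ : ℂ)) ^ 2)⁻¹ / 2)
      (((⟨x, y⟩ : ℂ)) ^ 3)⁻¹ x := by
    intro x
    have h1 : HasDerivAt (fun x : ℝ => (⟨x, y⟩ : ℂ)) 1 x := by
      have h0 := (Complex.ofRealCLM.hasDerivAt (x := x)).add_const (⟨0, y⟩ : ℂ)
      have e : (fun t : ℝ => Complex.ofRealCLM t + (⟨0, y⟩ : ℂ)) = fun t : ℝ => (⟨t, y⟩ : ℂ) := by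
        funext t
        apply Complex.ext <;> simp
      rw [e] at h0
      simpa using h0
    have h2 := (((h1.pow 2).fun_inv (pow_ne_zero 2 (hne x))).neg).div_const 2
    refine HasDerivAt.congr_deriv h2 ?_
    have := hne x
    simp only [Pi.pow_apply]
    field_simp
    simp [mul_comm]
  have hlim : ∀ l : Filter ℝ, Filter.Tendsto (fun x : ℝ => |x|) l Filter.atTop →
      Filter.Tendsto (fun x : ℝ => -(((⟨x, y⟩ : ℂ)) ^ 2)⁻¹ / 2) l (nhds 0) := by
    intro l hl
    have h1 : Filter.Tendsto (fun x : ℝ => ‖(⟨x, y⟩ : ℂ)‖) l Filter.atTop :=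
      Filter.tendsto_atTop_mono (fun x => Complex.abs_re_le_norm ⟨x, y⟩) hl
    have h2 := Filter.tendsto_inv₀_cobounded.comp (tendsto_norm_atTop_iff_cobounded.1 h1)
    have h3 := (h2.pow 2).neg.div_const 2
    simpa [Function.comp_def] using h3
  have := integral_of_hasDerivAt_of_tendsto hder hi
    (hlim _ Filter.tendsto_abs_atBot_atTop) (hlim _ Filter.tendsto_abs_atTop_atTop)
  simpa using this

lemma setIntegral_im_mem {S : Set ℝ} (hS : MeasurableSet S) {ε : ℝ} (hε : 0 < ε)
    (h : ∀ y ∈ S, ε < |y|) : ∫ v in {v : ℂ | v.im ∈ S}, (v ^ 3)⁻¹ = 0 := by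
  have hm : MeasurableSet {v : ℂ | v.im ∈ S} := Complex.measurable_im hS
  have hi : Integrable ({v : ℂ | v.im ∈ S}.indicator fun v : ℂ => (v ^ 3)⁻¹) :=
    (integrable_indicator_iff hm).2 <| (integrableOn_exterior hε).mono_set
      fun v hv => (h _ hv).trans_le (Complex.abs_im_le_norm v)
  have hp := Complex.volume_preserving_equiv_real_prod.symm
  rw [← integral_indicator hm,
    ← hp.integral_comp Complex.measurableEquivRealProd.symm.measurableEmbedding]
  have hi' := (hp.integrable_comp_emb
    Complex.measurableEquivRealProd.symm.measurableEmbedding).2 hi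
  rw [Measure.volume_eq_prod] at hi' ⊢
  refine (integral_prod_symm _ hi').trans ?_
  refine integral_eq_zero_of_ae (.of_forall fun y => ?_)
  by_cases hy : y ∈ S
  · have hy0 : y ≠ 0 := abs_pos.1 (hε.trans (h y hy))
    refine (integral_congr_ae (.of_forall fun x => ?_)).trans (integral_line hy0)
    exact Set.indicator_of_mem (s := {v : ℂ | v.im ∈ S}) (a := (⟨x, y⟩ : ℂ)) hy _
  · simp [Set.indicator, hy, Complex.measurableEquivRealProd]

lemma setIntegral_exterior (ε : ℝ) : ∫ v in {v : ℂ | ε < ‖v‖}, (v ^ 3)⁻¹ = 0 := by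
  have h := (Measure.measurePreserving_neg (volume : Measure ℂ)).setIntegral_preimage_emb
    (MeasurableEquiv.neg ℂ).measurableEmbedding (fun v : ℂ => (v ^ 3)⁻¹) {v : ℂ | ε < ‖v‖}
  have e : (Neg.neg ⁻¹' {v : ℂ | ε < ‖v‖}) = {v : ℂ | ε < ‖v‖} := by ext; simp
  have o : (fun v : ℂ => ((-v) ^ 3)⁻¹) = fun v : ℂ => -(v ^ 3)⁻¹ := by
    ext v; rw [Odd.neg_pow (by decide), inv_neg]
  rw [e, o, integral_neg] at h
  exact self_eq_neg.1 h.symm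

lemma setIntegral_truncated_halfPlane {h ε : ℝ} (hε : 0 < ε) (hh : ε < |h|) :
    ∫ v in {v : ℂ | 0 < v.im + h ∧ ε < ‖v‖}, (v ^ 3)⁻¹ = 0 := by
  rcases lt_or_ge h 0 with h0 | h0
  · rw [abs_of_neg h0] at hh
    have e : {v : ℂ | 0 < v.im + h ∧ ε < ‖v‖} = {v : ℂ | v.im ∈ Set.Ioi (-h)} := by
      ext v
      simp only [Set.mem_ofPred_eq, Set.mem_Ioi]
      refine ⟨fun hv => by linarith [hv.1], fun hv => ⟨by linarith, ?_⟩⟩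
      linarith [Complex.im_le_norm v]
    rw [e]
    refine setIntegral_im_mem measurableSet_Ioi hε fun y hy => ?_
    have : -h < y := hy
    linarith [le_abs_self y]
  · rw [abs_of_nonneg h0] at hh
    have e : {v : ℂ | 0 < v.im + h ∧ ε < ‖v‖} =
        {v : ℂ | ε < ‖v‖} \ {v : ℂ | v.im ∈ Set.Iic (-h)} := by
      ext v
      simp only [Set.mem_ofPred_eq, Set.mem_sdiff, Set.mem_Iic, not_le]
      refine ⟨fun hv => ⟨hv.2, by linarith [hv.1]⟩, fun hv => ⟨by linarith [hv.2], hv.1⟩⟩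
    have hS : ∀ y ∈ Set.Iic (-h), ε < |y| := fun y hy => by
      have : y ≤ -h := hy
      linarith [neg_le_abs y]
    have hm : MeasurableSet {v : ℂ | v.im ∈ Set.Iic (-h)} :=
      Complex.measurable_im measurableSet_Iic
    rw [e, setIntegral_sdiff hm (integrableOn_exterior hε)
      (fun v hv => (hS _ hv).trans_le (Complex.abs_im_le_norm v)),
      setIntegral_exterior, setIntegral_im_mem measurableSet_Iic hε hS, sub_zero]

theorem statement4 (a u : ℂ) (hu : ‖u‖ = 1) (z : ℂ)
    (hz : ((starRingEnd ℂ) u * (z - a)).im ≠ 0) (ε : ℝ) (hε : 0 < ε)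
    (hεd : ε < Metric.infDist z {w : ℂ | ((starRingEnd ℂ) u * (w - a)).im = 0}) :
    IntegrableOn (fun w : ℂ => 1 / (z - w) ^ 3)
        {w : ℂ | 0 < ((starRingEnd ℂ) u * (w - a)).im ∧ ε < ‖z - w‖} ∧
      ∫ w in {w : ℂ | 0 < ((starRingEnd ℂ) u * (w - a)).im ∧ ε < ‖z - w‖},
        1 / (z - w) ^ 3 = 0 := by
  set c : ℂ := (starRingEnd ℂ) u with hc
  set h : ℝ := (c * (z - a)).im with hh
  have hcn : ‖c‖ = 1 := by rw [hc, RCLike.norm_conj, hu]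
  have hcu : c * u = 1 := by
    rw [hc, mul_comm, Complex.mul_conj, Complex.normSq_eq_norm_sq, hu]; simp
  have hc0 : c ≠ 0 := left_ne_zero_of_mul_eq_one hcu
  -- The orthogonal projection of `z` to the line is `z - i h u`.
  have hεh : ε < |h| := by
    refine hεd.trans_le ((Metric.infDist_le_dist_of_mem (y := z - u * (h * Complex.I)) ?_).trans ?_)
    · have : c * (z - u * (h * Complex.I) - a) = c * (z - a) - h * Complex.I := by
        linear_combination (-(h * Complex.I)) * hcu
      simp only [Set.mem_ofPred_eq]
      rw [this]; simp [hh]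
    · simp [hu]
  let C : Circle := ⟨c, by simp [Submonoid.unitSphere, hcn]⟩
  have hp : MeasurePreserving (fun w : ℂ => c * (w - z)) :=
    ((rotation C).measurePreserving).comp (measurePreserving_sub_right volume z)
  have he : MeasurableEmbedding (fun w : ℂ => c * (w - z)) :=
    (rotation C).toMeasurableEquiv.measurableEmbedding.comp
      (MeasurableEquiv.subRight z).measurableEmbedding
  have hset : {w : ℂ | 0 < (c * (w - a)).im ∧ ε < ‖z - w‖} =
      (fun w : ℂ => c * (w - z)) ⁻¹' {v : ℂ | 0 < v.im + h ∧ ε < ‖v‖} := by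
    ext w
    have e1 : (c * (w - z)).im + h = (c * (w - a)).im := by
      rw [hh, ← Complex.add_im]; congr 1; ring
    simp only [Set.mem_ofPred_eq, Set.mem_preimage, e1, norm_mul, hcn, one_mul, norm_sub_rev z w]
  have hfun : (fun w : ℂ => 1 / (z - w) ^ 3) = fun w => -c ^ 3 * ((c * (w - z)) ^ 3)⁻¹ := by
    ext w
    have : (z - w) ^ 3 = -(w - z) ^ 3 := by ring
    rw [this, mul_pow, mul_inv, one_div, inv_neg]
    field_simp
  rw [hset, hfun]
  constructor
  · exact ((hp.integrableOn_comp_preimage he).2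
      ((integrableOn_exterior hε).mono_set fun v hv => hv.2)).const_mul _
  · rw [integral_const_mul, hp.setIntegral_preimage_emb he (fun v : ℂ => (v ^ 3)⁻¹),
      setIntegral_truncated_halfPlane hε hεh, mul_zero]
end

section
/- Let Ω ⊆ ℂ be a nonempty open set with finite Lebesgue measure. For z ∉ ∂Ω (the frontier of Ω) and ε > 0, set I(z, ε) = (−1/π) ∫_{w ∈ Ω, |z−w| > ε} 1/(z − w)² dm(w) (the integrand is integrable on this set). Then: (i) for each z ∉ ∂Ω, the value I(z, ε) is the same for all ε with 0 < ε < dist(z, ∂Ω); (ii) the function B : ℂ ∖ ∂Ω → ℂ defined by B(z) = I(z, dist(z, ∂Ω)/2) is complex-differentiable at every z ∉ ∂Ω, and its derivative is B'(z) = (2/π) ∫_{w ∈ Ω, |z−w| > ε} 1/(z − w)³ dm(w) for any ε with 0 < ε < dist(z, ∂Ω). -/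
/-!
Let `d` be the distance from `z` to the frontier of `Ω`. A closed disc about `z` of radius less than
`d` is connected and misses the frontier, so it lies inside `Ω` or outside it. On such a disc any
integrable function of `z - w` that a rotation of the plane turns into its negative has integral
zero (`setIntegral_eq_truncated`). The kernel `1 / u ^ 2` is negated by `u ↦ I * u`, which gives the
independence of the truncation radius.

For the derivative, a sharp truncation moves with `z`, so it is replaced by a radial smooth cutoff
of fixed radius `ε` (`smoothKernel`); by the same symmetry this changes nothing, for all `z'` near
`z` at once (`truncBeurling_eq_smooth`). The smooth kernel has a bounded continuous real derivative,
and `Ω` has finite measure, so one may differentiate under the integral. The kernel is even, hence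
its derivative is odd and integrates to zero over the disc of radius `ε` about `z`. Outside the disc
the derivative is multiplication by `-2 / (z - w) ^ 3`, which is complex linear
(`hasDerivAt_integral_smoothKernel`).
-/

open MeasureTheory

/-- The ε-truncated Beurling transform of `χ_Ω` at `z`:
`I(z, ε) = (−1/π) ∫_{w ∈ Ω, |z−w| > ε} (z − w)⁻² dm(w)`. -/
noncomputable def truncBeurling (Ω : Set ℂ) (z : ℂ) (ε : ℝ) : ℂ :=
  (-1 / (Real.pi : ℂ)) * ∫ w in {w : ℂ | w ∈ Ω ∧ ε < ‖z - w‖}, 1 / (z - w) ^ 2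

/-- If the closed disc of radius `ε` about `z` misses the frontier of `Ω`, then a function of `z - w`
whose profile is negated by a rotation contributes nothing to the integral over `Ω` on that disc:
the disc is either disjoint from `Ω` or contained in it, and in the latter case the rotation
turns the integral over the disc into its own negative. -/
lemma setIntegral_eq_truncated {E : Type*} [NormedAddCommGroup E] [NormedSpace ℝ E]
    {Ω : Set ℂ} (hopen : IsOpen Ω) {z : ℂ} {ε : ℝ}
    (hd : ε < Metric.infDist z (frontier Ω)) (f : ℂ → E) (c : Circle)
    (hc : ∀ u, f (c * u) = -f u) (hf : IntegrableOn (fun w => f (z - w)) Ω) :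
    ∫ w in Ω, f (z - w) = ∫ w in {w : ℂ | w ∈ Ω ∧ ε < ‖z - w‖}, f (z - w) := by
  classical
  have hball : MeasurableSet (Metric.closedBall z ε) := Metric.isClosed_closedBall.measurableSet
  rw [← integral_inter_add_sdiff hball hf]
  have hset : Ω \ Metric.closedBall z ε = {w : ℂ | w ∈ Ω ∧ ε < ‖z - w‖} := by
    ext w
    simp [dist_eq_norm, norm_sub_rev w z]
  rw [hset]
  have hdich : Ω ∩ Metric.closedBall z ε = ∅ ∨
      Ω ∩ Metric.closedBall z ε = Metric.closedBall z ε := by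
    have hcover : Metric.closedBall z ε ⊆ Ω ∪ (closure Ω)ᶜ := by
      intro x hx
      by_contra hcon
      rw [Set.mem_union, Set.mem_compl_iff, not_or, not_not] at hcon
      have hxf : x ∈ frontier Ω := by
        rw [hopen.frontier_eq]
        exact ⟨hcon.2, hcon.1⟩
      have hle := Metric.infDist_le_dist_of_mem (x := z) hxf
      rw [Metric.mem_closedBall, dist_comm] at hx
      linarith
    rcases Set.eq_empty_or_nonempty (Ω ∩ Metric.closedBall z ε) with h | h
    · exact Or.inl h
    · rw [Set.inter_comm] at h
      exact Or.inr <| Set.inter_eq_right.2 <|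
        (convex_closedBall z ε).isPreconnected.subset_left_of_subset_union hopen
          isClosed_closure.isOpen_compl
          (Set.disjoint_compl_right_iff_subset.2 subset_closure) hcover h
  have hzero : ∫ w in Ω ∩ Metric.closedBall z ε, f (z - w) = 0 := by
    rcases hdich with h | h
    · simp [h]
    · rw [h, ← integral_indicator hball]
      set g : ℂ → E := (Metric.closedBall (0 : ℂ) ε).indicator f with hg
      have e1 : (Metric.closedBall z ε).indicator (fun w => f (z - w)) = fun w => g (z - w) := by
        ext w
        simp [hg, Set.indicator_apply, dist_eq_norm, norm_sub_rev w z]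
      rw [e1, integral_sub_left_eq_self g volume z]
      have e2 : ∫ u, g (rotation c u) = ∫ u, g u :=
        (LinearIsometryEquiv.measurePreserving (rotation c)).integral_comp
          (rotation c).toHomeomorph.measurableEmbedding g
      have e3 : ∀ u, g (rotation c u) = -g u := by
        intro u
        simp only [hg, Set.indicator_apply, rotation_apply, mem_closedBall_zero_iff, norm_mul,
          Circle.norm_coe, one_mul, hc]
        split_ifs <;> simp
      simp only [e3, integral_neg] at e2
      have : IsAddTorsionFree E := .of_isTorsionFree ℝ E
      exact self_eq_neg.mp e2.symm
  rw [hzero, zero_add]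

lemma measurableSet_trunc {Ω : Set ℂ} (hopen : IsOpen Ω) (z : ℂ) (ε : ℝ) :
    MeasurableSet {w : ℂ | w ∈ Ω ∧ ε < ‖z - w‖} :=
  (hopen.inter (t := {w : ℂ | ε < ‖z - w‖})
    (isOpen_lt continuous_const (by fun_prop))).measurableSet

lemma integrableOn_trunc {Ω : Set ℂ} (hopen : IsOpen Ω) (hfin : volume Ω < ⊤) (z : ℂ) {ε : ℝ}
    (hε : 0 < ε) (n : ℕ) :
    IntegrableOn (fun w : ℂ => 1 / (z - w) ^ n) {w : ℂ | w ∈ Ω ∧ ε < ‖z - w‖} := by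
  refine Measure.integrableOn_of_bounded (M := 1 / ε ^ n)
    (lt_of_le_of_lt (measure_mono fun w hw => hw.1) hfin).ne ?_ ?_
  · exact Measurable.aestronglyMeasurable (by fun_prop)
  · refine (ae_restrict_iff' (measurableSet_trunc hopen z ε)).2 (Filter.Eventually.of_forall ?_)
    rintro w ⟨-, hw⟩
    rw [norm_div, norm_one, norm_pow]
    gcongr

lemma trunc_indep_of_le {Ω : Set ℂ} (hopen : IsOpen Ω) (hfin : volume Ω < ⊤) {z : ℂ}
    {ε₁ ε₂ : ℝ} (h1 : 0 < ε₁) (h12 : ε₁ ≤ ε₂) (h2 : ε₂ < Metric.infDist z (frontier Ω)) :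
    truncBeurling Ω z ε₁ = truncBeurling Ω z ε₂ := by
  unfold truncBeurling
  classical
  congr 1
  have hm : MeasurableSet {w : ℂ | ε₁ < ‖z - w‖} :=
    (isOpen_lt continuous_const (by fun_prop)).measurableSet
  set f : ℂ → ℂ := {u : ℂ | ε₁ < ‖u‖}.indicator (fun u => 1 / u ^ 2) with hf
  have hfe : (fun w => f (z - w)) =
      {w : ℂ | ε₁ < ‖z - w‖}.indicator (fun w => 1 / (z - w) ^ 2) := by
    ext w
    simp [hf, Set.indicator_apply]
  have hc : ∀ u, f ((⟨Complex.I, by simp [Submonoid.unitSphere]⟩ : Circle) * u) = -f u := by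
    intro u
    simp only [hf, Set.indicator_apply, Set.mem_ofPred_eq, norm_mul, Complex.norm_I, one_mul,
      mul_pow, Complex.I_sq]
    split_ifs
    · rw [neg_one_mul, div_neg]
    · simp
  have hi : IntegrableOn (fun w => f (z - w)) Ω := by
    rw [hfe, integrableOn_indicator_iff hm, Set.inter_comm]
    exact integrableOn_trunc hopen hfin z h1 2
  have key := setIntegral_eq_truncated hopen h2 f _ hc hi
  rw [hfe, setIntegral_indicator hm] at key
  refine key.trans ?_
  refine setIntegral_congr_fun (measurableSet_trunc hopen z ε₂) ?_
  rintro w ⟨-, hw⟩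
  change f (z - w) = _
  rw [hf]
  exact Set.indicator_of_mem (s := {u : ℂ | ε₁ < ‖u‖}) (h12.trans_lt hw) (fun u => 1 / u ^ 2)

lemma trunc_indep {Ω : Set ℂ} (hopen : IsOpen Ω) (hfin : volume Ω < ⊤) {z : ℂ}
    {ε₁ ε₂ : ℝ} (h1 : 0 < ε₁) (h1' : ε₁ < Metric.infDist z (frontier Ω))
    (h2 : 0 < ε₂) (h2' : ε₂ < Metric.infDist z (frontier Ω)) :
    truncBeurling Ω z ε₁ = truncBeurling Ω z ε₂ := by
  rcases le_total ε₁ ε₂ with h | h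
  · exact trunc_indep_of_le hopen hfin h1 h h2'
  · exact (trunc_indep_of_le hopen hfin h2 h h1').symm

/-- A smooth regularisation of `u ↦ 1 / u ^ 2`. For `ε > 0` it vanishes for
`‖u‖ ^ 2 ≤ ε ^ 2 / 2`, agrees with `1 / u ^ 2` for `ε ≤ ‖u‖`, and the cutoff factor is radial. -/
noncomputable def smoothKernel (ε : ℝ) (u : ℂ) : ℂ :=
  (Real.smoothTransition (2 * ‖u‖ ^ 2 / ε ^ 2 - 1) : ℂ) * (1 / u ^ 2)

lemma smoothKernel_eq {ε : ℝ} (hε : 0 < ε) {u : ℂ} (hu : ε ≤ ‖u‖) :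
    smoothKernel ε u = 1 / u ^ 2 := by
  have h : 1 ≤ 2 * ‖u‖ ^ 2 / ε ^ 2 - 1 := by
    have : 1 ≤ ‖u‖ ^ 2 / ε ^ 2 := by
      rw [one_le_div (by positivity)]
      gcongr
    rw [mul_div_assoc]
    linarith
  simp [smoothKernel, Real.smoothTransition.one_of_one_le h]

lemma contDiff_smoothKernel (ε : ℝ) : ContDiff ℝ 1 (smoothKernel ε) := by
  rw [contDiff_iff_contDiffAt]
  intro u
  by_cases hu : u = 0
  · subst hu
    have hev : smoothKernel ε =ᶠ[nhds 0] fun _ => 0 := by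
      have hcont : ContinuousAt (fun u : ℂ => 2 * ‖u‖ ^ 2 / ε ^ 2 - 1) 0 := by fun_prop
      have hlt : ∀ᶠ u : ℂ in nhds 0, 2 * ‖u‖ ^ 2 / ε ^ 2 - 1 < 0 :=
        hcont.eventually_lt continuousAt_const (by simp)
      filter_upwards [hlt] with v hv
      simp [smoothKernel, Real.smoothTransition.zero_of_nonpos hv.le]
    exact contDiffAt_const.congr_of_eventuallyEq hev
  · have hn : ContDiffAt ℝ 1 (fun u : ℂ => 2 * ‖u‖ ^ 2 / ε ^ 2 - 1) u :=
      ((contDiffAt_const.mul (contDiff_norm_sq ℝ).contDiffAt).div_const _).sub contDiffAt_const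
    have h1 : ContDiffAt ℝ 1
        (fun u : ℂ => Real.smoothTransition (2 * ‖u‖ ^ 2 / ε ^ 2 - 1)) u :=
      Real.smoothTransition.contDiffAt.comp u hn
    have h2 : ContDiffAt ℝ 1
        (fun u : ℂ => ((Real.smoothTransition (2 * ‖u‖ ^ 2 / ε ^ 2 - 1) : ℝ) : ℂ)) u :=
      Complex.ofRealCLM.contDiff.contDiffAt.comp u h1
    have h3 : ContDiffAt ℝ 1 (fun u : ℂ => 1 / u ^ 2) u := by
      simp only [one_div]
      exact (contDiffAt_id.pow 2).fun_inv (pow_ne_zero 2 hu)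
    exact h2.mul (h3)

/-- Outside the closed disc of radius `ε` the real derivative of the regularised kernel is complex
linear, namely multiplication by `-2 / u ^ 3`. -/
lemma fderiv_smoothKernel {ε : ℝ} (hε : 0 < ε) {u : ℂ} (hu : ε < ‖u‖) :
    fderiv ℝ (smoothKernel ε) u = (-2 * (1 / u ^ 3)) • (1 : ℂ →L[ℝ] ℂ) := by
  have hu0 : u ≠ 0 := norm_pos_iff.1 (hε.trans hu)
  have hev : smoothKernel ε =ᶠ[nhds u] fun v => 1 / v ^ 2 := by
    filter_upwards [(isOpen_lt continuous_const continuous_norm).mem_nhds hu] with v hv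
    exact smoothKernel_eq hε (le_of_lt hv)
  have hd : HasDerivAt (fun v : ℂ => 1 / v ^ 2) (-2 * (1 / u ^ 3)) u := by
    have := (hasDerivAt_pow 2 u).fun_inv (pow_ne_zero 2 hu0)
    simp only [one_div]
    refine this.congr_deriv ?_
    field_simp
    norm_num
    ring
  rw [hev.fderiv_eq, (hd.hasFDerivAt.restrictScalars ℝ).fderiv]
  ext v
  simp [mul_comm]

lemma smoothKernel_I_mul (ε : ℝ) (u : ℂ) : smoothKernel ε (Complex.I * u) = -smoothKernel ε u := by
  simp only [smoothKernel, norm_mul, Complex.norm_I, one_mul, mul_pow, Complex.I_sq, neg_one_mul,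
    div_neg, mul_neg]

lemma fderiv_smoothKernel_neg (ε : ℝ) (u : ℂ) :
    fderiv ℝ (smoothKernel ε) (-u) = -fderiv ℝ (smoothKernel ε) u := by
  have h : (fun v => smoothKernel ε (-v)) = smoothKernel ε := by
    ext v
    simp [smoothKernel]
  have h' := (ContinuousLinearEquiv.neg ℝ (M := ℂ)).comp_right_fderiv (f := smoothKernel ε) (x := u)
  rw [show smoothKernel ε ∘ ContinuousLinearEquiv.neg ℝ (M := ℂ) = smoothKernel ε from h] at h'
  rw [h']
  ext v
  simp

lemma exists_bound_fderiv_smoothKernel {ε : ℝ} (hε : 0 < ε) :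
    ∃ C : ℝ, ∀ u, ‖fderiv ℝ (smoothKernel ε) u‖ ≤ C := by
  have hcont : Continuous (fderiv ℝ (smoothKernel ε)) :=
    (contDiff_smoothKernel ε).continuous_fderiv (by norm_num)
  obtain ⟨C, hC⟩ := (isCompact_closedBall (0 : ℂ) ε).exists_bound_of_continuousOn hcont.continuousOn
  refine ⟨max C (2 * (1 / ε ^ 3)), fun u => ?_⟩
  by_cases hu : ‖u‖ ≤ ε
  · exact (hC u (by simpa using hu)).trans (le_max_left _ _)
  · push Not at hu
    refine le_trans ?_ (le_max_right _ _)
    rw [fderiv_smoothKernel hε hu, norm_smul, norm_mul, norm_div, norm_pow, norm_neg, norm_one,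
      RCLike.norm_ofNat, norm_one, mul_one]
    gcongr

lemma exists_bound_smoothKernel {ε : ℝ} (hε : 0 < ε) : ∃ C : ℝ, ∀ u, ‖smoothKernel ε u‖ ≤ C := by
  obtain ⟨C, hC⟩ := (isCompact_closedBall (0 : ℂ) ε).exists_bound_of_continuousOn
    (contDiff_smoothKernel ε).continuous.continuousOn
  refine ⟨max C (1 / ε ^ 2), fun u => ?_⟩
  by_cases hu : ‖u‖ ≤ ε
  · exact (hC u (by simpa using hu)).trans (le_max_left _ _)
  · push Not at hu
    refine le_trans ?_ (le_max_right _ _)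
    rw [smoothKernel_eq hε hu.le, norm_div, norm_pow, norm_one]
    gcongr

lemma integrableOn_smoothKernel {Ω : Set ℂ} (hfin : volume Ω < ⊤) {ε : ℝ} (hε : 0 < ε) (z : ℂ) :
    IntegrableOn (fun w => smoothKernel ε (z - w)) Ω := by
  obtain ⟨C, hC⟩ := exists_bound_smoothKernel hε
  exact Measure.integrableOn_of_bounded (M := C) hfin.ne
    ((contDiff_smoothKernel ε).continuous.comp (by fun_prop)).aestronglyMeasurable
    (Filter.Eventually.of_forall fun w => hC _)

/-- Replacing the sharp truncation by the smooth kernel does not change the Beurling transform. -/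
lemma truncBeurling_eq_smooth {Ω : Set ℂ} (hopen : IsOpen Ω) (hfin : volume Ω < ⊤) {z : ℂ} {ε : ℝ}
    (hε : 0 < ε) (hd : ε < Metric.infDist z (frontier Ω)) :
    truncBeurling Ω z ε = (-1 / (Real.pi : ℂ)) * ∫ w in Ω, smoothKernel ε (z - w) := by
  rw [truncBeurling, setIntegral_eq_truncated hopen hd (smoothKernel ε)
    ⟨Complex.I, by simp [Submonoid.unitSphere]⟩ (smoothKernel_I_mul ε)
    (integrableOn_smoothKernel hfin hε z)]
  congr 1
  refine setIntegral_congr_fun (measurableSet_trunc hopen z ε) ?_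
  rintro w ⟨-, hw⟩
  exact (smoothKernel_eq hε hw.le).symm

/-- Differentiation under the integral sign yields a real derivative; the part of the differentiated
kernel on the disc about `z` is odd, so only the complex linear part outside it survives. -/
lemma hasDerivAt_integral_smoothKernel {Ω : Set ℂ} (hopen : IsOpen Ω) (hfin : volume Ω < ⊤) {z : ℂ}
    {ε : ℝ} (hε : 0 < ε) (hd : ε < Metric.infDist z (frontier Ω)) :
    HasDerivAt (fun z' => ∫ w in Ω, smoothKernel ε (z' - w))
      (-2 * ∫ w in {w : ℂ | w ∈ Ω ∧ ε < ‖z - w‖}, 1 / (z - w) ^ 3) z := by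
  have hsm := contDiff_smoothKernel ε
  have hcont : Continuous (fderiv ℝ (smoothKernel ε)) := hsm.continuous_fderiv (by norm_num)
  obtain ⟨C, hC⟩ := exists_bound_fderiv_smoothKernel hε
  have hmeas : AEStronglyMeasurable (fun w => fderiv ℝ (smoothKernel ε) (z - w))
      (volume.restrict Ω) := (hcont.comp (by fun_prop)).aestronglyMeasurable
  have hint : IntegrableOn (fun w => fderiv ℝ (smoothKernel ε) (z - w)) Ω :=
    Measure.integrableOn_of_bounded (M := C) hfin.ne
      (hcont.comp (by fun_prop)).aestronglyMeasurable
      (Filter.Eventually.of_forall fun w => hC _)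
  have hF := hasFDerivAt_integral_of_dominated_of_fderiv_le (𝕜 := ℝ) (μ := volume.restrict Ω)
    (F := fun z' w => smoothKernel ε (z' - w))
    (F' := fun z' w => fderiv ℝ (smoothKernel ε) (z' - w)) (x₀ := z) (s := Set.univ)
    (bound := fun _ => C) Filter.univ_mem
    (Filter.Eventually.of_forall fun z' =>
      (hsm.continuous.comp (by fun_prop)).aestronglyMeasurable)
    (integrableOn_smoothKernel hfin hε z) hmeas
    (Filter.Eventually.of_forall fun w z' _ => hC _)
    (integrableOn_const hfin.ne)
    (Filter.Eventually.of_forall fun w z' _ =>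
      (hasFDerivAt_comp_sub w).2 ((hsm.differentiable (by norm_num)) (z' - w)).hasFDerivAt)
  have hval : ∫ w in Ω, fderiv ℝ (smoothKernel ε) (z - w) =
      (-2 * ∫ w in {w : ℂ | w ∈ Ω ∧ ε < ‖z - w‖}, 1 / (z - w) ^ 3) • (1 : ℂ →L[ℝ] ℂ) := by
    rw [setIntegral_eq_truncated hopen hd (fderiv ℝ (smoothKernel ε))
      ⟨-1, by simp [Submonoid.unitSphere]⟩ (fun u => by simp [fderiv_smoothKernel_neg]) hint,
      ← integral_const_mul]
    refine Eq.trans ?_ (integral_smul_const (𝕜 := ℂ) _ (1 : ℂ →L[ℝ] ℂ))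
    refine setIntegral_congr_fun (measurableSet_trunc hopen z ε) ?_
    rintro w ⟨-, hw⟩
    exact fderiv_smoothKernel hε hw
  rw [hval] at hF
  refine hasDerivAt_iff_hasFDerivAt.2 (hasFDerivAt_of_restrictScalars ℝ hF ?_)
  ext v
  simp [mul_comm]

theorem statement5 (Ω : Set ℂ) (hne : Ω.Nonempty) (hopen : IsOpen Ω)
    (hfin : volume Ω < ⊤) :
    (∀ z ∉ frontier Ω, ∀ ε > 0,
        IntegrableOn (fun w : ℂ => 1 / (z - w) ^ 2) {w : ℂ | w ∈ Ω ∧ ε < ‖z - w‖}) ∧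
    (∀ z ∉ frontier Ω, ∀ ε₁ ε₂ : ℝ, 0 < ε₁ → ε₁ < Metric.infDist z (frontier Ω) →
        0 < ε₂ → ε₂ < Metric.infDist z (frontier Ω) →
        truncBeurling Ω z ε₁ = truncBeurling Ω z ε₂) ∧
    (∀ z ∉ frontier Ω, ∀ ε : ℝ, 0 < ε → ε < Metric.infDist z (frontier Ω) →
        HasDerivAt (fun z' : ℂ => truncBeurling Ω z' (Metric.infDist z' (frontier Ω) / 2))
          ((2 / (Real.pi : ℂ)) * ∫ w in {w : ℂ | w ∈ Ω ∧ ε < ‖z - w‖}, 1 / (z - w) ^ 3)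
          z) := by
  refine ⟨fun z _ ε hε => integrableOn_trunc hopen hfin z hε 2,
    fun z _ ε₁ ε₂ h1 h1' h2 h2' => trunc_indep hopen hfin h1 h1' h2 h2', fun z _ ε hε hd => ?_⟩
  have hev : (fun z' : ℂ => truncBeurling Ω z' (Metric.infDist z' (frontier Ω) / 2)) =ᶠ[nhds z]
      fun z' => (-1 / (Real.pi : ℂ)) * ∫ w in Ω, smoothKernel ε (z' - w) := by
    have hnear : ∀ᶠ z' in nhds z, ε < Metric.infDist z' (frontier Ω) :=
      (isOpen_lt continuous_const (Metric.continuous_infDist_pt _)).mem_nhds hd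
    filter_upwards [hnear] with z' hz'
    rw [← truncBeurling_eq_smooth hopen hfin hε hz']
    exact trunc_indep hopen hfin (by linarith) (by linarith) hε hz'
  refine HasDerivAt.congr_of_eventuallyEq ?_ hev
  refine ((hasDerivAt_integral_smoothKernel hopen hfin hε hd).const_mul _).congr_deriv ?_
  ring
end
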